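/- Let X be a Borel subset of the Cantor space 2^ω that is dense in 2^ω, such that the subspace X is homogeneous and X ∉ Δ. Then the complement 2^ω \ X, with the subspace topology, is homogeneous. -/

import Mathlib

open Set

abbrev Cantor := ℕ → Bool

def UpwardClosed (S : Set Cantor) : Prop :=
  ∀ x ∈ S, ∀ y : Cantor, (∀ n, x n = true → y n = true) → y ∈ S

def DownwardClosed (R : Set Cantor) : Prop :=
  ∀ y ∈ R, ∀ x : Cantor, (∀ n, x n = true → y n = true) → x ∈ R

def ClosedUnderFinMod (S : Set Cantor) : Prop :=
  ∀ x ∈ S, ∀ y : Cantor, {n | x n ≠ y n}.Finite → y ∈ S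

def IsSemifilter (S : Set Cantor) : Prop :=
  (fun _ => false) ∉ S ∧ (fun _ => true) ∈ S ∧ UpwardClosed S ∧ ClosedUnderFinMod S

def IsSemiideal (R : Set Cantor) : Prop :=
  (fun _ => false) ∈ R ∧ (fun _ => true) ∉ R ∧ DownwardClosed R ∧ ClosedUnderFinMod R

def ClosedUnderInter (S : Set Cantor) : Prop :=
  ∀ x ∈ S, ∀ y ∈ S, (fun n => x n && y n) ∈ S

def IsFilterOnOmega (F : Set Cantor) : Prop := IsSemifilter F ∧ ClosedUnderInter F

def IsHomogeneous (X : Type*) [TopologicalSpace X] : Prop :=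
  ∀ x y : X, ∃ h : X ≃ₜ X, h x = y

def IsFsigma (A : Set Cantor) : Prop :=
  ∃ F : ℕ → Set Cantor, (∀ n, IsClosed (F n)) ∧ A = ⋃ n, F n

def DOmegaSigmaTwo (X : Set Cantor) : Prop :=
  ∃ A : ℕ → Set Cantor, (∀ n, IsFsigma (A n)) ∧ Monotone A ∧
    X = ⋃ n ∈ {n : ℕ | Odd n}, (A n \ ⋃ m < n, A m)

def InDelta (X : Set Cantor) : Prop := DOmegaSigmaTwo X ∧ DOmegaSigmaTwo Xᶜ

def WadgeLe (A B : Set Cantor) : Prop :=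
  ∃ f : Cantor → Cantor, Continuous f ∧ A = f ⁻¹' B

def WadgeEquiv (A B : Set Cantor) : Prop := WadgeLe A B ∧ WadgeLe B A

def CompletelyMetrizable (X : Type*) [t : TopologicalSpace X] : Prop :=
  ∃ m : MetricSpace X, m.toUniformSpace.toTopologicalSpace = t ∧
    @CompleteSpace X m.toUniformSpace

def FirstCategory (X : Type*) [TopologicalSpace X] : Prop :=
  ∃ f : ℕ → Set X, (∀ n, interior (closure (f n)) = ∅) ∧ (Set.univ : Set X) = ⋃ n, f n

def CantorFin : Set Cantor := {x | {n | x n = true}.Finite}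

def BorelSet (X : Set Cantor) : Prop := @MeasurableSet Cantor (borel Cantor) X


namespace BD

/-- threads in inverse systems -/
lemma thread (E : ℕ → Type) (r : ∀ i, E (i+1) → E i) (i0 : ℕ)
    (h : ∀ i, i0 ≤ i → Function.Surjective (r i)) (q : E i0) :
    ∃ p : ∀ i, E i, (∀ i, r i (p (i+1)) = p i) ∧ p i0 = q := by
  induction i0 generalizing E with
  | zero =>
    choose f hf using fun i => h i (Nat.zero_le _)
    refine ⟨fun i => Nat.rec q (fun i y => f i y) i, ?_, rfl⟩
    intro i
    exact hf i _
  | succ n ih =>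
    obtain ⟨p, hp, hq⟩ := ih (fun i => E (i+1)) (fun i => r (i+1))
      (fun i hi => h (i+1) (by omega)) q
    refine ⟨fun i => Nat.casesOn i (r 0 (p 0)) (fun j => p j), ?_, hq⟩
    intro i
    cases i with
    | zero => rfl
    | succ j => exact hp j

lemma thread_down (E : ℕ → Type) (r : ∀ i, E (i+1) → E i)
    (p p' : ∀ i, E i) (hp : ∀ i, r i (p (i+1)) = p i) (hp' : ∀ i, r i (p' (i+1)) = p' i)
    (n : ℕ) (h : p n = p' n) : ∀ j, j ≤ n → p j = p' j := by
  induction n with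
  | zero => intro j hj; obtain rfl : j = 0 := by omega
            exact h
  | succ n ih =>
    intro j hj
    rcases Nat.lt_or_ge n j with h1 | h1
    · obtain rfl : j = n + 1 := by omega
      exact h
    · exact ih (by rw [← hp, ← hp', h]) j h1

lemma thread_inj (E : ℕ → Type) (r : ∀ i, E (i+1) → E i)
    (p p' : ∀ i, E i) (hp : ∀ i, r i (p (i+1)) = p i) (hp' : ∀ i, r i (p' (i+1)) = p' i)
    (n : ℕ) (hi : ∀ i, n ≤ i → Function.Injective (r i)) (h : p n = p' n) : p = p' := by
  funext j
  rcases Nat.lt_or_ge j n with h1 | h1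
  · exact thread_down E r p p' hp hp' n h j h1.le
  · induction j, h1 using Nat.le_induction with
    | base => exact h
    | succ j hj ih => exact hi j hj (by rw [hp, hp', ih])

structure Gm where
  P : ℕ → Type
  par : ∀ n, P (n+1) → P n
  surj : ∀ n, Function.Surjective (par n)

abbrev Play (G : Gm) := {x : ∀ n, G.P n // ∀ n, G.par n (x (n+1)) = x n}

abbrev Strat (G : Gm) := {s : ∀ n, G.P n → G.P (n+1) // ∀ n p, G.par n (s n p) = p}

noncomputable def anyS (G : Gm) : Strat G :=
  ⟨fun n => Function.surjInv (G.surj n), fun n => Function.surjInv_eq (G.surj n)⟩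

def Cons {G : Gm} (b : Bool) (s : Strat G) (x : Play G) : Prop :=
  ∀ n, Nat.bodd n = b → x.1 (n+1) = s.1 n (x.1 n)

def IsOp {G : Gm} (W : Set (Play G)) : Prop :=
  ∀ x ∈ W, ∃ n, ∀ y : Play G, y.1 n = x.1 n → y ∈ W

lemma play_agree {G : Gm} (x y : Play G) (n : ℕ) (h : x.1 n = y.1 n) :
    ∀ j, j ≤ n → x.1 j = y.1 j :=
  thread_down G.P G.par x.1 y.1 x.2 y.2 n h

lemma exists_thru {G : Gm} {n : ℕ} (q : G.P n) : ∃ x : Play G, x.1 n = q := by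
  obtain ⟨p, hp, hq⟩ := thread G.P G.par n (fun i _ => G.surj i) q
  exact ⟨⟨p, hp⟩, hq⟩

noncomputable def thru {G : Gm} {n : ℕ} (q : G.P n) : Play G := (exists_thru q).choose

lemma thru_self {G : Gm} {n : ℕ} (q : G.P n) : (thru q).1 n = q := (exists_thru q).choose_spec

lemma thru_play {G : Gm} (x : Play G) (n j : ℕ) (h : j ≤ n) : (thru (x.1 n)).1 j = x.1 j :=
  play_agree _ _ n (thru_self _) j h

lemma thru_par {G : Gm} {n : ℕ} (q : G.P (n+1)) (j : ℕ) (h : j ≤ n) :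
    (thru (G.par n q)).1 j = (thru q).1 j := by
  apply play_agree _ _ n _ j h
  rw [thru_self, ← (thru q).2 n, thru_self]

structure Cov (H G : Gm) (k : ℕ) where
  π : ∀ n, H.P n → G.P n
  comm : ∀ n p, π n (H.par n p) = G.par n (π (n+1) p)
  bij : ∀ n, n ≤ k → Function.Bijective (π n)
  φ : Bool → Strat H → Strat G
  loc : ∀ b s s' n, (∀ m, m ≤ n → s.1 m = s'.1 m) → (φ b s).1 n = (φ b s').1 n
  low : ∀ b s n, n + 1 ≤ k → ∀ p, (φ b s).1 n (π n p) = π (n+1) (s.1 n p)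
  lift : ∀ b s (x : Play G), Cons b (φ b s) x →
    ∃ y : Play H, Cons b s y ∧ ∀ n, π n (y.1 n) = x.1 n

def Cov.map {H G : Gm} {k : ℕ} (c : Cov H G k) (y : Play H) : Play G :=
  ⟨fun n => c.π n (y.1 n), fun n => by rw [← c.comm, y.2]⟩

lemma Cov.map_op {H G : Gm} {k : ℕ} (c : Cov H G k) (W : Set (Play G)) (hW : IsOp W) :
    IsOp (c.map ⁻¹' W) := by
  intro x hx
  obtain ⟨n, hn⟩ := hW _ hx
  refine ⟨n, fun y hy => hn _ ?_⟩
  simp [Cov.map, hy]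

def Cov.comp {H G F : Gm} {k : ℕ} (c : Cov H G k) (d : Cov G F k) : Cov H F k where
  π n p := d.π n (c.π n p)
  comm n p := by rw [c.comm, d.comm]
  bij n h := (d.bij n h).comp (c.bij n h)
  φ b s := d.φ b (c.φ b s)
  loc b s s' n h := d.loc b _ _ n fun m hm => c.loc b _ _ m fun m' hm' => h m' (by omega)
  low b s n h p := by rw [d.low b _ n h, c.low b _ n h]
  lift b s x hx := by
    obtain ⟨y, hy, hyx⟩ := d.lift b _ x hx
    obtain ⟨z, hz, hzy⟩ := c.lift b _ y hy
    exact ⟨z, hz, fun n => by rw [hzy, hyx]⟩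

def Cov.mono {H G : Gm} {k l : ℕ} (c : Cov H G k) (h : l ≤ k) : Cov H G l where
  π := c.π
  comm := c.comm
  bij n hn := c.bij n (hn.trans h)
  φ := c.φ
  loc := c.loc
  low b s n hn := c.low b s n (hn.trans h)
  lift := c.lift

section Limit

variable (G : ℕ → Gm) (k : ℕ) (c : ∀ i, Cov (G (i+1)) (G i) (k+i))

abbrev LP (n : ℕ) : Type := {p : ∀ i, (G i).P n // ∀ i, (c i).π n (p (i+1)) = p i}

lemma LP_surj (n i0 : ℕ) (h : n ≤ k + i0) (q : (G i0).P n) : ∃ p : LP G k c n, p.1 i0 = q := by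
  obtain ⟨p, hp, hq⟩ := thread (fun i => (G i).P n) (fun i => (c i).π n) i0
    (fun i hi => ((c i).bij n (by omega)).2) q
  exact ⟨⟨p, hp⟩, hq⟩

lemma LP_inj (n i0 : ℕ) (h : n ≤ k + i0) (p p' : LP G k c n) (hp : p.1 i0 = p'.1 i0) : p = p' :=
  Subtype.ext (thread_inj (fun i => (G i).P n) (fun i => (c i).π n) p.1 p'.1 p.2 p'.2 i0
    (fun i hi => ((c i).bij n (by omega)).1) hp)

def limG : Gm where
  P := LP G k c
  par n p := ⟨fun i => (G i).par n (p.1 i), fun i => by rw [(c i).comm, p.2]⟩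
  surj n := by
    intro p
    obtain ⟨q, hq⟩ := (G (n+1)).surj n (p.1 (n+1))
    obtain ⟨p', hp'⟩ := LP_surj G k c (n+1) (n+1) (by omega) q
    refine ⟨p', LP_inj G k c n (n+1) (by omega) _ _ ?_⟩
    simp [hp', hq]

open Classical in
noncomputable def pull (s : Strat (limG G k c)) (j : ℕ) : Strat (G j) :=
  ⟨fun n q => if h : ∃ p : LP G k c n, p.1 j = q then (s.1 n h.choose).1 j else (anyS (G j)).1 n q,
   fun n q => by
    beta_reduce
    split_ifs with h
    · have := congrArg (fun p => p.1 j) (s.2 n h.choose)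
      simpa [limG, h.choose_spec] using this
    · exact (anyS (G j)).2 n q⟩

lemma pull_eq (s : Strat (limG G k c)) (j n : ℕ) (h : n ≤ k + j) (p : LP G k c n) :
    (pull G k c s j).1 n (p.1 j) = (s.1 n p).1 j := by
  have h1 : ∃ p' : LP G k c n, p'.1 j = p.1 j := ⟨p, rfl⟩
  simp only [pull, dif_pos h1]
  rw [LP_inj G k c n j h _ _ h1.choose_spec]

lemma pull_loc (s s' : Strat (limG G k c)) (j n : ℕ) (h : s.1 n = s'.1 n) :
    (pull G k c s j).1 n = (pull G k c s' j).1 n := by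
  simp only [pull, h]

noncomputable def uu (b : Bool) (s : Strat (limG G k c)) : ℕ → ∀ i, Strat (G i)
  | 0 => fun i => pull G k c s i
  | d+1 => fun i => (c i).φ b (uu b s d (i+1))

lemma uu_loc (b : Bool) (s s' : Strat (limG G k c)) (n : ℕ) (h : ∀ m, m ≤ n → s.1 m = s'.1 m)
    (d : ℕ) : ∀ i m, m ≤ n → (uu G k c b s d i).1 m = (uu G k c b s' d i).1 m := by
  induction d with
  | zero => intro i m hm; exact pull_loc G k c s s' i m (h m hm)
  | succ d ih =>
    intro i m hm
    exact (c i).loc b _ _ m fun m' hm' => ih (i+1) m' (by omega)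

lemma uu_step (b : Bool) (s : Strat (limG G k c)) (d : ℕ) : ∀ i m, m + 1 ≤ k + i + d →
    (uu G k c b s (d+1) i).1 m = (uu G k c b s d i).1 m := by
  induction d with
  | zero =>
    intro i m hm
    funext q
    obtain ⟨p, rfl⟩ := LP_surj G k c m i (by omega) q
    have h1 := p.2 i
    show ((c i).φ b (pull G k c s (i+1))).1 m (p.1 i) = (pull G k c s i).1 m (p.1 i)
    rw [pull_eq G k c s i m (by omega) p]
    conv_lhs => rw [← h1]
    rw [(c i).low b _ m (by omega), pull_eq G k c s (i+1) m (by omega) p]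
    exact (s.1 m p).2 i
  | succ d ih =>
    intro i m hm
    exact (c i).loc b _ _ m fun m' hm' => ih (i+1) m' (by omega)

lemma uu_stab (b : Bool) (s : Strat (limG G k c)) (i m d e : ℕ) (hde : d ≤ e)
    (hm : m + 1 ≤ k + i + d) :
    (uu G k c b s e i).1 m = (uu G k c b s d i).1 m := by
  induction e, hde using Nat.le_induction with
  | base => rfl
  | succ e he ih => rw [uu_step G k c b s e i m (by omega), ih]

noncomputable def ss (b : Bool) (s : Strat (limG G k c)) (i : ℕ) : Strat (G i) :=
  ⟨fun n => (uu G k c b s (n+1) i).1 n, fun n => (uu G k c b s (n+1) i).2 n⟩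

lemma ss_pull (b : Bool) (s : Strat (limG G k c)) (i n : ℕ) (h : n + 1 ≤ k + i) :
    (ss G k c b s i).1 n = (pull G k c s i).1 n :=
  uu_stab G k c b s i n 0 (n+1) (by omega) (by omega)

lemma ss_phi (b : Bool) (s : Strat (limG G k c)) (i : ℕ) :
    (c i).φ b (ss G k c b s (i+1)) = ss G k c b s i := by
  apply Subtype.ext
  funext n
  show _ = (uu G k c b s (n+1) i).1 n
  rw [← uu_step G k c b s (n+1) i n (by omega)]
  refine (c i).loc b _ _ n fun m hm => ?_
  exact (uu_stab G k c b s (i+1) m (m+1) (n+1) (by omega) (by omega)).symm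

noncomputable def limCov : Cov (limG G k c) (G 0) k where
  π n p := p.1 0
  comm n p := rfl
  bij n h := ⟨fun p p' hp => LP_inj G k c n 0 (by omega) p p' hp,
    fun q => LP_surj G k c n 0 (by omega) q⟩
  φ b s := ss G k c b s 0
  loc b s s' n h := uu_loc G k c b s s' n h (n+1) 0 n le_rfl
  low b s n h p := by
    rw [ss_pull G k c b s 0 n (by omega)]
    exact pull_eq G k c s 0 n (by omega) p
  lift b s x hx := by
    have step : ∀ i (y : {y : Play (G i) // Cons b (ss G k c b s i) y}),
        ∃ z : {y : Play (G (i+1)) // Cons b (ss G k c b s (i+1)) y},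
          ∀ n, (c i).π n (z.1.1 n) = y.1.1 n := by
      intro i y
      obtain ⟨z, hz, h⟩ := (c i).lift b (ss G k c b s (i+1)) y.1 (by
        rw [ss_phi]; exact y.2)
      exact ⟨⟨z, hz⟩, h⟩
    choose nx hnx using step
    let X : ∀ i, {y : Play (G i) // Cons b (ss G k c b s i) y} :=
      fun i => Nat.rec ⟨x, hx⟩ (fun i y => nx i y) i
    have hX : ∀ i n, (c i).π n ((X (i+1)).1.1 n) = (X i).1.1 n := fun i n => hnx i (X i) n
    refine ⟨⟨fun n => ⟨fun i => (X i).1.1 n, fun i => hX i n⟩, fun n => ?_⟩, ?_, fun n => rfl⟩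
    · apply Subtype.ext
      funext i
      exact (X i).1.2 n
    · intro n hn
      apply LP_inj G k c (n+1) (n+1) (by omega)
      have h1 := (X (n+1)).2 n hn
      rw [ss_pull G k c b s (n+1) n (by omega)] at h1
      have h2 := pull_eq G k c s (n+1) n (by omega)
        (⟨fun i => (X i).1.1 n, fun i => hX i n⟩ : LP G k c n)
      exact h1.trans h2

def limProj (i : ℕ) (x : Play (limG G k c)) : Play (G i) :=
  ⟨fun n => (x.1 n).1 i, fun n => congrArg (fun p => p.1 i) (x.2 n)⟩

lemma limProj_op (i : ℕ) (W : Set (Play (G i))) (hW : IsOp W) :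
    IsOp (limProj G k c i ⁻¹' W) := by
  intro x hx
  obtain ⟨n, hn⟩ := hW _ hx
  refine ⟨n, fun y hy => hn _ ?_⟩
  simp [limProj, hy]

end Limit

end BD


namespace BD

section Attr
variable {V : Type} (E : V → V → Prop) (M : V → Prop) (U : Set V)

def At (α : Ordinal.{0}) : Set V :=
  {q | q ∈ U ∨ (M q ∧ ∃ c, E q c ∧ ∃ β, ∃ _ : β < α, c ∈ At β) ∨
    (¬ M q ∧ ∀ c, E q c → ∃ β, ∃ _ : β < α, c ∈ At β)}
termination_by α

lemma mem_At (α : Ordinal.{0}) (q : V) : q ∈ At E M U α ↔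
    (q ∈ U ∨ (M q ∧ ∃ c, E q c ∧ ∃ β, ∃ _ : β < α, c ∈ At E M U β) ∨
    (¬ M q ∧ ∀ c, E q c → ∃ β, ∃ _ : β < α, c ∈ At E M U β)) := by
  conv_lhs => rw [At]
  rfl

lemma attr : ∃ (W : Set V) (rk : V → Ordinal.{0}), U ⊆ W ∧
    (∀ q ∈ W, q ∉ U → M q → ∃ c, E q c ∧ c ∈ W ∧ rk c < rk q) ∧
    (∀ q ∈ W, q ∉ U → ¬ M q → ∀ c, E q c → c ∈ W ∧ rk c < rk q) ∧
    (∀ q, q ∉ W → M q → ∀ c, E q c → c ∉ W) ∧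
    (∀ q, q ∉ W → ¬ M q → ∃ c, E q c ∧ c ∉ W) := by
  let W : Set V := {q | ∃ α, q ∈ At E M U α}
  let rk : V → Ordinal.{0} := fun q => sInf {α | q ∈ At E M U α}
  have hrk : ∀ q ∈ W, q ∈ At E M U (rk q) := fun q hq => csInf_mem (s := {α | q ∈ At E M U α}) hq
  have hle : ∀ q α, q ∈ At E M U α → rk q ≤ α := fun q α h => csInf_le' h
  refine ⟨W, rk, ?_, ?_, ?_, ?_, ?_⟩
  · intro q hq
    exact ⟨0, by rw [mem_At]; exact Or.inl hq⟩
  · intro q hq hU hM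
    have := hrk q hq
    rw [mem_At] at this
    rcases this with h | ⟨-, c, hc, β, hβ, h⟩ | ⟨h, -⟩
    · exact absurd h hU
    · exact ⟨c, hc, ⟨β, h⟩, (hle c β h).trans_lt hβ⟩
    · exact absurd hM h
  · intro q hq hU hM c hc
    have := hrk q hq
    rw [mem_At] at this
    rcases this with h | ⟨h, -⟩ | ⟨-, h⟩
    · exact absurd h hU
    · exact absurd h hM
    · obtain ⟨β, hβ, h⟩ := h c hc
      exact ⟨⟨β, h⟩, (hle c β h).trans_lt hβ⟩
  · rintro q hq hM c hc ⟨β, h⟩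
    apply hq
    refine ⟨Order.succ β, ?_⟩
    rw [mem_At]
    exact Or.inr (Or.inl ⟨hM, c, hc, β, Order.lt_succ β, h⟩)
  · intro q hq hM
    by_contra! hcon
    apply hq
    obtain ⟨b, hb⟩ := Ordinal.bddAbove_of_small (s := Set.range rk)
    refine ⟨Order.succ b, ?_⟩
    rw [mem_At]
    refine Or.inr (Or.inr ⟨hM, fun c hc => ⟨rk c, ?_, hrk c (hcon c hc)⟩⟩)
    exact Order.lt_succ_of_le (hb ⟨c, rfl⟩)
end Attr

/-- graded attractor, moves restricted to `S`, mover has parity `b`. -/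
lemma gattr (G : Gm) (b : Bool) (S U : ∀ n, Set (G.P n)) :
    ∃ (W : ∀ n, Set (G.P n)) (g : Strat G) (rk : ∀ n, G.P n → Ordinal.{0}),
    (∀ n, U n ⊆ W n) ∧
    (∀ n, ∀ q ∈ W n, q ∉ U n → Nat.bodd n = b →
      g.1 n q ∈ S (n+1) ∧ g.1 n q ∈ W (n+1) ∧ rk (n+1) (g.1 n q) < rk n q) ∧
    (∀ n, ∀ q ∈ W n, q ∉ U n → Nat.bodd n ≠ b → ∀ c, G.par n c = q → c ∈ S (n+1) →
      c ∈ W (n+1) ∧ rk (n+1) c < rk n q) ∧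
    (∀ n q, q ∉ W n → Nat.bodd n = b → ∀ c, G.par n c = q → c ∈ S (n+1) → c ∉ W (n+1)) ∧
    (∀ n q, q ∉ W n → Nat.bodd n ≠ b → ∃ c, G.par n c = q ∧ c ∈ S (n+1) ∧ c ∉ W (n+1)) := by
  obtain ⟨W, rk, h1, h2, h3, h4, h5⟩ := attr (V := Σ n, G.P n)
    (fun p q => ∃ c : G.P (p.1+1), G.par p.1 c = p.2 ∧ c ∈ S (p.1+1) ∧ q = ⟨p.1+1, c⟩)
    (fun p => Nat.bodd p.1 = b) {p | p.2 ∈ U p.1}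
  have key : ∀ n (q : G.P n), ∃ c : G.P (n+1), G.par n c = q ∧
      ((⟨n, q⟩ : Σ n, G.P n) ∈ W → q ∉ U n → Nat.bodd n = b →
      c ∈ S (n+1) ∧ (⟨n+1, c⟩ : Σ n, G.P n) ∈ W ∧ rk ⟨n+1, c⟩ < rk ⟨n, q⟩) := by
    intro n q
    by_cases h : (⟨n, q⟩ : Σ n, G.P n) ∈ W ∧ q ∉ U n ∧ Nat.bodd n = b
    · obtain ⟨_, ⟨c, hc1, hc2, rfl⟩, hc3, hc4⟩ := h2 ⟨n, q⟩ h.1 h.2.1 h.2.2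
      exact ⟨c, hc1, fun _ _ _ => ⟨hc2, hc3, hc4⟩⟩
    · obtain ⟨c, hc⟩ := G.surj n q
      exact ⟨c, hc, fun a1 a2 a3 => absurd ⟨a1, a2, a3⟩ h⟩
  choose g hg1 hg2 using key
  refine ⟨fun n => {q | (⟨n, q⟩ : Σ n, G.P n) ∈ W}, ⟨g, hg1⟩, fun n q => rk ⟨n, q⟩, ?_, ?_, ?_, ?_, ?_⟩
  · intro n q hq
    exact h1 (show (⟨n, q⟩ : Σ n, G.P n) ∈ {p | p.2 ∈ U p.1} from hq)
  · intro n q a1 a2 a3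
    exact hg2 n q a1 a2 a3
  · intro n q a1 a2 a3 c hc hcS
    exact h3 ⟨n, q⟩ a1 a2 a3 ⟨n+1, c⟩ ⟨c, hc, hcS, rfl⟩
  · intro n q a1 a2 c hc hcS
    exact h4 ⟨n, q⟩ a1 a2 ⟨n+1, c⟩ ⟨c, hc, hcS, rfl⟩
  · intro n q a1 a2
    obtain ⟨_, ⟨c, hc, hcS, rfl⟩, h⟩ := h5 ⟨n, q⟩ a1 a2
    exact ⟨c, hc, hcS, h⟩

/-- a play that keeps descending ranks reaches the target -/
lemma reach (G : Gm) (U W : ∀ n, Set (G.P n)) (rk : ∀ n, G.P n → Ordinal.{0}) (x : Play G) (n0 : ℕ)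
    (h : ∀ n, n0 ≤ n → (∀ m, n0 ≤ m → m ≤ n → x.1 m ∉ U m) → x.1 n ∈ W n →
      x.1 (n+1) ∈ W (n+1) ∧ rk (n+1) (x.1 (n+1)) < rk n (x.1 n))
    (n : ℕ) (hn : n0 ≤ n) (hW : x.1 n ∈ W n) : ∃ m, n0 ≤ m ∧ x.1 m ∈ U m := by
  by_contra! hcon
  have : ∀ α : Ordinal.{0}, ∀ n, n0 ≤ n → x.1 n ∈ W n → rk n (x.1 n) = α → False := by
    intro α
    induction α using WellFoundedLT.induction with
    | _ α ih =>
      intro n hn hW hα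
      obtain ⟨h1, h2⟩ := h n hn (fun m hm _ => hcon m hm) hW
      exact ih _ (hα ▸ h2) (n+1) (by omega) h1 rfl
  exact this _ n hn hW rfl

end BD


namespace BD

section Closed

variable (G : Gm) (D : ∀ n, Set (G.P n)) (K : ℕ)

def QI (S : ∀ n, Set (G.P n)) : Prop :=
  ∀ n, K + 1 ≤ n → ∀ q ∈ S n, (Nat.bodd n = true → ∀ c, G.par n c = q → c ∈ S (n+1)) ∧
    (Nat.bodd n = false → ∃ c, G.par n c = q ∧ c ∈ S (n+1))

def QII (S T : ∀ n, Set (G.P n)) : Prop :=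
  ∀ n, K + 2 ≤ n → ∀ q ∈ T n, q ∈ S n ∧ q ∉ D n ∧
    (Nat.bodd n = true → ∃ c, G.par n c = q ∧ c ∈ T (n+1)) ∧
    (Nat.bodd n = false → ∀ c, G.par n c = q → c ∈ S (n+1) → c ∈ T (n+1))

abbrev Ch := Option ((∀ n, Set (G.P n)) ⊕ (Σ n, G.P n))

abbrev Raw (n : ℕ) := G.P n × (∀ n, Set (G.P n)) × Ch G

def Opt (S : ∀ n, Set (G.P n)) (n : ℕ) (q : G.P n) : Ch G → Prop
  | none => False
  | some (Sum.inl T) => QII G D K S T ∧ ∀ j, K + 2 ≤ j → j ≤ n → (thru q).1 j ∈ T j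
  | some (Sum.inr u) => K + 2 ≤ u.1 ∧ u.2 ∈ D u.1 ∧
      (∀ j, K + 1 ≤ j → j ≤ u.1 → (thru u.2).1 j ∈ S j) ∧
      ∀ j, j ≤ n → j ≤ u.1 → (thru q).1 j = (thru u.2).1 j

def E0 : ∀ n, Set (G.P n) := fun _ => ∅

def Valid (n : ℕ) (t : Raw G n) : Prop :=
  (n ≤ K → t.2.1 = E0 G) ∧ (n ≤ K + 1 → t.2.2 = none) ∧
  (K < n → QI G K t.2.1 ∧ (thru t.1).1 (K+1) ∈ t.2.1 (K+1)) ∧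
  (K + 1 < n → Opt G D K t.2.1 n t.1 t.2.2)

lemma opt_par (S : ∀ n, Set (G.P n)) (n : ℕ) (q : G.P (n+1)) (c : Ch G)
    (h : Opt G D K S (n+1) q c) : Opt G D K S n (G.par n q) c := by
  rcases c with _ | T | u
  · exact h
  · refine ⟨h.1, fun j h1 h2 => ?_⟩
    rw [thru_par q j h2]
    exact h.2 j h1 (by omega)
  · refine ⟨h.1, h.2.1, h.2.2.1, fun j h1 h2 => ?_⟩
    rw [thru_par q j h1]
    exact h.2.2.2 j (by omega) h2

lemma valid_par (n : ℕ) (t : Raw G (n+1)) (h : Valid G D K (n+1) t) :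
    Valid G D K n (G.par n t.1, if n ≤ K then E0 G else t.2.1, if n ≤ K + 1 then none else t.2.2) := by
  refine ⟨fun h1 => by simp [h1], fun h1 => by simp [h1], fun h1 => ?_, fun h1 => ?_⟩
  · have h2 := h.2.2.1 (by omega)
    simp only [Nat.not_le.mpr h1, if_false]
    rw [thru_par _ _ (by omega)]
    exact h2
  · have h2 := h.2.2.2 (by omega)
    simp only [Nat.not_le.mpr h1, if_false, show ¬ n ≤ K by omega]
    exact opt_par G D K _ n _ _ h2

lemma QI_univ : QI G K (fun _ => Set.univ) := by
  intro n _ q _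
  refine ⟨fun _ _ _ => trivial, fun _ => ?_⟩
  obtain ⟨c, hc⟩ := G.surj n q
  exact ⟨c, hc, trivial⟩

lemma exists_child (S : ∀ n, Set (G.P n)) (hS : QI G K S) (n : ℕ) (hn : K + 1 ≤ n) (q : G.P n)
    (hq : q ∈ S n) : ∃ c, G.par n c = q ∧ c ∈ S (n+1) := by
  cases hb : Nat.bodd n with
  | false => exact (hS n hn q hq).2 hb
  | true =>
    obtain ⟨c, hc⟩ := G.surj n q
    exact ⟨c, hc, (hS n hn q hq).1 hb c hc⟩

lemma valid_surj (n : ℕ) (t : Raw G n) (h : Valid G D K n t) : ∃ t' : Raw G (n+1),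
    Valid G D K (n+1) t' ∧ G.par n t'.1 = t.1 ∧ (if n ≤ K then E0 G else t'.2.1) = t.2.1 ∧
      (if n ≤ K + 1 then none else t'.2.2) = t.2.2 := by
  obtain ⟨q, S, c⟩ := t
  obtain ⟨h1, h2, h3, h4⟩ := h
  dsimp only at h1 h2 h3 h4 ⊢
  rcases Nat.lt_trichotomy n K with hn | hn | hn
  · obtain ⟨q', hq'⟩ := G.surj n q
    refine ⟨(q', E0 G, none), ⟨fun _ => rfl, fun _ => rfl, fun _ => by omega, fun _ => by omega⟩,
      hq', ?_, ?_⟩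
    · simp [hn.le, h1 hn.le]
    · rw [h2 (by omega)]; simp
  · obtain ⟨q', hq'⟩ := G.surj n q
    refine ⟨(q', fun _ => Set.univ, none), ⟨fun _ => by omega, fun _ => rfl,
      fun _ => ⟨QI_univ G K, trivial⟩, fun _ => by omega⟩, hq', ?_, ?_⟩
    · simp [hn.le, h1 hn.le]
    · rw [h2 (by omega)]; simp
  · obtain ⟨hS, hSq⟩ := h3 hn
    rcases Nat.lt_or_ge (K+1) n with hn1 | hn1
    · have h5 := h4 hn1
      simp only [show ¬ n ≤ K by omega, show ¬ n ≤ K + 1 by omega, if_false]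
      have main : ∃ q', G.par n q' = q ∧ Opt G D K S (n+1) q' c := by
        rcases c with _ | T | u
        · exact h5.elim
        · have hqT : q ∈ T n := by
            have := h5.2 n (by omega) le_rfl
            rwa [thru_self] at this
          obtain ⟨g1, g2, g3, g4⟩ := h5.1 n (by omega) q hqT
          have : ∃ q', G.par n q' = q ∧ q' ∈ T (n+1) := by
            cases hb : Nat.bodd n with
            | true => exact g3 hb
            | false =>
              obtain ⟨c, hc, hcS⟩ := exists_child G K S hS n (by omega) q g1
              exact ⟨c, hc, g4 hb c hc hcS⟩
          obtain ⟨q', hq', hqT'⟩ := this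
          refine ⟨q', hq', h5.1, fun j hj1 hj2 => ?_⟩
          rcases Nat.lt_or_ge n j with hj | hj
          · obtain rfl : j = n + 1 := by omega
            rwa [thru_self]
          · rw [← thru_par q' j hj, hq']
            exact h5.2 j hj1 hj
        · rcases Nat.lt_or_ge n u.1 with hu | hu
          · refine ⟨(thru u.2).1 (n+1), ?_, h5.1, h5.2.1, h5.2.2.1, fun j hj1 hj2 => ?_⟩
            · rw [(thru u.2).2, ← h5.2.2.2 n le_rfl hu.le, thru_self]
            · exact thru_play _ _ _ hj1
          · obtain ⟨q', hq'⟩ := G.surj n q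
            refine ⟨q', hq', h5.1, h5.2.1, h5.2.2.1, fun j hj1 hj2 => ?_⟩
            rw [← thru_par q' j (by omega), hq']
            exact h5.2.2.2 j (by omega) hj2
      obtain ⟨q', hq', hO⟩ := main
      refine ⟨(q', S, c), ⟨fun _ => by omega, fun _ => by omega, fun _ => ⟨hS, ?_⟩, fun _ => hO⟩,
        hq', rfl, rfl⟩
      dsimp only
      rw [← thru_par q' _ (by omega), hq']
      exact hSq
    · obtain rfl : n = K + 1 := by omega
      rw [thru_self] at hSq
      simp only [show ¬ K + 1 ≤ K by omega, if_false]
      have h2' := h2 le_rfl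
      by_cases hdead : ∃ (x : Play G) (m : ℕ), K + 2 ≤ m ∧ x.1 (K+1) = q ∧ x.1 m ∈ D m ∧
          ∀ j, K + 1 ≤ j → j ≤ m → x.1 j ∈ S j
      · obtain ⟨x, m, hm, hx, hxD, hxS⟩ := hdead
        refine ⟨(x.1 (K+2), S, some (Sum.inr ⟨m, x.1 m⟩)), ⟨fun _ => by omega, fun _ => by omega,
          fun _ => ⟨hS, ?_⟩, fun _ => ⟨hm, hxD, ?_, ?_⟩⟩, ?_, rfl, ?_⟩
        · dsimp only
          rw [thru_play _ _ _ (by omega), hx]; exact hSq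
        · intro j h1 h2
          dsimp only at h2 ⊢
          rw [thru_play _ _ _ h2]
          exact hxS j h1 h2
        · intro j h1 h2
          dsimp only at h2 ⊢
          rw [thru_play _ _ _ h2, thru_play _ _ _ h1]
        · exact (x.2 (K+1)).trans hx
        · simp [h2']
      · push Not at hdead
        let T : ∀ n, Set (G.P n) := fun n => {p | p ∈ S n ∧ (thru p).1 (K+1) = q ∧
          ∀ j, K + 1 ≤ j → j ≤ n → (thru p).1 j ∈ S j}
        have hT : ∀ n (p : G.P n), K + 1 ≤ n → p ∈ T n → ∀ c, G.par n c = p → c ∈ S (n+1) → c ∈ T (n+1) := by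
          intro n p hn hp c hc hcS
          refine ⟨hcS, ?_, fun j hj1 hj2 => ?_⟩
          · rw [← thru_par c _ hn, hc]; exact hp.2.1
          · rcases Nat.lt_or_ge n j with hj | hj
            · obtain rfl : j = n + 1 := by omega
              rwa [thru_self]
            · rw [← thru_par c _ hj, hc]
              exact hp.2.2 j hj1 hj
        have hQ : QII G D K S T := by
          intro n hn p hp
          refine ⟨hp.1, fun hD => ?_, fun _ => ?_, fun _ => hT n p (by omega) hp⟩
          · obtain ⟨j, h1, h2, h3⟩ := hdead (thru p) n hn hp.2.1 (by rwa [thru_self])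
            exact h3 (hp.2.2 j h1 h2)
          · obtain ⟨c, hc, hcS⟩ := exists_child G K S hS n (by omega) p hp.1
            exact ⟨c, hc, hT n p (by omega) hp c hc hcS⟩
        obtain ⟨q', hq', hqS⟩ := exists_child G K S hS (K+1) le_rfl q hSq
        refine ⟨(q', S, some (Sum.inl T)), ⟨fun _ => by omega, fun _ => by omega,
          fun _ => ⟨hS, ?_⟩, fun _ => ⟨hQ, ?_⟩⟩, hq', rfl, ?_⟩
        · dsimp only
          rw [← thru_par q' _ le_rfl, hq', thru_self]; exact hSq
        · intro j h1 h2
          obtain rfl : j = K + 2 := by omega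
          rw [thru_self]
          refine hT (K+1) q le_rfl ⟨hSq, thru_self _, fun j h1 h2 => ?_⟩ q' hq' hqS
          obtain rfl : j = K + 1 := by omega
          rwa [thru_self]
        · simp [h2']

abbrev HP (n : ℕ) : Type := {t : Raw G n // Valid G D K n t}

def HG : Gm where
  P := HP G D K
  par n t := ⟨(G.par n t.1.1, if n ≤ K then E0 G else t.1.2.1, if n ≤ K + 1 then none else t.1.2.2),
    valid_par G D K n t.1 t.2⟩
  surj n := by
    rintro ⟨t, ht⟩
    obtain ⟨t', h1, h2, h3, h4⟩ := valid_surj G D K n t ht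
    refine ⟨⟨t', h1⟩, Subtype.ext ?_⟩
    exact Prod.ext h2 (Prod.ext h3 h4)

lemma HP_ext {n : ℕ} (t t' : HP G D K n) (h1 : t.1.1 = t'.1.1) (h2 : t.1.2.1 = t'.1.2.1)
    (h3 : t.1.2.2 = t'.1.2.2) : t = t' := Subtype.ext (Prod.ext h1 (Prod.ext h2 h3))

variable {G D K} in
lemma HS_fst (s : Strat (HG G D K)) (n : ℕ) (t : HP G D K n) :
    G.par n (s.1 n t).1.1 = t.1.1 := congrArg (fun t => t.1.1) (s.2 n t)

variable {G D K} in
lemma HS_S (s : Strat (HG G D K)) (n : ℕ) (hn : K < n) (t : HP G D K n) :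
    (s.1 n t).1.2.1 = t.1.2.1 := by
  have := congrArg (fun t => t.1.2.1) (s.2 n t)
  simpa [HG, Nat.not_le.mpr hn] using this

variable {G D K} in
lemma HS_c (s : Strat (HG G D K)) (n : ℕ) (hn : K + 1 < n) (t : HP G D K n) :
    (s.1 n t).1.2.2 = t.1.2.2 := by
  have := congrArg (fun t => t.1.2.2) (s.2 n t)
  simpa [HG, Nat.not_le.mpr hn] using this

lemma valid0 (n : ℕ) (h : n ≤ K) (q : G.P n) : Valid G D K n (q, E0 G, none) :=
  ⟨fun _ => rfl, fun _ => rfl, fun _ => by omega, fun _ => by omega⟩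

variable {G D K} in
open Classical in
noncomputable def mv (s : Strat (HG G D K)) (n : ℕ) (q : G.P n) (S : ∀ n, Set (G.P n))
    (c : Ch G) : G.P (n+1) :=
  if h : Valid G D K n (q, S, c) then (s.1 n ⟨(q, S, c), h⟩).1.1 else (anyS G).1 n q

variable {G D K} in
lemma mv_par (s : Strat (HG G D K)) (n : ℕ) (q : G.P n) (S : ∀ n, Set (G.P n))
    (c : Ch G) : G.par n (mv s n q S c) = q := by
  unfold mv
  split_ifs with h
  · exact HS_fst s n _
  · exact (anyS G).2 n q

variable {G D K} in
lemma mv_eq (s : Strat (HG G D K)) (n : ℕ) (q : G.P n) (S : ∀ n, Set (G.P n))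
    (c : Ch G) (h : Valid G D K n (q, S, c)) :
    mv s n q S c = (s.1 n ⟨(q, S, c), h⟩).1.1 := dif_pos h

variable {G D K} in
lemma mv_loc (s s' : Strat (HG G D K)) (n : ℕ) (h : s.1 n = s'.1 n) (q : G.P n)
    (S : ∀ n, Set (G.P n)) (c : Ch G) : mv s n q S c = mv s' n q S c := by
  simp only [mv, h]

variable {G D K} in
/-- the position reached by a valid move -/
lemma mv_valid (s : Strat (HG G D K)) (n : ℕ) (hn : K + 1 < n) (q : G.P n) (S : ∀ n, Set (G.P n))
    (c : Ch G) (h : Valid G D K n (q, S, c)) : Opt G D K S (n+1) (mv s n q S c) c := by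
  have h1 := (s.1 n ⟨(q, S, c), h⟩).2.2.2.2 (by omega)
  rw [HS_S s n (by omega), HS_c s n hn] at h1
  rw [mv_eq s n q S c h]
  exact h1

end Closed
end BD


namespace BD

section Closed2

variable {G : Gm} {D : ∀ n, Set (G.P n)} {K : ℕ}

lemma opt_inl (S T : ∀ n, Set (G.P n)) (x : Play G) (n : ℕ) (h : QII G D K S T)
    (hx : ∀ j, K + 2 ≤ j → j ≤ n → x.1 j ∈ T j) :
    Opt G D K S n (x.1 n) (some (Sum.inl T)) := by
  refine ⟨h, fun j h1 h2 => ?_⟩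
  rw [thru_play _ _ _ h2]
  exact hx j h1 h2

lemma opt_inr (S : ∀ n, Set (G.P n)) (x : Play G) (n m : ℕ) (hm : K + 2 ≤ m) (hD : x.1 m ∈ D m)
    (hx : ∀ j, K + 1 ≤ j → j ≤ m → x.1 j ∈ S j) :
    Opt G D K S n (x.1 n) (some (Sum.inr ⟨m, x.1 m⟩)) := by
  refine ⟨hm, hD, fun j h1 h2 => ?_, fun j h1 h2 => ?_⟩
  · dsimp only at h2 ⊢
    rw [thru_play _ _ _ h2]
    exact hx j h1 h2
  · dsimp only at h2 ⊢
    rw [thru_play _ _ _ h2, thru_play _ _ _ h1]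

lemma valid_play1 (S : ∀ n, Set (G.P n)) (x : Play G) (hQ : QI G K S)
    (h1 : x.1 (K+1) ∈ S (K+1)) : Valid G D K (K+1) (x.1 (K+1), S, none) := by
  refine ⟨fun h => by omega, fun _ => rfl, fun _ => ⟨hQ, ?_⟩, fun h => by omega⟩
  dsimp only
  rwa [thru_self]

lemma valid_play2 (S : ∀ n, Set (G.P n)) (c : Ch G) (x : Play G) (hQ : QI G K S)
    (h1 : x.1 (K+1) ∈ S (K+1)) (n : ℕ) (hn : K + 2 ≤ n) (hO : Opt G D K S n (x.1 n) c) :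
    Valid G D K n (x.1 n, S, c) := by
  refine ⟨fun h => by omega, fun _ => by omega, fun _ => ⟨hQ, ?_⟩, fun h => hO⟩
  dsimp only
  rwa [thru_play _ _ _ (by omega)]

/-- The lifting lemma -/
lemma lift_core (s : Strat (HG G D K)) (b : Bool) (x : Play G) (S : ∀ n, Set (G.P n)) (c : Ch G)
    (hQ : QI G K S) (h1 : x.1 (K+1) ∈ S (K+1)) (hO : ∀ n, K + 2 ≤ n → Opt G D K S n (x.1 n) c)
    (c1 : ∀ n, Nat.bodd n = b → n ≤ K → x.1 (n+1) = mv s n (x.1 n) (E0 G) none)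
    (c2 : Nat.bodd (K+1) = b → x.1 (K+2) = mv s (K+1) (x.1 (K+1)) S none)
    (c3 : ∀ n, Nat.bodd n = b → K + 2 ≤ n → x.1 (n+1) = mv s n (x.1 n) S c)
    (c4 : Nat.bodd K = b → S = (s.1 K ⟨(x.1 K, E0 G, none), valid0 G D K K le_rfl _⟩).1.2.1)
    (c5 : Nat.bodd (K+1) = b → c = (s.1 (K+1) ⟨(x.1 (K+1), S, none), valid_play1 S x hQ h1⟩).1.2.2) :
    ∃ y : Play (HG G D K), Cons b s y ∧ ∀ n, (y.1 n).1.1 = x.1 n := by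
  have hv : ∀ n, Valid G D K n (x.1 n, if n ≤ K then E0 G else S, if n ≤ K + 1 then none else c) := by
    intro n
    rcases Nat.lt_trichotomy n (K+1) with h | h | h
    · simp only [show n ≤ K by omega, show n ≤ K + 1 by omega, if_true]
      exact valid0 G D K n (by omega) _
    · subst h
      simp only [show ¬ K + 1 ≤ K by omega, le_refl, if_true, if_false]
      exact valid_play1 S x hQ h1
    · simp only [show ¬ n ≤ K by omega, show ¬ n ≤ K + 1 by omega, if_false]
      exact valid_play2 S c x hQ h1 n h (hO n h)
  refine ⟨⟨fun n => ⟨_, hv n⟩, fun n => ?_⟩, ?_, fun n => rfl⟩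
  · apply HP_ext
    · exact x.2 n
    · by_cases h : n ≤ K
      · simp [HG, h]
      · simp [HG, h, show ¬ n + 1 ≤ K by omega]
    · by_cases h : n ≤ K + 1
      · simp [HG, h]
      · simp [HG, h, show ¬ n ≤ K by omega]
  · intro n hn
    rcases Nat.lt_trichotomy n (K+1) with h | h | h
    · have e : (⟨_, hv n⟩ : HP G D K n) = ⟨(x.1 n, E0 G, none), valid0 G D K n (by omega) _⟩ := by
        apply HP_ext <;> simp [show n ≤ K by omega]
        intro h; omega
      have hval := (s.1 n ⟨(x.1 n, E0 G, none), valid0 G D K n (by omega) _⟩).2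
      show (⟨_, hv (n+1)⟩ : HP G D K (n+1)) = s.1 n ⟨_, hv n⟩
      rw [e]
      apply HP_ext
      · dsimp only
        rw [c1 n hn (by omega), mv_eq]
      · dsimp only
        by_cases h2 : n + 1 ≤ K
        · rw [if_pos h2, hval.1 h2]
        · obtain rfl : n = K := by omega
          rw [if_neg h2]; exact c4 hn
      · dsimp only
        rw [if_pos (by omega), hval.2.1 (by omega)]
    · subst h
      have e : (⟨_, hv (K+1)⟩ : HP G D K (K+1)) = ⟨(x.1 (K+1), S, none), valid_play1 S x hQ h1⟩ := by
        apply HP_ext <;> simp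
      show (⟨_, hv (K+1+1)⟩ : HP G D K (K+1+1)) = s.1 (K+1) ⟨_, hv (K+1)⟩
      rw [e]
      apply HP_ext
      · dsimp only
        rw [c2 hn, mv_eq]
      · dsimp only
        rw [if_neg (by omega), HS_S s (K+1) (by omega)]
      · dsimp only
        rw [if_neg (by omega)]; exact c5 hn
    · have e : (⟨_, hv n⟩ : HP G D K n) = ⟨(x.1 n, S, c), valid_play2 S c x hQ h1 n h (hO n h)⟩ := by
        apply HP_ext <;> simp [show ¬ n ≤ K by omega]
        intro h; omega
      show (⟨_, hv (n+1)⟩ : HP G D K (n+1)) = s.1 n ⟨_, hv n⟩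
      rw [e]
      apply HP_ext
      · dsimp only
        rw [c3 n hn (by omega), mv_eq]
      · dsimp only
        rw [if_neg (by omega), HS_S s n (by omega)]
      · dsimp only
        rw [if_neg (by omega), HS_c s n (by omega)]

noncomputable def gW (G : Gm) (b : Bool) (S U : ∀ n, Set (G.P n)) : ∀ n, Set (G.P n) :=
  (gattr G b S U).choose
noncomputable def gg (G : Gm) (b : Bool) (S U : ∀ n, Set (G.P n)) : Strat G :=
  (gattr G b S U).choose_spec.choose
noncomputable def grk (G : Gm) (b : Bool) (S U : ∀ n, Set (G.P n)) : ∀ n, G.P n → Ordinal.{0} :=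
  (gattr G b S U).choose_spec.choose_spec.choose
lemma gspec (G : Gm) (b : Bool) (S U : ∀ n, Set (G.P n)) :
    (∀ n, U n ⊆ gW G b S U n) ∧
    (∀ n, ∀ q ∈ gW G b S U n, q ∉ U n → Nat.bodd n = b →
      (gg G b S U).1 n q ∈ S (n+1) ∧ (gg G b S U).1 n q ∈ gW G b S U (n+1) ∧
        grk G b S U (n+1) ((gg G b S U).1 n q) < grk G b S U n q) ∧
    (∀ n, ∀ q ∈ gW G b S U n, q ∉ U n → Nat.bodd n ≠ b → ∀ c, G.par n c = q → c ∈ S (n+1) →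
      c ∈ gW G b S U (n+1) ∧ grk G b S U (n+1) c < grk G b S U n q) ∧
    (∀ n q, q ∉ gW G b S U n → Nat.bodd n = b → ∀ c, G.par n c = q → c ∈ S (n+1) →
      c ∉ gW G b S U (n+1)) ∧
    (∀ n q, q ∉ gW G b S U n → Nat.bodd n ≠ b →
      ∃ c, G.par n c = q ∧ c ∈ S (n+1) ∧ c ∉ gW G b S U (n+1)) :=
  (gattr G b S U).choose_spec.choose_spec.choose_spec

noncomputable def fst (P : ℕ → Prop) : ℕ := sInf {m | P m}

lemma fst_eq (P : ℕ → Prop) (m : ℕ) (h : P m) (h2 : ∀ j, j < m → ¬ P j) : fst P = m := by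
  apply le_antisymm (Nat.sInf_le h)
  by_contra hc
  exact h2 _ (Nat.lt_of_not_le hc) (Nat.sInf_mem (s := {m | P m}) ⟨m, h⟩)

/-- strategies for player I -/
def SI (s : Strat (HG G D K)) (p : G.P K) : ∀ n, Set (G.P n) :=
  (s.1 K ⟨(p, E0 G, none), valid0 G D K K le_rfl _⟩).1.2.1

def DU (D : ∀ n, Set (G.P n)) (K : ℕ) : ∀ n, Set (G.P n) := fun n => {q | q ∈ D n ∧ K + 2 ≤ n}

open Classical in
noncomputable def phiI (s : Strat (HG G D K)) : Strat G :=
  ⟨fun n q => if n ≤ K then mv s n q (E0 G) none else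
    if ∃ m, m ≤ n ∧ (thru q).1 m ∈ DU D K m then
      mv s n q (SI s ((thru q).1 K)) (some (Sum.inr ⟨fst (fun m => m ≤ n ∧ (thru q).1 m ∈ DU D K m),
        (thru q).1 (fst (fun m => m ≤ n ∧ (thru q).1 m ∈ DU D K m))⟩))
    else if q ∈ gW G false (SI s ((thru q).1 K)) (DU D K) n then
      (gg G false (SI s ((thru q).1 K)) (DU D K)).1 n q
    else mv s n q (SI s ((thru q).1 K)) (some (Sum.inl fun n =>
      SI s ((thru q).1 K) n \ gW G false (SI s ((thru q).1 K)) (DU D K) n)),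
  fun n q => by
    beta_reduce
    split_ifs
    · exact mv_par _ _ _ _ _
    · exact mv_par _ _ _ _ _
    · exact (gg G false _ _).2 n q
    · exact mv_par _ _ _ _ _⟩

lemma liftI (hK : Nat.bodd K = false) (s : Strat (HG G D K)) (x : Play G)
    (hx : Cons false (phiI s) x) :
    ∃ y : Play (HG G D K), Cons false s y ∧ ∀ n, (y.1 n).1.1 = x.1 n := by
  have hK1 : Nat.bodd (K+1) = true := by simp [hK]
  obtain ⟨S, hS⟩ : ∃ S, S = SI s (x.1 K) := ⟨_, rfl⟩
  obtain ⟨gA, gB, gC, gD, gE⟩ := gspec G false S (DU D K)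
  obtain ⟨W, hW⟩ : ∃ W, W = gW G false S (DU D K) := ⟨_, rfl⟩
  rw [← hW] at gA gB gC gD gE
  obtain ⟨T, hT⟩ : ∃ T : ∀ n, Set (G.P n), T = fun n => S n \ W n := ⟨_, rfl⟩
  have hlow : ∀ n, Nat.bodd n = false → n ≤ K → x.1 (n+1) = mv s n (x.1 n) (E0 G) none := by
    intro n hn hnK
    rw [hx n hn]
    simp only [phiI, hnK, if_true]
  have hdead : ∀ n, Nat.bodd n = false → K + 2 ≤ n → ∀ m, m ≤ n → x.1 m ∈ DU D K m →
      (∀ j, j < m → x.1 j ∉ DU D K j) → x.1 (n+1) = mv s n (x.1 n) S (some (Sum.inr ⟨m, x.1 m⟩)) := by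
    intro n hn hnK m hm hmD hmin
    rw [hx n hn]
    have h : ∃ m, m ≤ n ∧ (thru (x.1 n)).1 m ∈ DU D K m :=
      ⟨m, hm, by rwa [thru_play _ _ _ hm]⟩
    have hf : fst (fun m => m ≤ n ∧ (thru (x.1 n)).1 m ∈ DU D K m) = m := by
      refine fst_eq _ m ⟨hm, by rwa [thru_play _ _ _ hm]⟩ fun j hj hj2 => hmin j hj ?_
      rw [← thru_play _ _ _ hj2.1]; exact hj2.2
    simp only [phiI, show ¬ n ≤ K by omega, if_false, if_pos h]
    rw [hf, thru_play _ _ _ (by omega), thru_play _ _ _ hm, ← hS]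
  have hno : ∀ n, K + 2 ≤ n → (∀ m, m ≤ n → x.1 m ∉ DU D K m) →
      ¬ ∃ m, m ≤ n ∧ (thru (x.1 n)).1 m ∈ DU D K m := by
    rintro n hn h ⟨m, hm, hm2⟩
    rw [thru_play _ _ _ hm] at hm2
    exact h m hm hm2
  have hin : ∀ n, Nat.bodd n = false → K + 2 ≤ n → (∀ m, m ≤ n → x.1 m ∉ DU D K m) → x.1 n ∈ W n →
      x.1 (n+1) = (gg G false S (DU D K)).1 n (x.1 n) := by
    intro n hn hnK h hw
    rw [hx n hn]
    simp only [phiI, show ¬ n ≤ K by omega, if_false, if_neg (hno n hnK h)]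
    rw [thru_play _ _ _ (by omega), ← hS, ← hW, if_pos hw]
  have hout : ∀ n, Nat.bodd n = false → K + 2 ≤ n → (∀ m, m ≤ n → x.1 m ∉ DU D K m) → x.1 n ∉ W n →
      x.1 (n+1) = mv s n (x.1 n) S (some (Sum.inl T)) := by
    intro n hn hnK h hw
    rw [hx n hn]
    simp only [phiI, show ¬ n ≤ K by omega, if_false, if_neg (hno n hnK h)]
    rw [thru_play _ _ _ (by omega), ← hS, ← hW, if_neg hw, hT]
  have hv0 := (s.1 K ⟨(x.1 K, E0 G, none), valid0 G D K K le_rfl _⟩).2.2.2.1 (by omega)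
  have hQ : QI G K S := by rw [hS]; exact hv0.1
  have h1 : x.1 (K+1) ∈ S (K+1) := by
    have := hv0.2
    rw [thru_self, ← mv_eq, ← hlow K hK le_rfl] at this
    rw [hS]; exact this
  have hTQ : QII G D K S T := by
    subst hT
    intro n hn q hq
    refine ⟨hq.1, fun hD => hq.2 (gA n ⟨hD, hn⟩), fun hb => ?_, fun hb c hc hcS => ?_⟩
    · obtain ⟨c, a1, a2, a3⟩ := gE n q hq.2 (by simp [hb])
      exact ⟨c, a1, a2, a3⟩
    · exact ⟨hcS, gD n q hq.2 hb c hc hcS⟩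
  have inv : ∀ j, K + 1 ≤ j → (∀ m, m < j → x.1 m ∉ DU D K m) → x.1 j ∈ S j ∧
      (x.1 j ∉ W j → ∀ i, K + 2 ≤ i → i ≤ j → x.1 i ∈ T i) := by
    intro j hj
    induction j, hj using Nat.le_induction with
    | base => intro _; exact ⟨h1, fun _ i hi hi2 => by omega⟩
    | succ j hj ih =>
      intro hm
      obtain ⟨ih1, ih2⟩ := ih fun m h => hm m (by omega)
      cases hb : Nat.bodd j with
      | true =>
        have hxS := (hQ j hj _ ih1).1 hb _ (x.2 j)
        refine ⟨hxS, fun hw i hi hi2 => ?_⟩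
        rcases Nat.lt_or_ge j i with h | h
        · obtain rfl : i = j + 1 := by omega
          subst hT
          exact ⟨hxS, hw⟩
        · refine ih2 (fun hjW => hw ?_) i hi h
          exact (gC j _ hjW (hm j (by omega)) (by simp [hb]) _ (x.2 j) hxS).1
      | false =>
        have hj2 : K + 2 ≤ j := by
          by_contra h
          obtain rfl : j = K + 1 := by omega
          rw [hK1] at hb; cases hb
        by_cases hjW : x.1 j ∈ W j
        · have e := hin j hb hj2 (fun m h => hm m (by omega)) hjW
          have := gB j _ hjW (hm j (by omega)) hb
          rw [← e] at this
          exact ⟨this.1, fun h => absurd this.2.1 h⟩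
        · have e := hout j hb hj2 (fun m h => hm m (by omega)) hjW
          have hO := opt_inl S T x j hTQ (ih2 hjW)
          have hv := valid_play2 S _ x hQ h1 j hj2 hO
          have h3 := mv_valid s j (by omega) _ _ _ hv
          rw [← e] at h3
          have h4 := h3.2 (j+1) (by omega) le_rfl
          rw [thru_self] at h4
          refine ⟨?_, fun _ i hi hi2 => ?_⟩
          · subst hT; exact h4.1
          · rcases Nat.lt_or_ge j i with h | h
            · obtain rfl : i = j + 1 := by omega
              exact h4
            · exact ih2 hjW i hi h
  by_cases hD : ∃ m, x.1 m ∈ DU D K m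
  · classical
    obtain ⟨m, hm⟩ : ∃ m, m = Nat.find hD := ⟨_, rfl⟩
    have hm1 : x.1 m ∈ DU D K m := hm ▸ Nat.find_spec hD
    have hm2 : ∀ j, j < m → x.1 j ∉ DU D K j := fun j hj => Nat.find_min hD (hm ▸ hj)
    have hmK : K + 2 ≤ m := hm1.2
    have hO : ∀ n, Opt G D K S n (x.1 n) (some (Sum.inr ⟨m, x.1 m⟩)) := fun n =>
      opt_inr S x n m hmK hm1.1 fun j hj1 hj2 => (inv j hj1 fun i hi => hm2 i (by omega)).1
    refine lift_core s false x S (some (Sum.inr ⟨m, x.1 m⟩)) hQ h1 (fun n hn => hO n) hlow ?_ ?_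
      (fun _ => hS) ?_
    · intro h; rw [hK1] at h; cases h
    · intro n hn hn2
      rcases Nat.lt_or_ge n m with h | h
      · have h3 := mv_valid s n (by omega) _ _ _ (valid_play2 S _ x hQ h1 n hn2 (hO n))
        have h4 := h3.2.2.2 (n+1) le_rfl h
        rw [thru_self] at h4
        rw [h4]; exact (thru_play _ _ _ h).symm
      · exact hdead n hn hn2 m h hm1 hm2
    · intro h; rw [hK1] at h; cases h
  · push Not at hD
    have hxS : ∀ j, K + 1 ≤ j → x.1 j ∈ S j := fun j hj => (inv j hj fun m _ => hD m).1
    have hnW : ∀ n, K + 2 ≤ n → x.1 n ∉ W n := by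
      intro n hn hw
      obtain ⟨m, -, hm⟩ := reach G (DU D K) W (grk G false S (DU D K)) x (K+2) (by
        intro n hn _ hw
        cases hb : Nat.bodd n with
        | false =>
          rw [hin n hb hn (fun m _ => hD m) hw]
          exact (gB n _ hw (hD n) hb).2
        | true => exact gC n _ hw (hD n) (by simp [hb]) _ (x.2 n) (hxS (n+1) (by omega))) n hn hw
      exact hD m hm
    have hxT : ∀ n, K + 2 ≤ n → x.1 n ∈ T n := fun n hn => by
      subst hT; exact ⟨hxS n (by omega), hnW n hn⟩
    refine lift_core s false x S (some (Sum.inl T)) hQ h1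
      (fun n hn => opt_inl S T x n hTQ fun j hj _ => hxT j hj) hlow ?_ ?_
      (fun _ => hS) ?_
    · intro h; rw [hK1] at h; cases h
    · intro n hn hn2
      exact hout n hn hn2 (fun m _ => hD m) (hnW n hn2)
    · intro h; rw [hK1] at h; cases h

/-- positions that the strategy of II may claim -/
def UII (s : Strat (HG G D K)) (p : G.P (K+1)) : ∀ n, Set (G.P n) := fun m =>
  {u | ∃ S, ∃ hv : Valid G D K (K+1) (p, S, none),
    (s.1 (K+1) ⟨_, hv⟩).1.2.2 = some (Sum.inr ⟨m, u⟩)}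

open Classical in
noncomputable def SII (s : Strat (HG G D K)) (p : G.P (K+1)) (m : ℕ) (u : G.P m) :
    ∀ n, Set (G.P n) :=
  if h : u ∈ UII s p m then h.choose else E0 G

noncomputable def WII (s : Strat (HG G D K)) (p : G.P (K+1)) : ∀ n, Set (G.P n) :=
  gW G true (fun _ => Set.univ) (UII s p)

noncomputable def S0II (s : Strat (HG G D K)) (p : G.P (K+1)) : ∀ n, Set (G.P n) :=
  fun n => (WII s p n)ᶜ

open Classical in
noncomputable def cII (s : Strat (HG G D K)) (p : G.P (K+1)) : Ch G :=
  if hv : Valid G D K (K+1) (p, S0II s p, none) then (s.1 (K+1) ⟨_, hv⟩).1.2.2 else none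

open Classical in
noncomputable def phiII (s : Strat (HG G D K)) : Strat G :=
  ⟨fun n q => if n ≤ K then mv s n q (E0 G) none else
    if ∃ m, m ≤ n ∧ (thru q).1 m ∈ UII s ((thru q).1 (K+1)) m then
      mv s n q (SII s ((thru q).1 (K+1))
        (fst (fun m => m ≤ n ∧ (thru q).1 m ∈ UII s ((thru q).1 (K+1)) m))
        ((thru q).1 (fst (fun m => m ≤ n ∧ (thru q).1 m ∈ UII s ((thru q).1 (K+1)) m))))
       (some (Sum.inr ⟨fst (fun m => m ≤ n ∧ (thru q).1 m ∈ UII s ((thru q).1 (K+1)) m),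
        (thru q).1 (fst (fun m => m ≤ n ∧ (thru q).1 m ∈ UII s ((thru q).1 (K+1)) m))⟩))
    else if q ∈ WII s ((thru q).1 (K+1)) n then
      (gg G true (fun _ => Set.univ) (UII s ((thru q).1 (K+1)))).1 n q
    else if n = K + 1 then mv s n q (S0II s ((thru q).1 (K+1))) none
    else mv s n q (S0II s ((thru q).1 (K+1))) (cII s ((thru q).1 (K+1))),
  fun n q => by
    beta_reduce
    split_ifs
    · exact mv_par _ _ _ _ _
    · exact mv_par _ _ _ _ _
    · exact (gg G true _ _).2 n q
    · exact mv_par _ _ _ _ _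
    · exact mv_par _ _ _ _ _⟩

lemma liftII (hK : Nat.bodd K = false) (s : Strat (HG G D K)) (x : Play G)
    (hx : Cons true (phiII s) x) :
    ∃ y : Play (HG G D K), Cons true s y ∧ ∀ n, (y.1 n).1.1 = x.1 n := by
  have hK1 : Nat.bodd (K+1) = true := by simp [hK]
  obtain ⟨U, hU⟩ : ∃ U, U = UII s (x.1 (K+1)) := ⟨_, rfl⟩
  obtain ⟨gA, gB, gC, gD, gE⟩ := gspec G true (fun _ => Set.univ) U
  obtain ⟨W, hW⟩ : ∃ W, W = WII s (x.1 (K+1)) := ⟨_, rfl⟩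
  have hW' : gW G true (fun _ => Set.univ) U = W := by rw [hW, hU]; rfl
  rw [hW'] at gA gB gC gD gE
  obtain ⟨S0, hS0⟩ : ∃ S0, S0 = S0II s (x.1 (K+1)) := ⟨_, rfl⟩
  have hS0W : ∀ n, S0 n = (W n)ᶜ := by intro n; rw [hS0, hW]; rfl
  have hlow : ∀ n, Nat.bodd n = true → n ≤ K → x.1 (n+1) = mv s n (x.1 n) (E0 G) none := by
    intro n hn hnK
    rw [hx n hn]
    simp only [phiII, hnK, if_true]
  have hdead : ∀ n, Nat.bodd n = true → K + 1 ≤ n → ∀ m, m ≤ n → x.1 m ∈ U m →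
      (∀ j, j < m → x.1 j ∉ U j) →
      x.1 (n+1) = mv s n (x.1 n) (SII s (x.1 (K+1)) m (x.1 m)) (some (Sum.inr ⟨m, x.1 m⟩)) := by
    intro n hn hnK m hm hmD hmin
    rw [hx n hn]
    have h : ∃ m, m ≤ n ∧ (thru (x.1 n)).1 m ∈ U m :=
      ⟨m, hm, by rwa [thru_play _ _ _ hm]⟩
    have hf : fst (fun m => m ≤ n ∧ (thru (x.1 n)).1 m ∈ U m) = m := by
      refine fst_eq _ m ⟨hm, by rwa [thru_play _ _ _ hm]⟩ fun j hj hj2 => hmin j hj ?_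
      rw [← thru_play _ _ _ hj2.1]; exact hj2.2
    simp only [phiII, show ¬ n ≤ K by omega, if_false]
    rw [thru_play _ _ (K+1) (by omega), ← hU, if_pos h, hf, thru_play _ _ _ hm]
  have hno : ∀ n, (∀ m, m ≤ n → x.1 m ∉ U m) →
      ¬ ∃ m, m ≤ n ∧ (thru (x.1 n)).1 m ∈ U m := by
    rintro n h ⟨m, hm, hm2⟩
    rw [thru_play _ _ _ hm] at hm2
    exact h m hm hm2
  have hin : ∀ n, Nat.bodd n = true → K + 1 ≤ n → (∀ m, m ≤ n → x.1 m ∉ U m) → x.1 n ∈ W n →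
      x.1 (n+1) = (gg G true (fun _ => Set.univ) U).1 n (x.1 n) := by
    intro n hn hnK h hw
    rw [hx n hn]
    simp only [phiII, show ¬ n ≤ K by omega, if_false]
    rw [thru_play _ _ (K+1) (by omega), ← hU, if_neg (hno n h), ← hW, if_pos hw]
  have hout1 : (∀ m, m ≤ K+1 → x.1 m ∉ U m) → x.1 (K+1) ∉ W (K+1) →
      x.1 (K+2) = mv s (K+1) (x.1 (K+1)) S0 none := by
    intro h hw
    rw [hx (K+1) hK1]
    simp only [phiII, show ¬ K + 1 ≤ K by omega, if_false]
    rw [thru_play _ _ (K+1) (by omega), ← hU, if_neg (hno _ h), ← hW, if_neg hw, if_pos trivial, hS0]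
  have hout2 : ∀ n, Nat.bodd n = true → K + 2 ≤ n → (∀ m, m ≤ n → x.1 m ∉ U m) → x.1 n ∉ W n →
      x.1 (n+1) = mv s n (x.1 n) S0 (cII s (x.1 (K+1))) := by
    intro n hn hnK h hw
    rw [hx n hn]
    simp only [phiII, show ¬ n ≤ K by omega, if_false]
    rw [thru_play _ _ (K+1) (by omega), ← hU, if_neg (hno _ h), ← hW, if_neg hw,
      if_neg (by omega), hS0]
  by_cases hD : ∃ m, x.1 m ∈ U m
  · classical
    obtain ⟨m, hm⟩ : ∃ m, m = Nat.find hD := ⟨_, rfl⟩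
    have hm1 : x.1 m ∈ U m := hm ▸ Nat.find_spec hD
    have hm2 : ∀ j, j < m → x.1 j ∉ U j := fun j hj => Nat.find_min hD (hm ▸ hj)
    have hm1' : x.1 m ∈ UII s (x.1 (K+1)) m := hU ▸ hm1
    obtain ⟨S, hSS⟩ : ∃ S, S = SII s (x.1 (K+1)) m (x.1 m) := ⟨_, rfl⟩
    have hSp : ∃ hv : Valid G D K (K+1) (x.1 (K+1), S, none),
        (s.1 (K+1) ⟨_, hv⟩).1.2.2 = some (Sum.inr ⟨m, x.1 m⟩) := by
      rw [hSS, SII, dif_pos hm1']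
      exact hm1'.choose_spec
    obtain ⟨hv, hc⟩ := hSp
    have hv2 := (s.1 (K+1) ⟨_, hv⟩).2.2.2.2 (by omega)
    rw [hc, HS_S s (K+1) (by omega)] at hv2
    obtain ⟨hmK, hmD, hmS, hmE⟩ := hv2
    dsimp only at hmK hmD hmS hmE
    have hQ : QI G K S := (hv.2.2.1 (by omega)).1
    have h1 : x.1 (K+1) ∈ S (K+1) := by
      have := (hv.2.2.1 (by omega)).2
      dsimp only at this
      rwa [thru_self] at this
    have hO : ∀ n, Opt G D K S n (x.1 n) (some (Sum.inr ⟨m, x.1 m⟩)) := fun n =>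
      opt_inr S x n m hmK hmD fun j hj1 hj2 => by
        have := hmS j hj1 hj2
        rwa [thru_play _ _ _ hj2] at this
    refine lift_core s true x S (some (Sum.inr ⟨m, x.1 m⟩)) hQ h1 (fun n hn => hO n) hlow ?_ ?_ ?_ ?_
    · intro _
      have := hmE (K+2) le_rfl hmK
      rw [thru_self, thru_play _ _ _ hmK] at this
      rw [mv_eq s _ _ _ _ hv, this]
    · intro n hn hn2
      rcases Nat.lt_or_ge n m with h | h
      · have h3 := mv_valid s n (by omega) _ _ _ (valid_play2 S _ x hQ h1 n hn2 (hO n))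
        have h4 := h3.2.2.2 (n+1) le_rfl h
        rw [thru_self] at h4
        rw [h4]; exact (thru_play _ _ _ h).symm
      · rw [hSS]; exact hdead n hn (by omega) m h hm1 hm2
    · intro h; rw [hK] at h; cases h
    · intro _; exact hc.symm
  · push Not at hD
    have hnW : ∀ n, K + 1 ≤ n → x.1 n ∉ W n := by
      intro n hn hw
      obtain ⟨m, -, hm⟩ := reach G U W (grk G true (fun _ => Set.univ) U) x (K+1) (by
        intro n hn _ hw
        cases hb : Nat.bodd n with
        | true =>
          rw [hin n hb hn (fun m _ => hD m) hw]
          exact (gB n _ hw (hD n) hb).2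
        | false => exact gC n _ hw (hD n) (by simp [hb]) _ (x.2 n) trivial) n hn hw
      exact hD m hm
    have hQ : QI G K S0 := by
      intro n hn q hq
      rw [hS0W] at hq
      refine ⟨fun hb c hc => ?_, fun hb => ?_⟩
      · rw [hS0W]; exact gD n q hq hb c hc trivial
      · obtain ⟨c, a1, -, a3⟩ := gE n q hq (by simp [hb])
        exact ⟨c, a1, by rw [hS0W]; exact a3⟩
    have h1 : x.1 (K+1) ∈ S0 (K+1) := by rw [hS0W]; exact hnW _ le_rfl
    have hv : Valid G D K (K+1) (x.1 (K+1), S0, none) := valid_play1 S0 x hQ h1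
    obtain ⟨c, hc⟩ : ∃ c, c = cII s (x.1 (K+1)) := ⟨_, rfl⟩
    have hc' : c = (s.1 (K+1) ⟨_, hv⟩).1.2.2 := by
      have hv' := hv
      rw [hS0] at hv'
      rw [hc, cII, dif_pos hv']
      subst hS0
      rfl
    have hv2 := (s.1 (K+1) ⟨_, hv⟩).2.2.2.2 (by omega)
    rw [← hc', HS_S s (K+1) (by omega), ← mv_eq, ← hout1 (fun m _ => hD m) (hnW _ le_rfl)] at hv2
    rw [← hc] at hout2
    rcases c with _ | T | ⟨m, u⟩
    · exact hv2.elim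
    · have hTQ := hv2.1
      dsimp only at hTQ
      have hxT : ∀ n, K + 2 ≤ n → ∀ j, K + 2 ≤ j → j ≤ n → x.1 j ∈ T j := by
        intro n hn
        induction n, hn using Nat.le_induction with
        | base =>
          intro j h1 h2
          obtain rfl : j = K + 2 := by omega
          have := hv2.2 (K+2) le_rfl le_rfl
          rwa [thru_self] at this
        | succ n hn ih =>
          intro j hj1 hj2
          rcases Nat.lt_or_ge n j with h | h
          · obtain rfl : j = n + 1 := by omega
            cases hb : Nat.bodd n with
            | true =>
              have h3 := mv_valid s n (by omega) _ _ _
                (valid_play2 S0 _ x hQ h1 n hn (opt_inl S0 T x n hTQ ih))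
              rw [← hout2 n hb hn (fun m _ => hD m) (hnW n (by omega))] at h3
              have := h3.2 (n+1) (by omega) le_rfl
              rwa [thru_self] at this
            | false =>
              refine (hTQ n hn _ (ih n hn le_rfl)).2.2.2 hb _ (x.2 n) ?_
              rw [hS0W]; exact hnW _ (by omega)
          · exact ih j hj1 h
      refine lift_core s true x S0 (some (Sum.inl T)) hQ h1
        (fun n hn => opt_inl S0 T x n hTQ (hxT n hn)) hlow ?_ ?_ ?_ ?_
      · intro _
        exact hout1 (fun m _ => hD m) (hnW _ le_rfl)
      · intro n hn hn2
        exact hout2 n hn hn2 (fun m _ => hD m) (hnW n (by omega))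
      · intro h; rw [hK] at h; cases h
      · intro _; exact hc'
    · exfalso
      have hu : u ∈ U m := by rw [hU]; exact ⟨S0, hv, hc'.symm⟩
      have h3 := hv2.2.2.1 m (by have := hv2.1; dsimp only at this; omega) le_rfl
      dsimp only at h3
      rw [thru_self, hS0W] at h3
      exact h3 (gA m hu)

lemma phiI_loc (s s' : Strat (HG G D K)) (n : ℕ) (h : ∀ m, m ≤ n → s.1 m = s'.1 m) :
    (phiI s).1 n = (phiI s').1 n := by
  funext q
  have hm := mv_loc s s' n (h n le_rfl)
  by_cases hn : n ≤ K
  · simp only [phiI, hn, if_true, hm]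
  · have hS : SI s = SI s' := by funext p; simp only [SI, h K (by omega)]
    simp only [phiI, hn, if_false]
    rw [hS]
    simp only [hm]

lemma phiII_loc (s s' : Strat (HG G D K)) (n : ℕ) (h : ∀ m, m ≤ n → s.1 m = s'.1 m) :
    (phiII s).1 n = (phiII s').1 n := by
  funext q
  have hm := mv_loc s s' n (h n le_rfl)
  by_cases hn : n ≤ K
  · simp only [phiII, hn, if_true, hm]
  · have hU : UII s = UII s' := by funext p m; simp only [UII, h (K+1) (by omega)]
    have hSII : SII s = SII s' := by
      funext p m u
      unfold SII
      by_cases hu : u ∈ UII s p m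
      · have hu' : u ∈ UII s' p m := hU ▸ hu
        rw [dif_pos hu, dif_pos hu']
        congr 1
        funext S
        simp only [h (K+1) (by omega)]
      · have hu' : u ∉ UII s' p m := hU ▸ hu
        rw [dif_neg hu, dif_neg hu']
    have hW : WII s = WII s' := by funext p; simp only [WII, hU]
    have hS0 : S0II s = S0II s' := by funext p m; simp only [S0II, hW]
    have hc : cII s = cII s' := by
      funext p
      unfold cII
      rw [hS0]
      simp only [h (K+1) (by omega)]
    simp only [phiII, hn, if_false]
    rw [hU, hSII, hW, hS0, hc]
    simp only [hm]

noncomputable def closedCov (G : Gm) (D : ∀ n, Set (G.P n)) (K : ℕ) (hK : Nat.bodd K = false) :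
    Cov (HG G D K) G K where
  π n t := t.1.1
  comm n t := rfl
  bij n h := by
    refine ⟨fun t t' e => ?_, fun q => ⟨⟨(q, E0 G, none), valid0 G D K n h q⟩, rfl⟩⟩
    apply HP_ext _ _ _ _ _ e
    · rw [t.2.1 h, t'.2.1 h]
    · rw [t.2.2.1 (by omega), t'.2.2.1 (by omega)]
  φ b s := if b then phiII s else phiI s
  loc b s s' n h := by
    cases b
    · exact phiI_loc s s' n h
    · exact phiII_loc s s' n h
  low b s n h t := by
    have ht : t = ⟨(t.1.1, E0 G, none), valid0 G D K n (by omega) _⟩ := by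
      apply HP_ext
      · rfl
      · exact t.2.1 (by omega)
      · exact t.2.2.1 (by omega)
    have e : mv s n t.1.1 (E0 G) none = (s.1 n t).1.1 := by
      rw [mv_eq s n _ _ _ (valid0 G D K n (by omega) _), ← ht]
    cases b
    · show (if n ≤ K then mv s n t.1.1 (E0 G) none else _) = _
      rw [if_pos (by omega), e]
    · show (if n ≤ K then mv s n t.1.1 (E0 G) none else _) = _
      rw [if_pos (by omega), e]
  lift b s x hx := by
    cases b
    · exact liftI hK s x hx
    · exact liftII hK s x hx

/-- an open set can be unravelled -/
lemma closed_unravel (G : Gm) (k : ℕ) (A : Set (Play G)) (hA : IsOp A) :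
    ∃ (H : Gm) (c : Cov H G k), IsOp (c.map ⁻¹' A) ∧ IsOp (c.map ⁻¹' A)ᶜ := by
  obtain ⟨K, hK, hkK⟩ : ∃ K, Nat.bodd K = false ∧ k ≤ K := ⟨2 * k, by simp, by omega⟩
  let D : ∀ n, Set (G.P n) := fun n => {p | ∀ y : Play G, y.1 n = p → y ∈ A}
  let c : Cov (HG G D K) G K := closedCov G D K hK
  refine ⟨HG G D K, c.mono hkK, c.map_op A hA, ?_⟩
  intro y hy
  refine ⟨K + 2, fun z hz hzA => hy ?_⟩
  -- z in A; the choice component at K+2 is a claim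
  have hstab : ∀ (z : Play (HG G D K)) n, K + 2 ≤ n → (z.1 n).1.2 = (z.1 (K+2)).1.2 := by
    intro z n hn
    induction n, hn using Nat.le_induction with
    | base => rfl
    | succ n hn ih =>
      rw [← ih]
      have := z.2 n
      rw [← this]
      simp [HG, show ¬ n ≤ K by omega, show ¬ n ≤ K + 1 by omega]
  have hfst : ∀ (z : Play (HG G D K)) n, (z.1 n).1.1 = (c.map z).1 n := fun _ _ => rfl
  cases hc : (z.1 (K+2)).1.2.2 with
  | none =>
    have := (z.1 (K+2)).2.2.2.2 (by omega)
    rw [hc] at this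
    exact this.elim
  | some r =>
    rcases r with T | u
    · exfalso
      obtain ⟨n, hn⟩ := hA _ hzA
      have hm : K + 2 ≤ max n (K+2) := le_max_right _ _
      have hO := (z.1 (max n (K+2))).2.2.2.2 (by omega)
      rw [hstab z _ hm, hc] at hO
      have h1 := hO.2 _ hm le_rfl
      rw [thru_self] at h1
      refine (hO.1 _ hm _ h1).2.1 fun w hw => hn w ?_
      exact play_agree w (c.map z) _ hw n (le_max_left _ _)
    · have hO := (y.1 (max u.1 (K+2))).2.2.2.2 (by omega)
      rw [hstab y _ (le_max_right _ _), ← hz, hc] at hO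
      have h1 := hO.2.2.2 u.1 (le_max_left _ _) le_rfl
      rw [thru_self, hfst, thru_play _ _ _ (le_max_left _ _)] at h1
      exact hO.2.1 _ h1

end Closed2
end BD


namespace BD

structure GY (Y : Type) [TopologicalSpace Y] where
  G : Gm
  f : Play G → Y
  hf : ∀ U, IsOpen U → IsOp (f ⁻¹' U)

lemma isOp_iUnion {G : Gm} (A : ℕ → Set (Play G)) (h : ∀ i, IsOp (A i)) : IsOp (⋃ i, A i) := by
  intro x hx
  obtain ⟨i, hi⟩ := Set.mem_iUnion.1 hx
  obtain ⟨n, hn⟩ := h i x hi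
  exact ⟨n, fun y hy => Set.mem_iUnion.2 ⟨i, hn y hy⟩⟩

lemma unravel {Y : Type} [TopologicalSpace Y] (B : Set Y) (hB : @MeasurableSet Y (borel Y) B) :
    ∀ (T : GY Y) (k : ℕ), ∃ (H : Gm) (c : Cov H T.G k),
      IsOp (c.map ⁻¹' (T.f ⁻¹' B)) ∧ IsOp (c.map ⁻¹' (T.f ⁻¹' B))ᶜ := by
  letI : MeasurableSpace Y := borel Y
  haveI : BorelSpace Y := ⟨rfl⟩
  induction B, hB using MeasurableSet.induction_on_open with
  | isOpen U hU =>
    intro T k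
    exact closed_unravel T.G k _ (T.hf U hU)
  | compl B hB ih =>
    intro T k
    obtain ⟨H, c, h1, h2⟩ := ih T k
    refine ⟨H, c, h2, ?_⟩
    rw [Set.preimage_compl, Set.preimage_compl, compl_compl]
    exact h1
  | iUnion B hd hB ih =>
    intro T k
    choose N c h1 h2 using fun i (T : GY Y) => ih i T (k+i)
    let nxt : ℕ → GY Y → GY Y := fun i T => ⟨N i T, T.f ∘ (c i T).map, fun U hU =>
      (c i T).map_op _ (T.hf U hU)⟩
    let st : ℕ → GY Y := fun i => Nat.rec T (fun i T => nxt i T) i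
    let G : ℕ → Gm := fun i => (st i).G
    let cc : ∀ i, Cov (G (i+1)) (G i) (k+i) := fun i => c i (st i)
    have hcomp : ∀ i x, (st i).f (limProj G k cc i x) = T.f ((limCov G k cc).map x) := by
      intro i x
      induction i with
      | zero => rfl
      | succ i ih =>
        rw [← ih]
        show (st i).f ((c i (st i)).map (limProj G k cc (i+1) x)) = _
        congr 1
        apply Subtype.ext
        funext n
        exact (x.1 n).2 i
    have hop : IsOp ((limCov G k cc).map ⁻¹' (T.f ⁻¹' ⋃ i, B i)) := by
      rw [Set.preimage_iUnion, Set.preimage_iUnion]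
      apply isOp_iUnion
      intro i
      have := limProj_op G k cc (i+1) _ (h1 i (st i))
      convert this using 1
      ext x
      simp only [Set.mem_preimage]
      rw [← hcomp (i+1) x]
      rfl
    obtain ⟨H, d, e1, e2⟩ := closed_unravel _ k _ hop
    exact ⟨H, d.comp (limCov G k cc), e1, e2⟩

lemma open_det (H : Gm) [Subsingleton (H.P 0)] (A : Set (Play H)) (hA : IsOp A) :
    (∃ s : Strat H, ∀ x, Cons false s x → x ∈ A) ∨ (∃ s : Strat H, ∀ x, Cons true s x → x ∉ A) := by
  let D : ∀ n, Set (H.P n) := fun n => {p | ∀ y : Play H, y.1 n = p → y ∈ A}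
  obtain ⟨gA, gB, gC, gD, gE⟩ := gspec H false (fun _ => Set.univ) D
  by_cases h : ∀ r : H.P 0, r ∈ gW H false (fun _ => Set.univ) D 0
  · left
    refine ⟨gg H false (fun _ => Set.univ) D, fun x hx => ?_⟩
    by_contra hxA
    have hD : ∀ n, x.1 n ∉ D n := fun n hn => hxA (hn x rfl)
    obtain ⟨m, -, hm⟩ := reach H D _ (grk H false (fun _ => Set.univ) D) x 0 (by
        intro n hn _ hw
        cases hb : Nat.bodd n with
        | false =>
          rw [hx n hb]
          exact (gB n _ hw (hD n) hb).2
        | true => exact gC n _ hw (hD n) (by simp [hb]) _ (x.2 n) trivial) 0 le_rfl (h _)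
    exact hD m hm
  · right
    push Not at h
    obtain ⟨r, hr⟩ := h
    have key : ∀ n q, ∃ c, H.par n c = q ∧ (q ∉ gW H false (fun _ => Set.univ) D n →
        Nat.bodd n = true → c ∉ gW H false (fun _ => Set.univ) D (n+1)) := by
      intro n q
      by_cases hq : q ∉ gW H false (fun _ => Set.univ) D n ∧ Nat.bodd n = true
      · obtain ⟨c, a1, -, a3⟩ := gE n q hq.1 (by simp [hq.2])
        exact ⟨c, a1, fun _ _ => a3⟩
      · obtain ⟨c, hc⟩ := H.surj n q
        exact ⟨c, hc, fun h1 h2 => absurd ⟨h1, h2⟩ hq⟩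
    choose s hs1 hs2 using key
    refine ⟨⟨s, hs1⟩, fun x hx hxA => ?_⟩
    have hW : ∀ n, x.1 n ∉ gW H false (fun _ => Set.univ) D n := by
      intro n
      induction n with
      | zero => rwa [Subsingleton.elim (x.1 0) r]
      | succ n ih =>
        cases hb : Nat.bodd n with
        | false => exact gD n _ ih hb _ (x.2 n) trivial
        | true => rw [hx n hb]; exact hs2 n _ ih hb
    obtain ⟨n, hn⟩ := hA x hxA
    exact hW n (gA n hn)

def treeG (A : Type) [Nonempty A] : Gm where
  P n := Fin n → A
  par n p := fun i => p i.castSucc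
  surj n p := ⟨Fin.snoc p (Classical.arbitrary A), by funext i; simp⟩

def toPlay {A : Type} [Nonempty A] (x : ℕ → A) : Play (treeG A) :=
  ⟨fun n i => x i, fun _ => rfl⟩

def ofPlay {A : Type} [Nonempty A] (x : Play (treeG A)) : ℕ → A := fun n => x.1 (n+1) (Fin.last n)

lemma ofPlay_eq {A : Type} [Nonempty A] (x : Play (treeG A)) (n : ℕ) (i : Fin n) :
    x.1 n i = ofPlay x i := by
  induction n with
  | zero => exact i.elim0
  | succ n ih =>
    refine Fin.lastCases rfl (fun j => ?_) i
    have := ih j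
    rw [← x.2 n] at this
    exact this

lemma of_toPlay {A : Type} [Nonempty A] (x : ℕ → A) : ofPlay (toPlay x) = x := rfl

lemma ofPlay_op {A : Type} [Nonempty A] [TopologicalSpace A] [DiscreteTopology A] (U : Set (ℕ → A))
    (hU : IsOpen U) : IsOp (G := treeG A) (ofPlay ⁻¹' U) := by
  intro x hx
  rw [isOpen_pi_iff] at hU
  obtain ⟨I, u, h1, h2⟩ := hU _ hx
  refine ⟨I.sup id + 1, fun y hy => h2 ?_⟩
  intro i hi
  have hlt : i < I.sup id + 1 := Nat.lt_succ_of_le (Finset.le_sup (f := id) hi)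
  have e : ofPlay y i = ofPlay x i := by
    rw [← ofPlay_eq y _ ⟨i, hlt⟩, ← ofPlay_eq x _ ⟨i, hlt⟩, hy]
  rw [e]
  exact (h1 i hi).2

theorem borel_det (A : Type) [Nonempty A] [TopologicalSpace A] [DiscreteTopology A]
    (B : Set (ℕ → A)) (hB : @MeasurableSet _ (borel (ℕ → A)) B) :
    (∃ s : ∀ n, (Fin n → A) → A, ∀ x : ℕ → A,
      (∀ n, Nat.bodd n = false → x n = s n (fun i => x i)) → x ∈ B) ∨
    (∃ s : ∀ n, (Fin n → A) → A, ∀ x : ℕ → A,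
      (∀ n, Nat.bodd n = true → x n = s n (fun i => x i)) → x ∉ B) := by
  obtain ⟨H, c, h1, h2⟩ := unravel B hB ⟨treeG A, ofPlay, ofPlay_op⟩ 0
  haveI : Subsingleton (H.P 0) := by
    have hinj := (c.bij 0 le_rfl).1
    haveI : Subsingleton ((treeG A).P 0) := inferInstanceAs (Subsingleton (Fin 0 → A))
    exact hinj.subsingleton
  have tr : ∀ (b : Bool) (t : Strat (treeG A)) (x : ℕ → A),
      (∀ n, Nat.bodd n = b → x n = t.1 n (fun i => x i) (Fin.last n)) → Cons b t (toPlay x) := by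
    intro b t x hx n hn
    funext i
    refine Fin.lastCases ?_ (fun j => ?_) i
    · exact hx n hn
    · have := congrFun (t.2 n ((toPlay x).1 n)) j
      exact this.symm
  have fin : ∀ (b : Bool) (s : Strat H) (x : ℕ → A),
      (∀ n, Nat.bodd n = b → x n = (c.φ b s).1 n (fun i => x i) (Fin.last n)) →
      ∃ y, Cons b s y ∧ ofPlay (c.map y) = x := by
    intro b s x hx
    obtain ⟨y, hy, e⟩ := c.lift b s (toPlay x) (tr b _ x hx)
    refine ⟨y, hy, ?_⟩
    have : c.map y = toPlay x := Subtype.ext (funext e)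
    rw [this]
    rfl
  rcases open_det H _ h1 with ⟨s, hs⟩ | ⟨s, hs⟩
  · left
    refine ⟨fun n p => (c.φ false s).1 n p (Fin.last n), fun x hx => ?_⟩
    obtain ⟨y, hy, rfl⟩ := fin false s x hx
    exact hs y hy
  · right
    refine ⟨fun n p => (c.φ true s).1 n p (Fin.last n), fun x hx => ?_⟩
    obtain ⟨y, hy, rfl⟩ := fin true s x hx
    exact hs y hy

end BD


open Set

namespace CH

/-- Basic clopen sets of the Cantor space. -/
def cyl (x : Cantor) (n : ℕ) : Set Cantor := {y | ∀ i < n, y i = x i}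

lemma mem_cyl {x y : Cantor} {n : ℕ} : y ∈ cyl x n ↔ ∀ i < n, y i = x i := Iff.rfl

lemma self_mem_cyl (x : Cantor) (n : ℕ) : x ∈ cyl x n := fun _ _ => rfl

lemma cyl_anti (x : Cantor) {m n : ℕ} (h : m ≤ n) : cyl x n ⊆ cyl x m :=
  fun _ hy i hi => hy i (lt_of_lt_of_le hi h)

lemma cyl_zero (x : Cantor) : cyl x 0 = univ := by
  ext y; simp [cyl]

lemma cyl_eq {x y : Cantor} {n : ℕ} (h : y ∈ cyl x n) : cyl y n = cyl x n := by
  ext z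
  exact ⟨fun hz i hi => (hz i hi).trans (h i hi), fun hz i hi => (hz i hi).trans (h i hi).symm⟩

lemma mem_cyl_symm {x y : Cantor} {n : ℕ} (h : y ∈ cyl x n) : x ∈ cyl y n :=
  fun i hi => (h i hi).symm

lemma cyl_eq_iInter (x : Cantor) (n : ℕ) :
    cyl x n = ⋂ i ∈ Finset.range n, (fun y : Cantor => y i) ⁻¹' {x i} := by
  ext y; simp [cyl]

lemma isClopen_cyl (x : Cantor) (n : ℕ) : IsClopen (cyl x n) := by
  rw [cyl_eq_iInter]
  exact isClopen_biInter_finset fun i _ => (isClopen_discrete _).preimage (continuous_apply i)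

lemma exists_cyl_subset {U : Set Cantor} (hU : IsOpen U) {x : Cantor} (hx : x ∈ U) :
    ∃ n, cyl x n ⊆ U := by
  obtain ⟨v, ⟨y, n, rfl⟩, h1, h2⟩ :=
    (PiNat.isTopologicalBasis_cylinders (fun _ : ℕ => Bool)).exists_subset_of_mem_open hx hU
  refine ⟨n, fun z hz => h2 ?_⟩
  intro i hi
  exact (hz i hi).trans (h1 i hi)

lemma cyl_nhds (x : Cantor) (n : ℕ) : cyl x n ∈ nhds x :=
  (isClopen_cyl x n).2.mem_nhds (self_mem_cyl x n)

lemma isOpen_iff_cyl {U : Set Cantor} : IsOpen U ↔ ∀ x ∈ U, ∃ n, cyl x n ⊆ U :=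
  ⟨fun h x hx => exists_cyl_subset h hx, fun h => isOpen_iff_mem_nhds.2 fun x hx => by
    obtain ⟨n, hn⟩ := h x hx
    exact Filter.mem_of_superset (cyl_nhds x n) hn⟩

/-- A countable dense sequence. -/
noncomputable def dseq : ℕ → Cantor := TopologicalSpace.denseSeq Cantor

lemma exists_dseq (x : Cantor) (n : ℕ) : ∃ i, x ∈ cyl (dseq i) n := by
  obtain ⟨i, hi⟩ := (TopologicalSpace.denseRange_denseSeq Cantor).exists_mem_open
    (isClopen_cyl x n).2 ⟨x, self_mem_cyl x n⟩
  exact ⟨i, mem_cyl_symm hi⟩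

/-- The class of sets given by finite `Gδ` ranks with parity. -/
def DD (E : Set Cantor) : Prop :=
  ∃ r : Cantor → ℕ, (∀ n, IsGδ {x | n < r x}) ∧ E = {x | Odd (r x)}

lemma DD.inDelta_half {E : Set Cantor} (h : DD E) : DOmegaSigmaTwo E := by
  obtain ⟨r, hr, rfl⟩ := h
  refine ⟨fun n => {x | r x ≤ n}, fun n => ?_, fun a b hab x hx => le_trans hx hab, ?_⟩
  · obtain ⟨f, hf, hf2⟩ := isGδ_iff_eq_iInter_nat.1 (hr n)
    refine ⟨fun k => (f k)ᶜ, fun k => (hf k).isClosed_compl, ?_⟩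
    rw [← compl_iInter, ← hf2]
    ext x; simp
  · ext x
    simp only [mem_setOf_eq, mem_iUnion, mem_diff, not_exists, not_le]
    constructor
    · intro h; exact ⟨r x, h, le_rfl, fun m hm => hm⟩
    · rintro ⟨n, hn, h1, h2⟩
      have : r x = n := by
        rcases Nat.lt_or_ge (r x) n with h | h
        · exact absurd (h2 _ h) (lt_irrefl _)
        · omega
      rwa [this]

lemma DD.compl {E : Set Cantor} (h : DD E) : DD Eᶜ := by
  obtain ⟨r, hr, rfl⟩ := h
  refine ⟨fun x => r x + 1, fun n => ?_, ?_⟩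
  · cases n with
    | zero => simp
    | succ n => simpa using hr n
  · ext x; simp [Nat.odd_add_one]

lemma DD.inDelta {E : Set Cantor} (h : DD E) : InDelta E :=
  ⟨h.inDelta_half, h.compl.inDelta_half⟩

open Classical in
lemma DD.comb {E F : Set Cantor} (hE : DD E) (hF : DD F) (f : Prop → Prop → Prop) :
    DD {x | f (x ∈ E) (x ∈ F)} := by
  obtain ⟨a, ha, rfl⟩ := hE
  obtain ⟨b, hb, rfl⟩ := hF
  let χ : ℕ → ℕ → ℕ := fun i j => if f (Odd i) (Odd j) then 1 else 0
  have χ1 : ∀ i j, χ i j ≤ 1 := by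
    intro i j; simp only [χ]; split_ifs <;> omega
  let θ : ℕ → ℕ → ℕ := fun i j => 2 * (i + j) + χ i j
  have hθ : ∀ i j i' j', i ≤ i' → j ≤ j' → θ i j ≤ θ i' j' := by
    intro i j i' j' h1 h2
    by_cases h : i = i' ∧ j = j'
    · rw [h.1, h.2]
    · have := χ1 i j
      simp only [θ]; omega
  refine ⟨fun x => θ (a x) (b x), fun n => ?_, ?_⟩
  · have : {x | n < θ (a x) (b x)} =
        ⋂ p : {p : ℕ × ℕ // θ p.1 p.2 ≤ n}, ({x | p.1.1 < a x} ∪ {x | p.1.2 < b x}) := by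
      ext x
      simp only [mem_setOf_eq, mem_iInter, mem_union]
      constructor
      · rintro h ⟨⟨i, j⟩, hp⟩
        by_contra hc
        simp only [not_or, not_lt] at hc
        have := hθ _ _ _ _ hc.1 hc.2
        simp only at hp
        omega
      · intro h
        by_contra hc
        have := h ⟨(a x, b x), by simpa using hc⟩
        simp at this
    rw [this]
    exact IsGδ.iInter fun p => (ha _).union (hb _)
  · ext x
    simp only [mem_setOf_eq, θ, χ]
    split_ifs with h
    · simp [h]
    · simp [h]

lemma DD.union {E F : Set Cantor} (hE : DD E) (hF : DD F) : DD (E ∪ F) := hE.comb hF Or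
lemma DD.inter {E F : Set Cantor} (hE : DD E) (hF : DD F) : DD (E ∩ F) := hE.comb hF And
lemma DD.diff {E F : Set Cantor} (hE : DD E) (hF : DD F) : DD (E \ F) := hE.inter hF.compl

open Classical in
lemma DD.of_isGδ {E : Set Cantor} (h : IsGδ E) : DD E := by
  refine ⟨fun x => if x ∈ E then 1 else 0, fun n => ?_, ?_⟩
  · cases n with
    | zero =>
      convert h using 1
      ext x; by_cases hx : x ∈ E <;> simp [hx]
    | succ n =>
      convert IsGδ.empty using 1
      ext x; by_cases hx : x ∈ E <;> simp [hx]
  · ext x; by_cases hx : x ∈ E <;> simp [hx]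

lemma DD.of_isClosed {E : Set Cantor} (h : IsClosed E) : DD E := DD.of_isGδ h.isGδ
lemma DD.empty : DD (∅ : Set Cantor) := DD.of_isClosed isClosed_empty

lemma DD.patch_nat {E : Set Cantor} (C : ℕ → Set Cantor) (hC : ∀ i, IsClosed (C i))
    (hcov : ∀ x, ∃ i, x ∈ C i) (h : ∀ i, DD (E ∩ C i)) : DD E := by
  choose r hr hE using h
  let ι : Cantor → ℕ := fun x => sInf {i | x ∈ C i}
  have hι : ∀ x, x ∈ C (ι x) := fun x => Nat.sInf_mem (s := {i | x ∈ C i}) (hcov x)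
  have hι2 : ∀ x j, x ∈ C j → ι x ≤ j := fun x j hj => Nat.sInf_le hj
  refine ⟨fun x => r (ι x) x, fun n => ?_, ?_⟩
  · have : {x | n < r (ι x) x} =
        ⋂ i, (((C i)ᶜ ∪ ⋃ j ∈ Iio i, C j) ∪ {x | n < r i x}) := by
      ext x
      simp only [mem_setOf_eq, mem_iInter, mem_union, mem_compl_iff, mem_iUnion, mem_Iio]
      constructor
      · intro h i
        by_cases h1 : x ∈ C i
        · rcases lt_or_eq_of_le (hι2 x i h1) with h2 | h2
          · exact Or.inl (Or.inr ⟨_, h2, hι x⟩)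
          · right; rwa [← h2]
        · exact Or.inl (Or.inl h1)
      · intro h
        rcases h (ι x) with (h1 | ⟨j, hj, h2⟩) | h1
        · exact absurd (hι x) h1
        · exact absurd (hι2 x j h2) (by omega)
        · exact h1
    rw [this]
    refine IsGδ.iInter fun i => IsGδ.union (IsGδ.union (hC i).isOpen_compl.isGδ ?_) (hr i n)
    exact ((finite_Iio i).isClosed_biUnion fun j _ => hC j).isGδ
  · ext x
    have := congrArg (x ∈ ·) (hE (ι x))
    simp only [mem_inter_iff, hι x, and_true] at this
    exact iff_of_eq this

lemma DD.patch {ι : Type*} [Countable ι] {E : Set Cantor} (C : ι → Set Cantor)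
    (hC : ∀ i, IsClosed (C i))
    (hcov : ∀ x, ∃ i, x ∈ C i) (h : ∀ i, DD (E ∩ C i)) : DD E := by
  obtain ⟨i0, -⟩ := hcov (fun _ => false)
  haveI : Nonempty ι := ⟨i0⟩
  obtain ⟨f, hf⟩ := exists_surjective_nat ι
  refine DD.patch_nat (fun n => C (f n)) (fun n => hC _) (fun x => ?_) (fun n => h _)
  obtain ⟨i, hi⟩ := hcov x
  obtain ⟨n, rfl⟩ := hf i
  exact ⟨n, hi⟩

lemma isGδ_preimage {G H : Set Cantor} {ψ : Cantor → Cantor} (hG : IsGδ G)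
    (hψ : ContinuousOn ψ G) (hH : IsGδ H) : IsGδ (G ∩ ψ ⁻¹' H) := by
  obtain ⟨f, hf, rfl⟩ := isGδ_iff_eq_iInter_nat.1 hH
  rw [preimage_iInter, inter_iInter]
  refine IsGδ.iInter fun n => ?_
  obtain ⟨u, hu, h2⟩ := continuousOn_iff'.1 hψ _ (hf n)
  rw [inter_comm, h2]
  exact hu.isGδ.inter hG

open Classical in
lemma DD.preimage {G E : Set Cantor} {ψ : Cantor → Cantor} (hG : IsGδ G)
    (hψ : ContinuousOn ψ G) (hE : DD E) : DD (G ∩ ψ ⁻¹' E) := by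
  obtain ⟨r, hr, rfl⟩ := hE
  refine ⟨fun x => if x ∈ G then r (ψ x) + 2 else 0, fun n => ?_, ?_⟩
  · rcases n with _ | _ | n
    · convert hG using 1
      ext x; by_cases hx : x ∈ G <;> simp [hx]
    · convert hG using 1
      ext x; by_cases hx : x ∈ G <;> simp [hx]
    · convert isGδ_preimage hG hψ (hr n) using 1
      ext x; by_cases hx : x ∈ G <;> simp [hx]
  · ext x
    by_cases hx : x ∈ G <;> simp [hx, Nat.odd_add]

end CH


open Set

namespace CH

/-- Twist a proposition by a bit. -/
def tw (ε : Bool) (p : Prop) : Prop := p ↔ ε = false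

lemma tw_false (p : Prop) : tw false p ↔ p := by simp [tw]
lemma tw_true (p : Prop) : tw true p ↔ ¬ p := by simp [tw]
lemma tw_tw (a b : Bool) (p : Prop) : tw a (tw b p) ↔ tw (a ^^ b) p := by
  cases a <;> cases b <;> simp [tw]
lemma tw_congr (a : Bool) {p q : Prop} (h : p ↔ q) : tw a p ↔ tw a q := by
  simp [tw, h]

/-- Partial reductions defined up to a simple remainder. -/
def Red (X : Set Cantor) (ε : Bool) (V U : Set Cantor) : Prop :=
  ∃ (G : Set Cantor) (ψ : Cantor → Cantor), IsGδ G ∧ G ⊆ V ∧ ContinuousOn ψ G ∧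
    MapsTo ψ G U ∧ (∀ x ∈ G, x ∈ X ↔ tw ε (ψ x ∈ X)) ∧ DD ((X ∩ V) \ G)

lemma Red.comp {X V U W : Set Cantor} {ε δ : Bool} (hU : DD U) (h1 : Red X ε V U)
    (h2 : Red X δ U W) : Red X (ε ^^ δ) V W := by
  obtain ⟨G, ψ, hG, hGV, hψ, hm, hx, hd⟩ := h1
  obtain ⟨G', ψ', hG', hGU, hψ', hm', hx', hd'⟩ := h2
  refine ⟨G ∩ ψ ⁻¹' G', ψ' ∘ ψ, isGδ_preimage hG hψ hG', fun x h => hGV h.1,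
    hψ'.comp (hψ.mono inter_subset_left) (fun x h => h.2), fun x h => hm' h.2, ?_, ?_⟩
  · intro x h
    rw [hx x h.1, tw_congr ε (hx' _ h.2), tw_tw]
    rfl
  · have hE : DD (U \ G' ∩ {y | tw ε (y ∈ X)}) := by
      cases ε with
      | false =>
        convert hd' using 1
        ext y; simp only [tw_false, mem_inter_iff, mem_diff, mem_setOf_eq]; tauto
      | true =>
        convert (hU.diff (DD.of_isGδ hG')).diff hd' using 1
        ext y; simp only [tw_true, mem_inter_iff, mem_diff, mem_setOf_eq]; tauto
    convert hd.union (DD.preimage hG hψ hE) using 1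
    ext x
    simp only [mem_inter_iff, mem_diff, mem_union, mem_preimage, mem_setOf_eq]
    constructor
    · rintro ⟨⟨h1, h2⟩, h3⟩
      by_cases h4 : x ∈ G
      · exact Or.inr ⟨h4, ⟨hm h4, fun h5 => h3 ⟨h4, h5⟩⟩, (hx x h4).1 h1⟩
      · exact Or.inl ⟨⟨h1, h2⟩, h4⟩
    · rintro (⟨⟨h1, h2⟩, h3⟩ | ⟨h1, h2, h3⟩)
      · exact ⟨⟨h1, h2⟩, fun h => h3 h.1⟩
      · exact ⟨⟨(hx x h1).2 h3, hGV h1⟩, fun h => h2.2 h.2⟩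

lemma continuousOn_coord {G : Set Cantor} {ψ : Cantor → Cantor}
    (h : ∀ x ∈ G, ∀ n, ∃ m, ∀ y ∈ G, y ∈ cyl x m → ψ y n = ψ x n) : ContinuousOn ψ G := by
  rw [continuousOn_pi]
  intro n x hx
  obtain ⟨m, hm⟩ := h x hx n
  have : Filter.Tendsto (fun y => ψ y n) (nhdsWithin x G) (pure (ψ x n)) := by
    rw [Filter.tendsto_pure]
    filter_upwards [self_mem_nhdsWithin, mem_nhdsWithin_of_mem_nhds (cyl_nhds x m)] with y h1 h2
    exact hm y h1 h2
  exact this.mono_right (pure_le_nhds _)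

lemma continuous_coord {ψ : Cantor → Cantor}
    (h : ∀ x, ∀ n, ∃ m, ∀ y, y ∈ cyl x m → ψ y n = ψ x n) : Continuous ψ := by
  rw [← continuousOn_univ]
  exact continuousOn_coord fun x _ n => by
    obtain ⟨m, hm⟩ := h x n
    exact ⟨m, fun y _ => hm y⟩

/-- Extension of a continuous function from a dense set to a `Gδ` set. -/
lemma exists_ext {X : Set Cantor} (hd : Dense X) (f : X → Cantor) (hf : Continuous f) :
    ∃ (G : Set Cantor) (ψ : Cantor → Cantor), IsGδ G ∧ X ⊆ G ∧ ContinuousOn ψ G ∧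
      ∀ x : X, ψ x = f x := by
  classical
  let O : ℕ → Set Cantor := fun n => {x | ∃ m b, ∀ y : X, (y : Cantor) ∈ cyl x m → f y n = b}
  have hO : ∀ n, IsOpen (O n) := by
    intro n
    rw [isOpen_iff_cyl]
    rintro x ⟨m, b, h⟩
    refine ⟨m, fun x' hx' => ⟨m, b, fun y hy => h y ?_⟩⟩
    rwa [cyl_eq hx'] at hy
  let ψ : Cantor → Cantor := fun x n =>
    if h : ∃ b, ∃ m, ∀ y : X, (y : Cantor) ∈ cyl x m → f y n = b then h.choose else false
  have hψ : ∀ x n m b, (∀ y : X, (y : Cantor) ∈ cyl x m → f y n = b) → ψ x n = b := by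
    intro x n m b h
    have h' : ∃ b, ∃ m, ∀ y : X, (y : Cantor) ∈ cyl x m → f y n = b := ⟨b, m, h⟩
    have e : ψ x n = h'.choose := by simp only [ψ]; rw [dif_pos h']
    obtain ⟨m', hm'⟩ := h'.choose_spec
    obtain ⟨y, hy1, hy2⟩ := hd.exists_mem_open (isClopen_cyl x (max m m')).2
      ⟨x, self_mem_cyl _ _⟩
    rw [e, ← hm' ⟨y, hy1⟩ (cyl_anti x (le_max_right _ _) hy2),
      ← h ⟨y, hy1⟩ (cyl_anti x (le_max_left _ _) hy2)]
  have hfX : ∀ (x : X) n, ∃ m, ∀ y : X, (y : Cantor) ∈ cyl x m → f y n = f x n := by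
    intro x n
    have h1 : IsOpen {y : X | f y n = f x n} :=
      (isOpen_discrete {f x n}).preimage ((continuous_apply n).comp hf)
    obtain ⟨U, hU, hU2⟩ := isOpen_induced_iff.1 h1
    have hxU : (x : Cantor) ∈ U := by
      have : x ∈ Subtype.val ⁻¹' U := by rw [hU2]; rfl
      exact this
    obtain ⟨m, hm⟩ := exists_cyl_subset hU hxU
    refine ⟨m, fun y hy => ?_⟩
    have : y ∈ Subtype.val ⁻¹' U := hm hy
    rw [hU2] at this
    exact this
  refine ⟨⋂ n, O n, ψ, IsGδ.iInter fun n => (hO n).isGδ, ?_, ?_, ?_⟩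
  · intro x hx
    refine mem_iInter.2 fun n => ?_
    obtain ⟨m, hm⟩ := hfX ⟨x, hx⟩ n
    exact ⟨m, _, hm⟩
  · refine continuousOn_coord fun x hx n => ?_
    obtain ⟨m, b, h⟩ := mem_iInter.1 hx n
    refine ⟨m, fun y _ hy => ?_⟩
    rw [hψ x n m b h, hψ y n m b]
    rwa [cyl_eq hy]
  · intro x
    funext n
    obtain ⟨m, hm⟩ := hfX x n
    exact hψ _ _ _ _ hm

lemma isGδ_fix {G : Set Cantor} {ψ : Cantor → Cantor} (hG : IsGδ G)
    (hψ : ContinuousOn ψ G) : IsGδ (G ∩ {x | ψ x = x}) := by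
  have : G ∩ {x | ψ x = x} = ⋂ n, ⋃ b : Bool,
      ((G ∩ ψ ⁻¹' ((fun y : Cantor => y n) ⁻¹' {b})) ∩ ((fun y : Cantor => y n) ⁻¹' {b})) := by
    ext x
    simp only [mem_inter_iff, mem_setOf_eq, mem_iInter, mem_iUnion, mem_preimage,
      mem_singleton_iff]
    constructor
    · rintro ⟨h1, h2⟩ n
      exact ⟨x n, ⟨h1, by rw [h2]⟩, rfl⟩
    · intro h
      refine ⟨(h 0).choose_spec.1.1, funext fun n => ?_⟩
      obtain ⟨b, ⟨_, h1⟩, h2⟩ := h n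
      rw [h1, h2]
  rw [this]
  have op : ∀ (n : ℕ) (b : Bool), IsGδ ((fun y : Cantor => y n) ⁻¹' {b}) := fun n b =>
    ((isOpen_discrete {b}).preimage (continuous_apply n)).isGδ
  exact IsGδ.iInter fun n => IsGδ.iUnion fun b => (isGδ_preimage hG hψ (op n b)).inter (op n b)

lemma lavrentiev {X : Set Cantor} (hd : Dense X) (h : X ≃ₜ X) :
    ∃ (G : Set Cantor) (ψ : Cantor → Cantor), IsGδ G ∧ X ⊆ G ∧ ContinuousOn ψ G ∧
      (∀ x ∈ G, x ∈ X ↔ ψ x ∈ X) ∧ ∀ x : X, ψ x = h x := by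
  obtain ⟨G1, f, hG1, hX1, hf, hf'⟩ := exists_ext hd (fun x => (h x : Cantor))
    (continuous_subtype_val.comp h.continuous)
  obtain ⟨G2, g, hG2, hX2, hg, hg'⟩ := exists_ext hd (fun x => (h.symm x : Cantor))
    (continuous_subtype_val.comp h.symm.continuous)
  have hc : ContinuousOn (g ∘ f) (G1 ∩ f ⁻¹' G2) :=
    hg.comp (hf.mono inter_subset_left) (fun x hx => hx.2)
  refine ⟨_, f, isGδ_fix (isGδ_preimage hG1 hf hG2) hc, ?_,
    hf.mono (fun x hx => hx.1.1), ?_, hf'⟩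
  · intro x hx
    have e := hf' ⟨x, hx⟩
    simp only at e
    refine ⟨⟨hX1 hx, ?_⟩, ?_⟩
    · rw [mem_preimage, e]; exact hX2 (h ⟨x, hx⟩).2
    · have e2 := hg' (h ⟨x, hx⟩)
      simp only [mem_setOf_eq, Function.comp]
      rw [e, e2]; simp
  · rintro x ⟨⟨h1, h2⟩, h3⟩
    constructor
    · intro hx
      have e := hf' ⟨x, hx⟩
      simp only at e
      rw [e]; exact (h ⟨x, hx⟩).2
    · intro hx
      have e2 := hg' ⟨f x, hx⟩
      have h3' : g (f x) = x := h3
      simp only at e2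
      rw [← h3', e2]
      exact Subtype.coe_prop _

/-- Local exact reductions. -/
def LRed (X C U : Set Cantor) : Prop :=
  ∃ (G : Set Cantor) (ψ : Cantor → Cantor), IsGδ G ∧ X ∩ C ⊆ G ∧ ContinuousOn ψ G ∧
    MapsTo ψ G U ∧ (∀ x ∈ G, x ∈ X ↔ ψ x ∈ X)

lemma red_of_local {X U : Set Cantor} (C : ℕ → Set Cantor) (hC : ∀ i, IsClopen (C i))
    (hX : X ⊆ ⋃ i, C i) (h : ∀ i, LRed X (C i) U) : Red X false univ U := by
  choose G ψ hG hXG hψ hU hx using h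
  let ι : Cantor → ℕ := fun x => sInf {i | x ∈ C i}
  have hι : ∀ x, (∃ i, x ∈ C i) → x ∈ C (ι x) := fun x hx =>
    Nat.sInf_mem (s := {i | x ∈ C i}) hx
  have hι2 : ∀ x j, x ∈ C j → ι x ≤ j := fun x j hj => Nat.sInf_le hj
  let D : ℕ → Set Cantor := fun i => C i \ ⋃ j ∈ Iio i, C j
  have hD : ∀ i, IsClopen (D i) := fun i =>
    (hC i).diff ((finite_Iio i).isClopen_biUnion fun j _ => hC j)
  have hmD : ∀ i x, x ∈ D i ↔ (∃ j, x ∈ C j) ∧ ι x = i := by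
    intro i x
    simp only [D, mem_diff, mem_iUnion, mem_Iio, not_exists]
    constructor
    · rintro ⟨h1, h2⟩
      refine ⟨⟨i, h1⟩, ?_⟩
      by_contra hne
      exact h2 (ι x) (lt_of_le_of_ne (hι2 x i h1) hne) (hι x ⟨i, h1⟩)
    · rintro ⟨h1, rfl⟩
      refine ⟨hι x h1, fun j hj h3 => ?_⟩
      have := hι2 x j h3
      omega
  refine ⟨(⋃ i, C i) ∩ ⋂ i, ((D i)ᶜ ∪ G i), fun x => ψ (ι x) x, ?_, fun _ _ => trivial,
    ?_, ?_, ?_, ?_⟩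
  · refine (isOpen_iUnion fun i => (hC i).2).isGδ.inter (IsGδ.iInter fun i => ?_)
    exact (hD i).compl.2.isGδ.union (hG i)
  · rintro x ⟨h1, h2⟩
    have hxD : x ∈ D (ι x) := (hmD _ _).2 ⟨mem_iUnion.1 h1, rfl⟩
    have key : ∀ y ∈ (⋃ i, C i) ∩ ⋂ i, ((D i)ᶜ ∪ G i), y ∈ G (ι y) := by
      intro y hy
      rcases mem_iInter.1 hy.2 (ι y) with h | h
      · exact absurd ((hmD _ _).2 ⟨mem_iUnion.1 hy.1, rfl⟩) h
      · exact h
    have c1 : ContinuousWithinAt (ψ (ι x))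
        (((⋃ i, C i) ∩ ⋂ i, ((D i)ᶜ ∪ G i)) ∩ D (ι x)) x := by
      refine (hψ (ι x) x (key x ⟨h1, h2⟩)).mono ?_
      rintro y ⟨hy, hy2⟩
      have := key y hy
      rwa [((hmD _ _).1 hy2).2] at this
    have c2 := c1.congr (g := fun x => ψ (ι x) x) (fun y hy => by
      rw [((hmD _ _).1 hy.2).2]) rfl
    exact (continuousWithinAt_inter ((hD (ι x)).2.mem_nhds hxD)).1 c2
  · rintro x ⟨h1, h2⟩
    rcases mem_iInter.1 h2 (ι x) with h | h
    · exact absurd ((hmD _ _).2 ⟨mem_iUnion.1 h1, rfl⟩) h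
    · exact hU _ h
  · rintro x ⟨h1, h2⟩
    rcases mem_iInter.1 h2 (ι x) with h | h
    · exact absurd ((hmD _ _).2 ⟨mem_iUnion.1 h1, rfl⟩) h
    · rw [tw_false]; exact hx _ _ h
  · convert DD.empty using 1
    rw [eq_empty_iff_forall_notMem]
    rintro x ⟨⟨h1, -⟩, h2⟩
    refine h2 ⟨hX h1, mem_iInter.2 fun i => ?_⟩
    by_cases h3 : x ∈ D i
    · exact Or.inr (hXG i ⟨h1, h3.1⟩)
    · exact Or.inl h3

lemma red_keep {X : Set Cantor} (hd : Dense X) (hh : IsHomogeneous X) (z : Cantor) (n : ℕ) :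
    Red X false univ (cyl z n) := by
  have h1 : ∀ p ∈ X, ∃ m, LRed X (cyl p m) (cyl z n) := by
    intro p hp
    obtain ⟨q, hq, hq2⟩ := hd.exists_mem_open (isClopen_cyl z n).2 ⟨z, self_mem_cyl _ _⟩
    obtain ⟨h, hpq⟩ := hh ⟨p, hp⟩ ⟨q, hq⟩
    obtain ⟨G, ψ, hG, hX, hψ, hx, he⟩ := lavrentiev hd h
    have ep : ψ p = q := by rw [he ⟨p, hp⟩, hpq]
    have := (hψ p (hX hp)) ((isClopen_cyl z n).2.mem_nhds (by rw [ep]; exact hq2))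
    obtain ⟨V, hV, hpV, hV2⟩ := mem_nhdsWithin.1 this
    obtain ⟨m, hm⟩ := exists_cyl_subset hV hpV
    refine ⟨m, G ∩ ψ ⁻¹' (cyl z n), ψ, isGδ_preimage hG hψ (isClopen_cyl z n).2.isGδ, ?_,
      hψ.mono inter_subset_left, fun x hx => hx.2, fun x hx' => hx x hx'.1⟩
    rintro x ⟨hx1, hx2⟩
    exact ⟨hX hx1, hV2 ⟨hm hx2, hX hx1⟩⟩
  obtain ⟨p0, hp0⟩ := hd.nonempty
  let I := {p : ℕ × ℕ // LRed X (cyl (dseq p.1) p.2) (cyl z n)}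
  have h2 : ∀ p ∈ X, ∃ i : I, p ∈ cyl (dseq i.1.1) i.1.2 := by
    intro p hp
    obtain ⟨m, hm⟩ := h1 p hp
    obtain ⟨i, hi⟩ := exists_dseq p m
    refine ⟨⟨(i, m), ?_⟩, hi⟩
    rwa [← cyl_eq hi]
  haveI : Nonempty I := ⟨(h2 p0 hp0).choose⟩
  obtain ⟨f, hf⟩ := exists_surjective_nat I
  refine red_of_local (fun k => cyl (dseq (f k).1.1) (f k).1.2) (fun k => isClopen_cyl _ _) ?_
    (fun k => (f k).2)
  intro p hp
  obtain ⟨i, hi⟩ := h2 p hp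
  obtain ⟨k, rfl⟩ := hf i
  exact mem_iUnion.2 ⟨k, hi⟩

/-- Infinitely often. -/
def io (P : ℕ → Prop) : Prop := ∀ N, ∃ n, N ≤ n ∧ P n

lemma isGδ_io (c : Cantor → ℕ → Fin 3) (hc : Continuous c) (s : Set (Fin 3)) :
    IsGδ {v | io fun n => c v n ∈ s} := by
  have : {v | io fun n => c v n ∈ s} = ⋂ N : ℕ, ⋃ n : Ici N, {v | c v n ∈ s} := by
    ext v; simp [io]
  rw [this]
  refine IsGδ.iInter fun N => IsOpen.isGδ (isOpen_iUnion fun n => ?_)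
  exact (isOpen_discrete s).preimage ((continuous_apply (n : ℕ)).comp hc)

lemma red_flip {X Y : Set Cantor} (hY : Y = X ∨ Y = Xᶜ) (z : Cantor) (n : ℕ)
    (x : Cantor → Cantor) (hx : Continuous x) (c : Cantor → ℕ → Fin 3) (hc : Continuous c)
    (h : ∀ v ∈ cyl z n, (v ∈ Y ↔
      ¬ ((io (fun k => c v k = 2) ∧ x v ∈ Y) ∨ ¬ io (fun k => c v k ≠ 1)))) :
    Red X true (cyl z n) univ := by
  have g2 : IsGδ {v | io fun k => c v k = 2} := isGδ_io c hc {2}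
  have g1 : IsGδ {v | io fun k => c v k ≠ 1} := isGδ_io c hc {1}ᶜ
  have h21 : ∀ v, (io fun k => c v k = 2) → (io fun k => c v k ≠ 1) := by
    intro v hv N
    obtain ⟨k, hk, hk2⟩ := hv N
    exact ⟨k, hk, by show c v k ≠ 1; rw [hk2]; decide⟩
  refine ⟨cyl z n ∩ {v | io fun k => c v k = 2}, x, (isClopen_cyl z n).2.isGδ.inter g2,
    inter_subset_left, hx.continuousOn, fun _ _ => trivial, ?_, ?_⟩
  · rintro v ⟨hv, hv2⟩
    have h1 := h v hv
    have hv2' : io fun k => c v k = 2 := hv2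
    have h3 := h21 v hv2'
    rw [tw_true]
    rcases hY with rfl | rfl
    · tauto
    · simp only [mem_compl_iff] at h1
      tauto
  · have dV : DD (cyl z n) := DD.of_isClosed (isClopen_cyl z n).1
    rcases hY with rfl | rfl
    · convert (dV.diff (DD.of_isGδ g2)).inter (DD.of_isGδ g1) using 1
      ext v
      simp only [mem_inter_iff, mem_diff, mem_setOf_eq]
      constructor
      · rintro ⟨⟨h1, h2⟩, h3⟩
        have := h v h2; tauto
      · rintro ⟨⟨h1, h2⟩, h3⟩
        have := h v h1; tauto
    · convert (dV.diff (DD.of_isGδ g2)).diff (DD.of_isGδ g1) using 1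
      ext v
      simp only [mem_inter_iff, mem_diff, mem_setOf_eq]
      constructor
      · rintro ⟨⟨h1, h2⟩, h3⟩
        have := h v h2
        simp only [mem_compl_iff] at this; tauto
      · rintro ⟨⟨h1, h2⟩, h3⟩
        have := h v h1
        simp only [mem_compl_iff] at this; tauto

end CH


open Set

namespace CH

section LemmaC

variable (X : Set Cantor) (G : ℕ × ℕ × Bool → Set Cantor) (ψ : ℕ × ℕ × Bool → Cantor → Cantor)

/-- Domains of iterated compositions. -/
def dom : List (ℕ × ℕ × Bool) → Set Cantor
  | [] => univ
  | a :: w => G a ∩ ψ a ⁻¹' dom w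

lemma dom_gd (hG : ∀ a, IsGδ (G a)) (hψ : ∀ a, ContinuousOn (ψ a) (G a)) (w) :
    IsGδ (dom G ψ w) := by
  induction w with
  | nil => exact IsGδ.univ
  | cons a w ih => exact isGδ_preimage (hG a) (hψ a) ih

lemma dom_dd (hG : ∀ a, IsGδ (G a)) (hψ : ∀ a, ContinuousOn (ψ a) (G a))
    (hx : ∀ a, ∀ x ∈ G a, x ∈ X ↔ tw a.2.2 (ψ a x ∈ X)) (hd : ∀ a, DD (X \ G a)) (w) :
    DD (X \ dom G ψ w) := by
  induction w with
  | nil => convert DD.empty using 1; ext x; simp [dom]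
  | cons a w ih =>
    have hE : DD ((dom G ψ w)ᶜ ∩ {y | tw a.2.2 (y ∈ X)}) := by
      cases a.2.2 with
      | false =>
        convert ih using 1
        ext y; simp only [tw_false, mem_inter_iff, mem_diff, mem_setOf_eq, mem_compl_iff]; tauto
      | true =>
        convert (DD.of_isGδ (dom_gd G ψ hG hψ w)).compl.diff ih using 1
        ext y; simp only [tw_true, mem_inter_iff, mem_diff, mem_setOf_eq, mem_compl_iff]; tauto
    convert (hd a).union (DD.preimage (hG a) (hψ a) hE) using 1
    ext x
    simp only [dom, mem_inter_iff, mem_diff, mem_union, mem_preimage, mem_setOf_eq,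
      mem_compl_iff]
    constructor
    · rintro ⟨h1, h3⟩
      by_cases h4 : x ∈ G a
      · exact Or.inr ⟨h4, fun h5 => h3 ⟨h4, h5⟩, (hx a x h4).1 h1⟩
      · exact Or.inl ⟨h1, h4⟩
    · rintro (⟨h1, h3⟩ | ⟨h1, h2, h3⟩)
      · exact ⟨h1, fun h => h3 h.1⟩
      · exact ⟨(hx a x h1).2 h3, fun h => h2 h.2⟩

lemma exists_core (hG : ∀ a, IsGδ (G a)) (hψ : ∀ a, ContinuousOn (ψ a) (G a))
    (hx : ∀ a, ∀ x ∈ G a, x ∈ X ↔ tw a.2.2 (ψ a x ∈ X)) (hd : ∀ a, DD (X \ G a))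
    (hX : ¬ DD X) :
    ∃ T : Set Cantor, IsGδ T ∧ T.Nonempty ∧ (∀ a, T ⊆ G a) ∧ ∀ a, MapsTo (ψ a) T T := by
  refine ⟨⋂ w, dom G ψ w, IsGδ.iInter (dom_gd G ψ hG hψ), ?_, ?_, ?_⟩
  · by_contra hne
    rw [not_nonempty_iff_eq_empty] at hne
    apply hX
    choose O hO hO2 using fun w => isGδ_iff_eq_iInter_nat.1 (dom_gd G ψ hG hψ w)
    refine DD.patch (fun p : List (ℕ × ℕ × Bool) × ℕ => (O p.1 p.2)ᶜ)
      (fun p => (hO _ _).isClosed_compl) (fun x => ?_) (fun p => ?_)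
    · have : x ∉ ⋂ w, dom G ψ w := by rw [hne]; simp
      simp only [mem_iInter, not_forall] at this
      obtain ⟨w, hw⟩ := this
      rw [hO2 w] at hw
      simp only [mem_iInter, not_forall] at hw
      obtain ⟨k, hk⟩ := hw
      exact ⟨(w, k), hk⟩
    · convert (dom_dd X G ψ hG hψ hx hd p.1).inter
        (DD.of_isClosed (hO p.1 p.2).isClosed_compl) using 1
      ext x
      simp only [mem_inter_iff, mem_compl_iff, mem_diff]
      constructor
      · rintro ⟨h1, h2⟩
        refine ⟨⟨h1, fun h => h2 ?_⟩, h2⟩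
        rw [hO2 p.1] at h
        exact mem_iInter.1 h _
      · rintro ⟨h1, h2⟩; exact ⟨h1.1, h2⟩
  · intro a x h
    exact (mem_iInter.1 h [a]).1
  · intro a x h
    exact mem_iInter.2 fun w => (mem_iInter.1 h (a :: w)).2

end LemmaC

lemma exists_dseq_fun : ∃ i : Cantor → ℕ → ℕ, ∀ x n, x ∈ cyl (dseq (i x n)) n := by
  choose i hi using exists_dseq
  exact ⟨i, hi⟩

lemma baire_loc {W : Set Cantor} (hW : @MeasurableSet Cantor (borel Cantor) W) :
    IsMeagre W ∨ ∃ v n, IsMeagre (cyl v n \ W) := by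
  letI : MeasurableSpace Cantor := borel Cantor
  haveI : BorelSpace Cantor := ⟨rfl⟩
  obtain ⟨U, hU, hWU⟩ := MeasurableSet.residualEq_isOpen hW
  by_cases hne : U.Nonempty
  · right
    obtain ⟨v, hv⟩ := hne
    obtain ⟨n, hn⟩ := exists_cyl_subset hU hv
    refine ⟨v, n, ?_⟩
    rw [IsMeagre]
    filter_upwards [hWU] with x hx hx2
    have e : x ∈ W ↔ x ∈ U := iff_of_eq hx
    exact hx2.2 (e.2 (hn hx2.1))
  · left
    rw [not_nonempty_iff_eq_empty] at hne
    rw [IsMeagre]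
    filter_upwards [hWU] with x hx hx2
    have e : x ∈ W ↔ x ∈ U := iff_of_eq hx
    rw [hne] at e
    exact e.1 hx2

lemma cyl_not_meagre (v : Cantor) (n : ℕ) : ¬ IsMeagre (cyl v n) := by
  intro h
  rw [IsMeagre] at h
  have := dense_of_mem_residual h
  obtain ⟨y, hy1, hy2⟩ := this.exists_mem_open (isClopen_cyl v n).2 ⟨v, self_mem_cyl _ _⟩
  exact hy1 hy2

lemma isMeagre_homeo {W : Set Cantor} (h : Cantor ≃ₜ Cantor) (hW : IsMeagre W) :
    IsMeagre (h ⁻¹' W) :=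
  hW.preimage_of_isOpenMap h.continuous h.isOpenMap

/-- Flip bit `n`. -/
def flipBit (n : ℕ) (x : Cantor) : Cantor := fun i => if i = n then !(x i) else x i

lemma flipBit_flipBit (n : ℕ) (x : Cantor) : flipBit n (flipBit n x) = x := by
  funext i; by_cases h : i = n <;> simp [flipBit, h]

lemma continuous_flipBit (n : ℕ) : Continuous (flipBit n) := by
  refine continuous_coord fun x k => ⟨k + 1, fun y hy => ?_⟩
  simp [flipBit, hy k (Nat.lt_succ_self k)]

/-- Bit flip as a homeomorphism. -/
def flipHomeo (n : ℕ) : Cantor ≃ₜ Cantor where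
  toFun := flipBit n
  invFun := flipBit n
  left_inv := flipBit_flipBit n
  right_inv := flipBit_flipBit n
  continuous_toFun := continuous_flipBit n
  continuous_invFun := continuous_flipBit n

lemma no_flip_set {W : Set Cantor} (hW : @MeasurableSet Cantor (borel Cantor) W)
    (h : ∀ n x, flipBit n x ∈ W ↔ x ∉ W) : False := by
  rcases baire_loc hW with h1 | ⟨v, n, h1⟩
  · have h2 := isMeagre_homeo (flipHomeo 0) h1
    refine cyl_not_meagre (fun _ => false) 0 ((h1.union h2).mono ?_)
    intro x _
    by_cases hx : x ∈ W
    · exact Or.inl hx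
    · exact Or.inr ((h 0 x).2 hx)
  · have h2 := isMeagre_homeo (flipHomeo n) h1
    refine cyl_not_meagre v n ((h1.union h2).mono ?_)
    intro x hxc
    by_cases hx : x ∈ W
    · right
      refine ⟨fun i hi => ?_, ?_⟩
      · change flipBit n x i = v i
        rw [flipBit, if_neg (by omega), hxc i hi]
      · change flipBit n x ∉ W
        rw [h]; exact not_not.2 hx
    · exact Or.inl ⟨hxc, hx⟩

section MM

variable (T : Set Cantor) (O : ℕ → Set Cantor) (p : Cantor) (g : ℕ → Bool → Cantor → Cantor)

/-- The requirement on the next modulus. -/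
def Mreq (n : ℕ) (L : List (Cantor → Cantor)) (m : ℕ) : Prop :=
  ∀ F ∈ L, ∃ r, n ≤ r ∧ (∀ j ≤ n, cyl (F p) r ⊆ O j) ∧ ∀ x ∈ T ∩ cyl p m, F x ∈ cyl (F p) r

open Classical in
/-- A chosen modulus. -/
noncomputable def Mod (n : ℕ) (L : List (Cantor → Cantor)) : ℕ :=
  if h : ∃ m, Mreq T O p n L m then h.choose else 0

/-- The stages. -/
noncomputable def stg : ℕ → List (Cantor → Cantor)
  | 0 => [id]
  | n + 1 => id :: (stg n).flatMap
      (fun F => [F ∘ g (Mod T O p n (stg n)) true, F ∘ g (Mod T O p n (stg n)) false])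

/-- The chosen maps. -/
noncomputable def gg (n : ℕ) (ε : Bool) : Cantor → Cantor :=
  g (Mod T O p n (stg T O p g n)) ε

/-- Compositions. -/
noncomputable def Fc (z : Cantor) (k : ℕ) : ℕ → Cantor → Cantor
  | 0 => id
  | d + 1 => Fc z k d ∘ gg T O p g (k + d) (z (k + d))

variable {T O p g}

lemma Fc_mem (z : Cantor) (k d : ℕ) : Fc T O p g z k d ∈ stg T O p g (k + d) := by
  induction d with
  | zero => cases k <;> simp [Fc, stg]
  | succ d ih =>
    rw [← Nat.add_assoc, stg, Fc]
    refine List.mem_cons_of_mem _ (List.mem_flatMap.2 ⟨_, ih, ?_⟩)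
    cases h : z (k + d) <;> simp [gg]

lemma Fc_succ (z : Cantor) (k d : ℕ) :
    Fc T O p g z k (d + 1) = gg T O p g k (z k) ∘ Fc T O p g z (k + 1) d := by
  induction d with
  | zero => simp [Fc]
  | succ d ih =>
    rw [Fc, ih, Fc, Function.comp_assoc, show k + (d + 1) = k + 1 + d by omega]

lemma Fc_add (z : Cantor) (k d e : ℕ) :
    Fc T O p g z k (d + e) = Fc T O p g z k d ∘ Fc T O p g z (k + d) e := by
  induction e with
  | zero => simp [Fc]
  | succ e ih =>
    rw [← Nat.add_assoc, Fc, ih, Fc, Function.comp_assoc, Nat.add_assoc]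

lemma Fc_congr (z z' : Cantor) (k d : ℕ) (h : ∀ j, k ≤ j → j < k + d → z j = z' j) :
    Fc T O p g z k d = Fc T O p g z' k d := by
  induction d with
  | zero => rfl
  | succ d ih =>
    rw [Fc, Fc, ih (fun j h1 h2 => h j h1 (by omega)), h (k + d) (by omega) (by omega)]

lemma stg_good (hg1 : ∀ m ε, ContinuousOn (g m ε) T)
    (hg2 : ∀ m ε, MapsTo (g m ε) T T)
    (n : ℕ) : ∀ F ∈ stg T O p g n, ContinuousOn F T ∧ MapsTo F T T := by
  induction n with
  | zero =>
    intro F hF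
    simp only [stg, List.mem_singleton] at hF
    subst hF
    exact ⟨continuousOn_id, mapsTo_id _⟩
  | succ n ih =>
    intro F hF
    rw [stg, List.mem_cons, List.mem_flatMap] at hF
    rcases hF with rfl | ⟨F', hF', h⟩
    · exact ⟨continuousOn_id, mapsTo_id _⟩
    · obtain ⟨h1, h2⟩ := ih F' hF'
      simp only [List.mem_cons, List.not_mem_nil, or_false] at h
      rcases h with rfl | rfl
      · exact ⟨h1.comp (hg1 _ _) (hg2 _ _), h2.comp (hg2 _ _)⟩
      · exact ⟨h1.comp (hg1 _ _) (hg2 _ _), h2.comp (hg2 _ _)⟩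

lemma exists_mod (hT : T = ⋂ n, O n)
    (hO : ∀ n, IsOpen (O n))
    (hp : p ∈ T)
    (n : ℕ) (L : List (Cantor → Cantor))
    (hL : ∀ F ∈ L, ContinuousOn F T ∧ MapsTo F T T) : ∃ m, Mreq T O p n L m := by
  induction L with
  | nil => exact ⟨0, fun F hF => absurd hF (by simp)⟩
  | cons F L ih =>
    obtain ⟨m1, hm1⟩ := ih (fun F hF => hL F (List.mem_cons_of_mem _ hF))
    obtain ⟨hc, hm⟩ := hL F (by simp)
    have hFp : F p ∈ ⋂ j ∈ Iic n, O j := by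
      have := hm hp
      rw [hT] at this
      exact mem_iInter₂.2 fun j _ => mem_iInter.1 this j
    obtain ⟨r0, hr0⟩ := exists_cyl_subset
      ((finite_Iic n).isOpen_biInter fun j _ => hO j) hFp
    have := hc p hp (cyl_nhds (F p) (max n r0))
    obtain ⟨V, hV, hpV, hV2⟩ := mem_nhdsWithin.1 this
    obtain ⟨m2, hm2⟩ := exists_cyl_subset hV hpV
    refine ⟨max m1 m2, fun F' hF' => ?_⟩
    rcases List.mem_cons.1 hF' with rfl | hF'
    · refine ⟨max n r0, le_max_left _ _, fun j hj => ?_, ?_⟩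
      · exact ((cyl_anti _ (le_max_right _ _)).trans hr0).trans (biInter_subset_of_mem hj)
      · rintro x ⟨hx1, hx2⟩
        exact hV2 ⟨hm2 (cyl_anti _ (le_max_right _ _) hx2), hx1⟩
    · obtain ⟨r, h1, h2, h3⟩ := hm1 F' hF'
      exact ⟨r, h1, h2, fun x hx => h3 x ⟨hx.1, cyl_anti _ (le_max_left _ _) hx.2⟩⟩

lemma mod_spec (hT : T = ⋂ n, O n)
    (hO : ∀ n, IsOpen (O n))
    (hp : p ∈ T)
    (hg1 : ∀ m ε, ContinuousOn (g m ε) T)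
    (hg2 : ∀ m ε, MapsTo (g m ε) T T)
    (n : ℕ) :
    Mreq T O p n (stg T O p g n) (Mod T O p n (stg T O p g n)) := by
  have h := exists_mod hT hO hp n _ (stg_good (O := O) (p := p) hg1 hg2 n)
  rw [Mod, dif_pos h]
  exact h.choose_spec

lemma Fc_spec (hT : T = ⋂ n, O n)
    (hO : ∀ n, IsOpen (O n))
    (hp : p ∈ T)
    (hg1 : ∀ m ε, ContinuousOn (g m ε) T)
    (hg2 : ∀ m ε, MapsTo (g m ε) T T)
    (hg3 : ∀ m ε, ∀ x ∈ T, g m ε x ∈ cyl p m)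
    (z : Cantor) (k d : ℕ) : ∃ r, k + d ≤ r ∧
    (∀ j ≤ k + d, cyl (Fc T O p g z k d p) r ⊆ O j) ∧
    ∀ e, d ≤ e → Fc T O p g z k e p ∈ cyl (Fc T O p g z k d p) r := by
  obtain ⟨r, h1, h2, h3⟩ := mod_spec hT hO hp hg1 hg2 (k + d) _ (Fc_mem z k d)
  refine ⟨r, h1, h2, fun e he => ?_⟩
  obtain ⟨e, rfl⟩ := Nat.exists_eq_add_of_le he
  rw [Fc_add]
  cases e with
  | zero => exact self_mem_cyl _ _
  | succ e =>
    refine h3 _ ?_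
    rw [Fc_succ]
    have : Fc T O p g z (k + d + 1) e p ∈ T :=
      (stg_good hg1 hg2 _ _ (Fc_mem z (k + d + 1) e)).2 hp
    exact ⟨hg2 _ _ this, hg3 _ _ _ this⟩

/-- The limit points. -/
noncomputable def Lm (T : Set Cantor) (O : ℕ → Set Cantor) (p : Cantor)
    (g : ℕ → Bool → Cantor → Cantor) (z : Cantor) (k : ℕ) : Cantor :=
  fun i => Fc T O p g z k (i + 1) p i

lemma Lm_eq (hT : T = ⋂ n, O n)
    (hO : ∀ n, IsOpen (O n))
    (hp : p ∈ T)
    (hg1 : ∀ m ε, ContinuousOn (g m ε) T)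
    (hg2 : ∀ m ε, MapsTo (g m ε) T T)
    (hg3 : ∀ m ε, ∀ x ∈ T, g m ε x ∈ cyl p m)
    (z : Cantor) (k i e : ℕ) (h : i + 1 ≤ e) :
    Lm T O p g z k i = Fc T O p g z k e p i := by
  obtain ⟨r, h1, h2, h3⟩ := Fc_spec hT hO hp hg1 hg2 hg3 z k (i + 1)
  exact (h3 e h i (by omega)).symm

lemma Lm_mem (hT : T = ⋂ n, O n)
    (hO : ∀ n, IsOpen (O n))
    (hp : p ∈ T)
    (hg1 : ∀ m ε, ContinuousOn (g m ε) T)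
    (hg2 : ∀ m ε, MapsTo (g m ε) T T)
    (hg3 : ∀ m ε, ∀ x ∈ T, g m ε x ∈ cyl p m)
    (z : Cantor) (k : ℕ) : Lm T O p g z k ∈ T := by
  suffices hs : ∀ j, Lm T O p g z k ∈ O j by
    have := mem_iInter.2 hs
    rwa [← hT] at this
  intro j
  obtain ⟨r, h1, h2, h3⟩ := Fc_spec hT hO hp hg1 hg2 hg3 z k j
  apply h2 j (by omega)
  intro i hi
  rw [Lm_eq hT hO hp hg1 hg2 hg3 z k i (max j (i + 1)) (le_max_right _ _)]
  exact h3 _ (le_max_left _ _) i hi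

lemma Lm_tendsto (hT : T = ⋂ n, O n)
    (hO : ∀ n, IsOpen (O n))
    (hp : p ∈ T)
    (hg1 : ∀ m ε, ContinuousOn (g m ε) T)
    (hg2 : ∀ m ε, MapsTo (g m ε) T T)
    (hg3 : ∀ m ε, ∀ x ∈ T, g m ε x ∈ cyl p m)
    (z : Cantor) (k : ℕ) :
    Filter.Tendsto (fun d => Fc T O p g z k d p) Filter.atTop (nhds (Lm T O p g z k)) := by
  rw [tendsto_pi_nhds]
  intro i
  refine tendsto_nhds_of_eventually_eq ?_
  filter_upwards [Filter.eventually_ge_atTop (i + 1)] with e he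
  exact (Lm_eq hT hO hp hg1 hg2 hg3 z k i e he).symm

lemma Lm_succ (hT : T = ⋂ n, O n)
    (hO : ∀ n, IsOpen (O n))
    (hp : p ∈ T)
    (hg1 : ∀ m ε, ContinuousOn (g m ε) T)
    (hg2 : ∀ m ε, MapsTo (g m ε) T T)
    (hg3 : ∀ m ε, ∀ x ∈ T, g m ε x ∈ cyl p m)
    (z : Cantor) (k : ℕ) :
    Lm T O p g z k = gg T O p g k (z k) (Lm T O p g z (k + 1)) := by
  have t1 := (Filter.tendsto_add_atTop_iff_nat 1).2 (Lm_tendsto hT hO hp hg1 hg2 hg3 z k)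
  have t2 := Lm_tendsto hT hO hp hg1 hg2 hg3 z (k + 1)
  have c : ContinuousWithinAt (gg T O p g k (z k)) T (Lm T O p g z (k + 1)) :=
    hg1 _ _ _ (Lm_mem hT hO hp hg1 hg2 hg3 z (k + 1))
  have t3 : Filter.Tendsto (fun d => Fc T O p g z (k + 1) d p) Filter.atTop
      (nhdsWithin (Lm T O p g z (k + 1)) T) := by
    refine tendsto_nhdsWithin_iff.2 ⟨t2, Filter.Eventually.of_forall fun d => ?_⟩
    exact (stg_good hg1 hg2 _ _ (Fc_mem z (k + 1) d)).2 hp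
  have t4 := c.tendsto.comp t3
  refine tendsto_nhds_unique t1 ?_
  convert t4 using 2 with d
  rw [Fc_succ]; rfl

lemma mm_contra (hT : T = ⋂ n, O n)
    (hO : ∀ n, IsOpen (O n))
    (hp : p ∈ T)
    (hg1 : ∀ m ε, ContinuousOn (g m ε) T)
    (hg2 : ∀ m ε, MapsTo (g m ε) T T)
    (hg3 : ∀ m ε, ∀ x ∈ T, g m ε x ∈ cyl p m)
    {X : Set Cantor} (hX : @MeasurableSet Cantor (borel Cantor) X)
    (hgX : ∀ m ε, ∀ x ∈ T, x ∈ X ↔ tw ε (g m ε x ∈ X)) : False := by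
  have hcont : Continuous (fun z => Lm T O p g z 0) := by
    refine continuous_coord fun z i => ⟨i + 1, fun z' hz' => ?_⟩
    simp only [Lm]
    rw [Fc_congr z' z 0 (i + 1) (fun j _ hj => hz' j (by omega))]
  have hrec : ∀ z k, Lm T O p g z (k + 1) ∈ X ↔ tw (z k) (Lm T O p g z k ∈ X) := by
    intro z k
    rw [Lm_succ hT hO hp hg1 hg2 hg3 z k]
    exact hgX _ _ _ (Lm_mem hT hO hp hg1 hg2 hg3 z (k + 1))
  have htw : ∀ b p q, tw b p → tw b q → (p ↔ q) := by
    intro b p q h1 h2; cases b <;> simp_all [tw]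
  refine no_flip_set (W := {z | Lm T O p g z 0 ∈ X}) ?_ ?_
  · letI : MeasurableSpace Cantor := borel Cantor
    haveI : BorelSpace Cantor := ⟨rfl⟩
    exact hcont.measurable hX
  · intro n z
    have h1 : Lm T O p g (flipBit n z) (n + 1) = Lm T O p g z (n + 1) := by
      funext i
      simp only [Lm]
      rw [Fc_congr (flipBit n z) z (n + 1) (i + 1)
        (fun j hj _ => by rw [flipBit, if_neg (by omega)])]
    have h2 : Lm T O p g (flipBit n z) n ∈ X ↔ ¬ Lm T O p g z n ∈ X := by
      have a := hrec (flipBit n z) n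
      rw [h1, hrec z n] at a
      have e : flipBit n z n = !(z n) := by simp [flipBit]
      rw [e] at a
      cases hz : z n <;> rw [hz] at a <;> simp only [Bool.not_false, Bool.not_true, tw_false,
        tw_true] at a <;> tauto
    have h3 : ∀ d, d ≤ n → (Lm T O p g (flipBit n z) (n - d) ∈ X ↔
        ¬ Lm T O p g z (n - d) ∈ X) := by
      intro d
      induction d with
      | zero => intro _; simpa using h2
      | succ d ih =>
        intro hd
        have := ih (by omega)
        have e : n - d = (n - (d + 1)) + 1 := by omega
        rw [e, hrec, hrec] at this
        have e2 : flipBit n z (n - (d + 1)) = z (n - (d + 1)) := by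
          rw [flipBit, if_neg (by omega)]
        rw [e2] at this
        cases hz : z (n - (d + 1)) <;> rw [hz] at this <;> simp only [tw_false, tw_true] at this
          <;> tauto
    have := h3 n le_rfl
    simpa using this

end MM

lemma lemmaC {X : Set Cantor} (hB : @MeasurableSet Cantor (borel Cantor) X) (hX : ¬ DD X)
    (h : ∀ ε z n, Red X ε univ (cyl z n)) : False := by
  choose G ψ hG _ hψ hm hx hd using fun a : ℕ × ℕ × Bool => h a.2.2 (dseq a.1) a.2.1
  simp only [inter_univ] at hd
  obtain ⟨T, hT, ⟨p, hp⟩, hTG, hTT⟩ := exists_core X G ψ hG hψ hx hd hX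
  obtain ⟨O, hO, hTO⟩ := isGδ_iff_eq_iInter_nat.1 hT
  obtain ⟨i, hi⟩ := exists_dseq_fun
  refine mm_contra (T := T) (O := O) (p := p) (g := fun m ε => ψ (i p m, m, ε)) hTO hO hp
    (fun m ε => (hψ _).mono (hTG _)) (fun m ε => hTT _) (fun m ε x hxT => ?_) hB
    (fun m ε x hxT => hx (i p m, m, ε) x (hTG _ hxT))
  rw [cyl_eq (hi p m)]
  exact hm (i p m, m, ε) (hTG _ hxT)

end CH


open Set

namespace CH

/-- Moves of the game. -/
abbrev Mv := Bool × Fin 3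

/-- The play determined by a strategy and the opponent's moves. -/
def run (s : ∀ n, (Fin n → Mv) → Mv) (b : Bool) (o : ℕ → Mv) (n : ℕ) : Mv :=
  if Nat.bodd n = b then s n (fun i => run s b o i.1) else o n
termination_by n
decreasing_by exact i.2

lemma run_strat (s : ∀ n, (Fin n → Mv) → Mv) (b : Bool) (o : ℕ → Mv) (n : ℕ)
    (h : Nat.bodd n = b) : run s b o n = s n (fun i => run s b o i.1) := by
  rw [run, if_pos h]

lemma run_opp (s : ∀ n, (Fin n → Mv) → Mv) (b : Bool) (o : ℕ → Mv) (n : ℕ)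
    (h : Nat.bodd n ≠ b) : run s b o n = o n := by
  rw [run, if_neg h]

lemma run_congr (s : ∀ n, (Fin n → Mv) → Mv) (b : Bool) (o o' : ℕ → Mv) (n : ℕ)
    (h : ∀ i ≤ n, Nat.bodd i ≠ b → o i = o' i) : run s b o n = run s b o' n := by
  induction n using Nat.strong_induction_on with
  | _ n ih =>
    by_cases hb : Nat.bodd n = b
    · rw [run_strat _ _ _ _ hb, run_strat _ _ _ _ hb]
      congr 1
      funext i
      exact ih i.1 i.2 (fun j hj => h j (hj.trans i.2.le))
    · rw [run_opp _ _ _ _ hb, run_opp _ _ _ _ hb]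
      exact h n le_rfl hb

lemma bodd_even (k : ℕ) : Nat.bodd (2 * k) = false := by simp
lemma bodd_odd (k : ℕ) : Nat.bodd (2 * k + 1) = true := by simp

/-- Concatenation of the first `n` bits of `z` with `y`. -/
def glue (z : Cantor) (n : ℕ) (y : Cantor) : Cantor := fun k => if k < n then z k else y (k - n)

lemma glue_mem (z : Cantor) (n : ℕ) (y : Cantor) : glue z n y ∈ cyl z n := by
  intro i hi; simp [glue, hi]

lemma glue_tail {z v : Cantor} {n : ℕ} (h : v ∈ cyl z n) : glue z n (fun k => v (n + k)) = v := by
  funext k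
  by_cases hk : k < n
  · simp [glue, hk, h k hk]
  · simp only [glue, hk, if_false]
    congr 1; omega

lemma continuous_glue (z : Cantor) (n : ℕ) : Continuous (glue z n) := by
  refine continuous_coord fun x k => ⟨k + 1, fun y hy => ?_⟩
  simp only [glue]
  rw [hy (k - n) (by omega)]

lemma glue_injective (z : Cantor) (n : ℕ) : Function.Injective (glue z n) := by
  intro x y h
  funext k
  have := congrFun h (n + k)
  simpa [glue] using this

/-- The auxiliary payoff set. -/
def Astar (X : Set Cantor) (a : ℕ → Mv) : Prop :=
  (io (fun k => (a k).2 = 2) ∧ (fun k => (a k).1) ∈ X) ∨ ¬ io (fun k => (a k).2 ≠ 1)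

lemma measurable_game {X : Set Cantor} (hX : @MeasurableSet Cantor (borel Cantor) X)
    (z : Cantor) (n : ℕ) :
    @MeasurableSet (ℕ → Mv) (borel (ℕ → Mv)) {w | ¬ (Astar X (fun k => w (2 * k)) ↔
      glue z n (fun k => (w (2 * k + 1)).1) ∈ X)} := by
  letI m1 : MeasurableSpace Cantor := borel Cantor
  haveI : BorelSpace Cantor := ⟨rfl⟩
  letI m2 : MeasurableSpace (ℕ → Mv) := borel (ℕ → Mv)
  haveI : BorelSpace (ℕ → Mv) := ⟨rfl⟩
  have hio : ∀ s : Set (Fin 3), MeasurableSet {w : ℕ → Mv | io (fun k => (w (2 * k)).2 ∈ s)} := by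
    intro s
    have : {w : ℕ → Mv | io (fun k => (w (2 * k)).2 ∈ s)} =
        ⋂ N : ℕ, ⋃ n : Ici N, {w | (w (2 * n)).2 ∈ s} := by
      ext v; simp [io]
    rw [this]
    refine MeasurableSet.iInter fun N => MeasurableSet.iUnion fun n => IsOpen.measurableSet ?_
    exact (isOpen_discrete s).preimage (continuous_snd.comp (continuous_apply (2 * (n : ℕ))))
  have c1 : Continuous (fun w : ℕ → Mv => (fun k => (w (2 * k)).1 : Cantor)) :=
    continuous_pi fun k => continuous_fst.comp (continuous_apply (2 * k))
  have c2 : Continuous (fun w : ℕ → Mv => glue z n (fun k => (w (2 * k + 1)).1)) :=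
    (continuous_glue z n).comp
      (continuous_pi fun k => continuous_fst.comp (continuous_apply (2 * k + 1)))
  have h1 := c1.measurable hX
  have h2 := c2.measurable hX
  have ha : MeasurableSet {w : ℕ → Mv | Astar X (fun k => w (2 * k))} :=
    ((hio {2}).inter h1).union (hio {1}ᶜ).compl
  have : {w : ℕ → Mv | ¬ (Astar X (fun k => w (2 * k)) ↔
      glue z n (fun k => (w (2 * k + 1)).1) ∈ X)} =
      ({w : ℕ → Mv | Astar X (fun k => w (2 * k))} \
        ((fun w : ℕ → Mv => glue z n (fun k => (w (2 * k + 1)).1)) ⁻¹' X)) ∪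
      (((fun w : ℕ → Mv => glue z n (fun k => (w (2 * k + 1)).1)) ⁻¹' X) \
        {w : ℕ → Mv | Astar X (fun k => w (2 * k))}) := by
    ext w
    simp only [mem_setOf_eq, mem_union, mem_diff, mem_preimage]
    tauto
  rw [this]
  exact (ha.diff h2).union (h2.diff ha)

lemma causal_or_flip {X : Set Cantor} (hX : @MeasurableSet Cantor (borel Cantor) X)
    (z : Cantor) (n : ℕ) :
    Red X true (cyl z n) univ ∨ ∃ f : (ℕ → Mv) → Cantor,
      (∀ a a' k, (∀ i ≤ k, a i = a' i) → f a k = f a' k) ∧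
      ∀ a, Astar X a ↔ glue z n (f a) ∈ X := by
  rcases BD.borel_det Mv _ (measurable_game hX z n) with ⟨s, hs⟩ | ⟨s, hs⟩
  · left
    let o : Cantor → ℕ → Mv := fun v k => (v (n + k / 2), 0)
    have ho : ∀ v v' : Cantor, ∀ k, v' ∈ cyl v (n + 2 * k + 1) →
        run s false (o v') (2 * k) = run s false (o v) (2 * k) := by
      intro v v' k h
      refine run_congr _ _ _ _ _ fun i hi _ => ?_
      simp only [o]
      rw [h (n + i / 2) (by omega)]
    refine red_flip (Y := X) (Or.inl rfl) z n (fun v k => (run s false (o v) (2 * k)).1) ?_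
      (fun v k => (run s false (o v) (2 * k)).2) ?_ ?_
    · exact continuous_coord fun v k => ⟨n + 2 * k + 1, fun v' h => by rw [ho v v' k h]⟩
    · refine continuous_pi fun k => ?_
      rw [continuous_iff_continuousAt]
      intro v
      refine tendsto_nhds_of_eventually_eq ?_
      filter_upwards [cyl_nhds v (n + 2 * k + 1)] with v' h
      rw [ho v v' k h]
    · intro v hv
      have h1 := hs (run s false (o v)) (fun m hm => run_strat _ _ _ _ hm)
      have h2 : (fun k => (run s false (o v) (2 * k + 1)).1) = fun k => v (n + k) := by
        funext k
        rw [run_opp _ _ _ _ (by rw [bodd_odd]; decide)]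
        simp only [o]
        congr 1; omega
      simp only [mem_setOf_eq] at h1
      rw [h2, glue_tail hv, Astar] at h1
      tauto
  · right
    let o : (ℕ → Mv) → ℕ → Mv := fun a k => a (k / 2)
    refine ⟨fun a k => (run s true (o a) (2 * k + 1)).1, ?_, ?_⟩
    · intro a a' k h
      simp only
      rw [run_congr s true (o a) (o a')]
      intro i hi hb
      exact h _ (by omega)
    · intro a
      have h1 := hs (run s true (o a)) (fun m hm => run_strat _ _ _ _ hm)
      have h2 : (fun k => run s true (o a) (2 * k)) = a := by
        funext k
        rw [run_opp _ _ _ _ (by rw [bodd_even]; decide)]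
        simp [o]
      simp only [mem_setOf_eq, not_not] at h1
      rwa [h2] at h1

/-- The coding of `x` with markers in `S`. -/
noncomputable def Cd (S : Set ℕ) (x : Cantor) (k : ℕ) : Mv := by
  classical
  exact (x k, if k ∈ S then 2 else if x ((S ∩ Iio k).ncard) then 1 else 0)

lemma ncard_le (S : Set ℕ) (k : ℕ) : (S ∩ Iio k).ncard ≤ k := by
  have := ncard_le_ncard (inter_subset_right : S ∩ Iio k ⊆ Iio k) (finite_Iio k)
  simpa [ncard_eq_toFinset_card'] using this

lemma Cd_congr (S : Set ℕ) {x x' : Cantor} {m : ℕ} (h : x' ∈ cyl x (m + 1)) (k : ℕ)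
    (hk : k ≤ m) : Cd S x' k = Cd S x k := by
  have := ncard_le S k
  simp only [Cd]
  rw [h k (by omega), h ((S ∩ Iio k).ncard) (by omega)]

lemma Cd_congr_set {S S' : Set ℕ} {κ : ℕ} (h : S ∩ Iio κ = S' ∩ Iio κ) (x : Cantor) (k : ℕ)
    (hk : k < κ) : Cd S x k = Cd S' x k := by
  have h1 : S ∩ Iio k = S' ∩ Iio k := by
    ext j
    have := congrArg (j ∈ ·) h
    simp only [mem_inter_iff, mem_Iio, eq_iff_iff] at this ⊢
    constructor
    · rintro ⟨a, b⟩; exact ⟨(this.1 ⟨a, b.trans hk⟩).1, b⟩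
    · rintro ⟨a, b⟩; exact ⟨(this.2 ⟨a, b.trans hk⟩).1, b⟩
  have h2 : k ∈ S ↔ k ∈ S' := by
    have := congrArg (k ∈ ·) h
    simp only [mem_inter_iff, mem_Iio, hk, and_true, eq_iff_iff] at this
    exact this
  simp only [Cd]
  rw [h1]
  by_cases h3 : k ∈ S
  · rw [if_pos h3, if_pos (h2.1 h3)]
  · rw [if_neg h3, if_neg (fun h => h3 (h2.2 h))]

lemma astar_fin (X : Set Cantor) {S : Set ℕ} (hS : S.Finite) (x : Cantor) :
    Astar X (Cd S x) ↔ x S.ncard = true := by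
  obtain ⟨M, hM⟩ := hS.bddAbove
  have h0 : ∀ k, M + 1 ≤ k → (Cd S x k).2 = if x S.ncard then 1 else 0 := by
    intro k hk
    have h1 : k ∉ S := fun h => by have := hM h; omega
    have h2 : S ∩ Iio k = S := by
      refine inter_eq_left.2 fun j hj => ?_
      have := hM hj
      simp only [mem_Iio]; omega
    simp [Cd, h1, h2]
  have h2 : ¬ io (fun k => (Cd S x k).2 = 2) := by
    intro h
    obtain ⟨k, hk, hk2⟩ := h (M + 1)
    simp only [h0 k hk] at hk2
    split_ifs at hk2 <;> simp_all
  have h3 : io (fun k => (Cd S x k).2 ≠ 1) ↔ ¬ x S.ncard = true := by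
    constructor
    · intro h hx
      obtain ⟨k, hk, hk2⟩ := h (M + 1)
      simp only [h0 k hk, hx, if_true] at hk2
      exact hk2 rfl
    · intro hx N
      refine ⟨max N (M + 1), le_max_left _ _, ?_⟩
      simp only [h0 _ (le_max_right _ _), hx]
      decide
  rw [Astar, h3]
  tauto

lemma astar_inf (X : Set Cantor) {S : Set ℕ} (hS : S.Infinite) (x : Cantor) :
    Astar X (Cd S x) ↔ x ∈ X := by
  have h2 : io (fun k => (Cd S x k).2 = 2) := by
    intro N
    obtain ⟨k, hk, hk2⟩ := hS.exists_gt N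
    exact ⟨k, hk2.le, by simp [Cd, hk]⟩
  have h3 : io (fun k => (Cd S x k).2 ≠ 1) := by
    intro N
    obtain ⟨k, hk, hk2⟩ := h2 N
    exact ⟨k, hk, by show (Cd S x k).2 ≠ 1; rw [hk2]; decide⟩
  have h4 : (fun k => (Cd S x k).1) = x := by funext k; simp [Cd]
  rw [Astar, h4]
  tauto

section Emb
variable {X : Set Cantor} {z : Cantor} {n : ℕ} {f : (ℕ → Mv) → Cantor}

lemma cont_fCd (hf : ∀ a a' k, (∀ i ≤ k, a i = a' i) → f a k = f a' k)
    (S : Set ℕ) : Continuous (fun x => f (Cd S x)) :=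
  continuous_coord fun _ k => ⟨k + 1, fun _ hy => hf _ _ k fun i hi => Cd_congr S hy i hi⟩

lemma exists_kappa (hf : ∀ a a' k, (∀ i ≤ k, a i = a' i) → f a k = f a' k)
    (hA : ∀ a, Astar X a ↔ glue z n (f a) ∈ X)
    {S : Set ℕ} (hS : S.Finite) : ∃ κ, (∀ j ∈ S, j < κ) ∧
    ∀ x x' : Cantor, x S.ncard ≠ x' S.ncard → ∃ m < κ, f (Cd S x) m ≠ f (Cd S x') m := by
  obtain ⟨M, hM⟩ := hS.bddAbove
  let K : Set (Cantor × Cantor) := {p | p.1 S.ncard ≠ p.2 S.ncard}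
  have cK : IsClosed K := by
    have : K = (fun p : Cantor × Cantor => (p.1 S.ncard, p.2 S.ncard)) ⁻¹' {b | b.1 ≠ b.2} := rfl
    rw [this]
    refine (isClosed_discrete _).preimage ?_
    exact ((continuous_apply _).comp continuous_fst).prodMk
      ((continuous_apply _).comp continuous_snd)
  let U : ℕ → Set (Cantor × Cantor) := fun κ =>
    ⋃ m ∈ Iio κ, {p | f (Cd S p.1) m ≠ f (Cd S p.2) m}
  have hU : ∀ κ, IsOpen (U κ) := by
    intro κ
    refine isOpen_biUnion fun m _ => ?_
    have : {p : Cantor × Cantor | f (Cd S p.1) m ≠ f (Cd S p.2) m} =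
      (fun p : Cantor × Cantor => (f (Cd S p.1) m, f (Cd S p.2) m)) ⁻¹' {b | b.1 ≠ b.2} := rfl
    rw [this]
    refine (isOpen_discrete _).preimage ?_
    exact ((continuous_apply m).comp ((cont_fCd hf S).comp continuous_fst)).prodMk
      ((continuous_apply m).comp ((cont_fCd hf S).comp continuous_snd))
  have hmono : ∀ {a b}, a ≤ b → U a ⊆ U b := by
    intro a b hab
    exact biUnion_subset_biUnion_left (Iio_subset_Iio hab)
  obtain ⟨κ, hκ⟩ := cK.isCompact.elim_directed_cover U hU (by
    rintro ⟨x, x'⟩ hp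
    have hne : f (Cd S x) ≠ f (Cd S x') := by
      intro he
      have h1 := (astar_fin X hS x).symm.trans (hA _)
      have h2 := (astar_fin X hS x').symm.trans (hA _)
      rw [he, ← h2] at h1
      apply hp
      simp only
      cases h3 : x S.ncard <;> cases h4 : x' S.ncard <;> simp_all
    obtain ⟨m, hm⟩ := Function.ne_iff.1 hne
    exact mem_iUnion.2 ⟨m + 1, mem_iUnion₂.2 ⟨m, by simp, hm⟩⟩)
    (directed_of_isDirected_le fun a b hab => hmono hab)
  refine ⟨max κ (M + 1), fun j hj => ?_, fun x x' hx => ?_⟩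
  · have := hM hj
    exact lt_of_lt_of_le (by omega) (le_max_right _ _)
  · obtain ⟨m, hm, hm2⟩ := mem_iUnion₂.1 (hκ (show (x, x') ∈ K from hx))
    exact ⟨m, lt_of_lt_of_le hm (le_max_left _ _), hm2⟩

lemma exists_embedding (hf : ∀ a a' k, (∀ i ≤ k, a i = a' i) → f a k = f a' k)
    (hA : ∀ a, Astar X a ↔ glue z n (f a) ∈ X)
    : ∃ e : Cantor → Cantor, Continuous e ∧ Function.Injective e ∧
    (∀ x, e x ∈ cyl z n) ∧ ∀ x, x ∈ X ↔ e x ∈ X := by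
  classical
  choose κ hκ1 hκ2 using fun S : {S : Set ℕ // S.Finite} => exists_kappa hf hA S.2
  let St : ℕ → {S : Set ℕ // S.Finite} := fun i => Nat.rec ⟨∅, finite_empty⟩
    (fun _ S => ⟨insert (κ S) S.1, S.2.insert _⟩) i
  have St0 : (St 0).1 = ∅ := rfl
  have Sts : ∀ i, (St (i + 1)).1 = insert (κ (St i)) (St i).1 := fun i => rfl
  have hlt : ∀ i, ∀ j ∈ (St i).1, j < κ (St i) := fun i => hκ1 (St i)
  have hcard : ∀ i, (St i).1.ncard = i := by
    intro i
    induction i with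
    | zero => rw [St0]; simp
    | succ i ih =>
      rw [Sts, ncard_insert_of_notMem (fun h => lt_irrefl _ (hlt i _ h)) (St i).2, ih]
  have hmono : Monotone (fun i => (St i).1) := monotone_nat_of_le_succ fun i => by
    rw [Sts]; exact subset_insert _ _
  have hnew : ∀ i d, ∀ j ∈ (St (i + d)).1, j ∈ (St i).1 ∨ κ (St i) ≤ j := by
    intro i d
    induction d with
    | zero => intro j hj; exact Or.inl hj
    | succ d ih =>
      intro j hj
      rw [← Nat.add_assoc, Sts] at hj
      rcases hj with rfl | hj
      · right
        cases d with
        | zero => exact le_rfl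
        | succ d =>
          refine (hlt (i + (d + 1)) (κ (St i)) ?_).le
          exact hmono (show i + 1 ≤ i + (d + 1) by omega)
            (show κ (St i) ∈ (St (i + 1)).1 by rw [Sts]; exact mem_insert _ _)
      · exact ih j hj
  let S : Set ℕ := ⋃ i, (St i).1
  have hSi : ∀ i, S ∩ Iio (κ (St i)) = (St i).1 ∩ Iio (κ (St i)) := by
    intro i
    ext j
    simp only [S, mem_inter_iff, mem_iUnion, mem_Iio]
    constructor
    · rintro ⟨⟨l, hl⟩, hj⟩
      refine ⟨?_, hj⟩
      rcases hnew i l j (hmono (show l ≤ i + l by omega) hl) with h | h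
      · exact h
      · omega
    · rintro ⟨h1, h2⟩; exact ⟨⟨i, h1⟩, h2⟩
  have hSinf : S.Infinite := by
    intro hfin
    have h1 : ∀ i, i ≤ S.ncard := by
      intro i
      have := ncard_le_ncard (subset_iUnion (fun i => (St i).1) i) hfin
      simpa [hcard i] using this
    have := h1 (S.ncard + 1)
    omega
  refine ⟨fun x => glue z n (f (Cd S x)), (continuous_glue z n).comp (cont_fCd hf S), ?_,
    fun x => glue_mem _ _ _, fun x => (astar_inf X hSinf x).symm.trans (hA _)⟩
  intro x x' he
  by_contra hne
  obtain ⟨i, hi⟩ := Function.ne_iff.1 hne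
  have h1 := glue_injective z n he
  obtain ⟨m, hm, hm2⟩ := hκ2 (St i) x x' (by rw [hcard i]; exact hi)
  apply hm2
  have a1 := hf (Cd S x) (Cd (St i).1 x) m (fun j hj => Cd_congr_set (hSi i) x j (by omega))
  have a2 := hf (Cd S x') (Cd (St i).1 x') m (fun j hj => Cd_congr_set (hSi i) x' j (by omega))
  rw [← a1, ← a2, h1]

end Emb

theorem embeddings {X : Set Cantor} (hB : @MeasurableSet Cantor (borel Cantor) X) (hd : Dense X)
    (hhom : IsHomogeneous X) (hdel : ¬ InDelta X) (z : Cantor) (n : ℕ) :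
    ∃ e : Cantor → Cantor, Continuous e ∧ Function.Injective e ∧
    (∀ x, e x ∈ cyl z n) ∧ ∀ x, x ∈ X ↔ e x ∈ X := by
  rcases causal_or_flip hB z n with h | ⟨f, hf, hA⟩
  · exfalso
    refine lemmaC hB (fun h => hdel h.inDelta) fun ε u m => ?_
    cases ε with
    | false => exact red_keep hd hhom u m
    | true =>
      have h1 := (red_keep hd hhom z n).comp (DD.of_isClosed (isClopen_cyl z n).1) h
      have h2 := h1.comp (DD.of_isClosed isClosed_univ) (red_keep hd hhom u m)
      simpa using h2
  · exact exists_embedding hf hA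

end CH


open Set

namespace CH

/-- Empty interior. -/
def Nwd (K : Set Cantor) : Prop := ∀ x n, ∃ y ∈ cyl x n, y ∉ K

lemma continuous_lc {Z : Type*} [TopologicalSpace Z] {F : Cantor → Z}
    (h : ∀ x, ∃ m, ∀ y ∈ cyl x m, F y = F x) : Continuous F := by
  rw [continuous_iff_continuousAt]
  intro x
  obtain ⟨m, hm⟩ := h x
  refine tendsto_nhds_of_eventually_eq ?_
  filter_upwards [cyl_nhds x m] with y hy
  exact hm y hy

lemma lc_of_continuous {F : Cantor → ℕ} (hF : Continuous F) (x : Cantor) :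
    ∃ m, ∀ y ∈ cyl x m, F y = F x := by
  obtain ⟨m, hm⟩ := exists_cyl_subset ((isOpen_discrete {F x}).preimage hF) (x := x) rfl
  exact ⟨m, fun y hy => hm hy⟩

lemma exists_ext_onto {L : Set Cantor} (hL : IsClosed L) (hLn : Nwd L) {b0 β : Cantor → ℕ}
    (hb0 : ContinuousOn b0 L) (hβ : Continuous β) {R : Set (ℕ × ℕ)} (hR : R.Finite)
    (h1 : ∀ y ∈ L, (β y, b0 y) ∈ R) (h2 : ∀ y, ∃ j, (β y, j) ∈ R)
    (h3 : ∀ p ∈ R, ∃ y, β y = p.1) :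
    ∃ b : Cantor → ℕ, Continuous b ∧ (∀ y ∈ L, b y = b0 y) ∧ (∀ y, (β y, b y) ∈ R) ∧
      ∀ p ∈ R, ∃ y, (β y, b y) = p := by
  classical
  -- base points
  have hx : ∀ i : ℕ, ∃ (x : Cantor) (n : ℕ), (∃ y, β y = i) → ∀ y ∈ cyl x n, β y = i ∧ y ∉ L := by
    intro i
    by_cases hi : ∃ y, β y = i
    · obtain ⟨y, hy⟩ := hi
      obtain ⟨m, hm⟩ := lc_of_continuous hβ y
      obtain ⟨x, hx, hxL⟩ := hLn y m
      obtain ⟨n, hn⟩ := exists_cyl_subset hL.isOpen_compl hxL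
      refine ⟨x, max m n, fun _ w hw => ⟨?_, hn (cyl_anti _ (le_max_right _ _) hw)⟩⟩
      rw [hm w, hy]
      have := cyl_anti x (le_max_left m n) hw
      rwa [cyl_eq hx] at this
    · exact ⟨fun _ => false, 0, fun h => absurd h hi⟩
  choose x n hxn using hx
  let q : ℕ × ℕ → Cantor := fun p => flipBit (n p.1 + p.2) (x p.1)
  have hq : ∀ p ∈ R, β (q p) = p.1 ∧ q p ∉ L := by
    intro p hp
    refine hxn p.1 (h3 p hp) _ fun i hi => ?_
    simp only [q, flipBit]
    rw [if_neg (by omega)]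
  have hqinj : ∀ p ∈ R, ∀ p' ∈ R, q p = q p' → p = p' := by
    rintro ⟨i, j⟩ hp ⟨i', j'⟩ hp' h
    have e : i = i' := by
      have a := (hq _ hp).1
      have b := (hq _ hp').1
      rw [h] at a
      exact a.symm.trans b
    subst e
    by_contra hne
    have hj : j ≠ j' := fun h => hne (by rw [h])
    have := congrFun h (n i + j)
    simp [q, flipBit, hj] at this
  let Q : Set Cantor := q '' R
  have hQ : Q.Finite := hR.image q
  have hLQ : ∀ y ∈ L, y ∉ Q := by
    rintro y hy ⟨p, hp, rfl⟩
    exact (hq p hp).2 hy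
  let J : Cantor → ℕ := fun y => if h : ∃ p ∈ R, q p = y then h.choose.2 else 0
  have hJ : ∀ p ∈ R, J (q p) = p.2 := by
    intro p hp
    have h : ∃ p' ∈ R, q p' = q p := ⟨p, hp, rfl⟩
    simp only [J]
    rw [dif_pos h, hqinj _ h.choose_spec.1 p hp h.choose_spec.2]
  let b1 : Cantor → ℕ := fun y => if y ∈ L then b0 y else J y
  have hb1 : ContinuousOn b1 (L ∪ Q) := by
    refine ContinuousOn.union_of_isClosed ?_ (hQ.continuousOn _) hL hQ.isClosed
    exact hb0.congr fun y hy => by simp [b1, hy]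
  have hb1R : ∀ y ∈ L ∪ Q, (β y, b1 y) ∈ R := by
    rintro y (hy | ⟨p, hp, rfl⟩)
    · simp only [b1, hy, if_true]; exact h1 y hy
    · simp only [b1, (hq p hp).2, if_false]
      rw [hJ p hp, (hq p hp).1]; exact hp
  obtain ⟨j0, hj0⟩ := h2 (fun _ => false)
  have hne : (L ∪ Q).Nonempty := ⟨_, Or.inr ⟨_, hj0, rfl⟩⟩
  obtain ⟨r, hr1, hr2, hr3⟩ := PiNat.exists_retraction_of_isClosed (E := fun _ => Bool)
    (hL.union hQ.isClosed) hne
  have hrm : ∀ y, r y ∈ L ∪ Q := fun y => by rw [← hr2]; exact mem_range_self y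
  choose j hj using h2
  let jj : ℕ → ℕ := fun i => if h : ∃ y, β y = i then j h.choose else 0
  have hjj : ∀ y, (β y, jj (β y)) ∈ R := by
    intro y
    have h : ∃ y', β y' = β y := ⟨y, rfl⟩
    simp only [jj]
    rw [dif_pos h]
    have := hj h.choose
    rwa [h.choose_spec] at this
  have hb1r : Continuous (fun y => b1 (r y)) := hb1.comp_continuous hr3 hrm
  have hβr : Continuous (fun y => β (r y)) := hβ.comp hr3
  refine ⟨fun y => if β (r y) = β y then b1 (r y) else jj (β y), ?_, ?_, ?_, ?_⟩
  · refine continuous_lc fun y => ?_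
    obtain ⟨m1, hm1⟩ := lc_of_continuous hb1r y
    obtain ⟨m2, hm2⟩ := lc_of_continuous hβr y
    obtain ⟨m3, hm3⟩ := lc_of_continuous hβ y
    refine ⟨max m1 (max m2 m3), fun w hw => ?_⟩
    have e1 := hm1 w (cyl_anti _ (le_max_left _ _) hw)
    have e2 := hm2 w (cyl_anti _ ((le_max_left _ _).trans (le_max_right _ _)) hw)
    have e3 := hm3 w (cyl_anti _ ((le_max_right _ _).trans (le_max_right _ _)) hw)
    rw [e1, e2, e3]
  · intro y hy
    simp only
    rw [hr1 y (Or.inl hy), if_pos rfl]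
    simp [b1, hy]
  · intro y
    simp only
    split_ifs with h
    · rw [← h]; exact hb1R _ (hrm y)
    · exact hjj y
  · intro p hp
    refine ⟨q p, ?_⟩
    have e : r (q p) = q p := hr1 _ (Or.inr ⟨p, hp, rfl⟩)
    simp only
    rw [e, if_pos rfl, (hq p hp).1]
    simp only [b1, (hq p hp).2, if_false]
    rw [hJ p hp]

/-- Matched locally constant colourings. -/
structure Matched (K : Set Cantor) (φ : Cantor → Cantor) (α β : Cantor → ℕ) : Prop where
  ca : Continuous α
  cb : Continuous β
  rng : range α = range β
  ext : ∀ x ∈ K, β (φ x) = α x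

/-- A homeomorphism between closed sets with empty interior. -/
structure Pt (K L : Set Cantor) (φ φ' : Cantor → Cantor) : Prop where
  cK : IsClosed K
  cL : IsClosed L
  nK : Nwd K
  nL : Nwd L
  c1 : ContinuousOn φ K
  c2 : ContinuousOn φ' L
  m1 : MapsTo φ K L
  m2 : MapsTo φ' L K
  i1 : ∀ x ∈ K, φ' (φ x) = x
  i2 : ∀ y ∈ L, φ (φ' y) = y

lemma Pt.symm {K L : Set Cantor} {φ φ' : Cantor → Cantor} (h : Pt K L φ φ') : Pt L K φ' φ :=
  ⟨h.cL, h.cK, h.nL, h.nK, h.c2, h.c1, h.m2, h.m1, h.i2, h.i1⟩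

lemma Matched.symm {K L : Set Cantor} {φ φ' : Cantor → Cantor} (h : Pt K L φ φ')
    {α β : Cantor → ℕ} (hm : Matched K φ α β) : Matched L φ' β α :=
  ⟨hm.cb, hm.ca, hm.rng.symm, fun y hy => by
    rw [← hm.ext _ (h.m2 hy), h.i2 y hy]⟩

lemma Matched.refine {K L : Set Cantor} {φ φ' : Cantor → Cantor} (h : Pt K L φ φ')
    {α β : Cantor → ℕ} (hm : Matched K φ α β) {a : Cantor → ℕ} (ha : Continuous a) :
    ∃ b : Cantor → ℕ, Matched K φ (fun x => Nat.pair (α x) (a x))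
      (fun y => Nat.pair (β y) (b y)) := by
  have hcp : Continuous (fun x => (α x, a x)) := hm.ca.prodMk ha
  obtain ⟨b, hb1, hb2, hb3, hb4⟩ := exists_ext_onto h.cL h.nL (b0 := fun y => a (φ' y)) (β := β)
    (ha.comp_continuousOn h.c2) hm.cb (R := range fun x => (α x, a x))
    ((isCompact_range hcp).finite_of_discrete)
    (by
      intro y hy
      refine ⟨φ' y, ?_⟩
      simp only
      rw [← hm.ext _ (h.m2 hy), h.i2 y hy])
    (by
      intro y
      have : β y ∈ range α := by rw [hm.rng]; exact mem_range_self y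
      obtain ⟨x, hx⟩ := this
      exact ⟨a x, x, by simp only [hx]⟩)
    (by
      rintro p ⟨x, rfl⟩
      have : α x ∈ range β := by rw [← hm.rng]; exact mem_range_self x
      exact this)
  refine ⟨b, ?_, ?_, ?_, ?_⟩
  · exact (continuous_of_discreteTopology (f := fun p : ℕ × ℕ => Nat.pair p.1 p.2)).comp hcp
  · exact (continuous_of_discreteTopology (f := fun p : ℕ × ℕ => Nat.pair p.1 p.2)).comp
      (hm.cb.prodMk hb1)
  · ext c
    constructor
    · rintro ⟨x, rfl⟩
      obtain ⟨y, hy⟩ := hb4 _ ⟨x, rfl⟩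
      simp only [Prod.mk.injEq] at hy
      exact ⟨y, by simp only [hy]⟩
    · rintro ⟨y, rfl⟩
      obtain ⟨x, hx⟩ := hb3 y
      simp only [Prod.mk.injEq] at hx
      exact ⟨x, by simp only [hx]⟩
  · intro x hx
    rw [hm.ext x hx, hb2 _ (h.m1 hx), h.i1 x hx]

/-- Code of the first `m` bits. -/
def bits (m : ℕ) (x : Cantor) : ℕ := Encodable.encode (fun i : Fin m => x i)

lemma bits_eq {m : ℕ} {x y : Cantor} : bits m y = bits m x ↔ y ∈ cyl x m := by
  rw [bits, bits, Encodable.encode_inj, funext_iff]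
  exact ⟨fun h i hi => h ⟨i, hi⟩, fun h i => h i.1 i.2⟩

lemma continuous_bits (m : ℕ) : Continuous (bits m) :=
  continuous_lc fun _ => ⟨m, fun _ hy => bits_eq.2 hy⟩

lemma Matched.step {K L : Set Cantor} {φ φ' : Cantor → Cantor} (h : Pt K L φ φ')
    {α β : Cantor → ℕ} (hm : Matched K φ α β) (m : ℕ) :
    ∃ α' β' : Cantor → ℕ, Matched K φ α' β' ∧ (∀ x y, α' x = β' y → α x = β y) ∧
      (∀ x x', α' x = α' x' → x ∈ cyl x' m) ∧ (∀ y y', β' y = β' y' → y ∈ cyl y' m) := by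
  obtain ⟨b, hb⟩ := hm.refine h (continuous_bits m)
  obtain ⟨a, ha⟩ := (hb.symm h).refine h.symm (continuous_bits m)
  refine ⟨_, _, ha.symm h.symm, ?_, ?_, ?_⟩
  · intro x y hxy
    have h1 := Nat.pair_eq_pair.1 hxy
    exact (Nat.pair_eq_pair.1 h1.1).1
  · intro x y hxy
    have h1 := Nat.pair_eq_pair.1 hxy
    exact bits_eq.1 (Nat.pair_eq_pair.1 h1.1).2
  · intro x y hxy
    have h1 := Nat.pair_eq_pair.1 hxy
    exact bits_eq.1 h1.2

lemma exists_seq {K L : Set Cantor} {φ φ' : Cantor → Cantor} (h : Pt K L φ φ') {N : ℕ}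
    (hN : ∀ x ∈ K, φ x ∈ cyl x N) :
    ∃ α β : ℕ → Cantor → ℕ, (∀ n, Matched K φ (α n) (β n)) ∧
      (∀ n x y, α (n + 1) x = β (n + 1) y → α n x = β n y) ∧
      (∀ n x x', α (n + 1) x = α (n + 1) x' → x ∈ cyl x' n) ∧
      (∀ n y y', β (n + 1) y = β (n + 1) y' → y ∈ cyl y' n) ∧
      α 0 = bits N ∧ β 0 = bits N := by
  have h0 : Matched K φ (bits N) (bits N) :=
    ⟨continuous_bits N, continuous_bits N, rfl, fun x hx => bits_eq.2 (hN x hx)⟩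
  choose A B h1 h2 h3 h4 using
    fun (p : {p : (Cantor → ℕ) × (Cantor → ℕ) // Matched K φ p.1 p.2}) (m : ℕ) => p.2.step h m
  let S : ℕ → {p : (Cantor → ℕ) × (Cantor → ℕ) // Matched K φ p.1 p.2} := fun n =>
    Nat.rec ⟨(bits N, bits N), h0⟩ (fun m p => ⟨(A p m, B p m), h1 p m⟩) n
  exact ⟨fun n => (S n).1.1, fun n => (S n).1.2, fun n => (S n).2, fun n => h2 (S n) n,
    fun n => h3 (S n) n, fun n => h4 (S n) n, rfl, rfl⟩

lemma seq_point {α β : ℕ → Cantor → ℕ} (hcb : ∀ n, Continuous (β n))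
    (hr : ∀ n, range (α n) = range (β n))
    (hs : ∀ n x y, α (n + 1) x = β (n + 1) y → α n x = β n y) (x : Cantor) :
    ∃ y, ∀ n, α n x = β n y := by
  have hc : ∀ n, IsClosed {y | α n x = β n y} := fun n =>
    isClosed_eq continuous_const (hcb n)
  have := IsCompact.nonempty_iInter_of_sequence_nonempty_isCompact_isClosed
    (fun n => {y | α n x = β n y}) (fun n y hy => hs n x y hy)
    (fun n => by
      have : α n x ∈ range (β n) := by rw [← hr]; exact mem_range_self x
      obtain ⟨y, hy⟩ := this
      exact ⟨y, hy.symm⟩)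
    (hc 0).isCompact hc
  obtain ⟨y, hy⟩ := this
  exact ⟨y, fun n => mem_iInter.1 hy n⟩

lemma eq_of_cyl {x y : Cantor} (h : ∀ n, x ∈ cyl y n) : x = y :=
  funext fun i => h (i + 1) i (Nat.lt_succ_self i)

lemma kr_pt {K L : Set Cantor} {φ φ' : Cantor → Cantor} (h : Pt K L φ φ') {N : ℕ}
    (hN : ∀ x ∈ K, φ x ∈ cyl x N) :
    ∃ k : Cantor ≃ₜ Cantor, (∀ x ∈ K, k x = φ x) ∧ ∀ x, k x ∈ cyl x N := by
  obtain ⟨α, β, hm, hs, ha, hb, a0, b0⟩ := exists_seq h hN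
  choose k hk using seq_point (fun n => (hm n).cb) (fun n => (hm n).rng) hs
  choose k' hk' using seq_point (α := β) (β := α) (fun n => (hm n).ca) (fun n => (hm n).rng.symm)
    (fun n x y e => (hs n y x e.symm).symm)
  have ub : ∀ y y', (∀ n, β n y = β n y') → y = y' := fun y y' e =>
    eq_of_cyl fun n => hb n _ _ (e (n + 1))
  have ua : ∀ y y', (∀ n, α n y = α n y') → y = y' := fun y y' e =>
    eq_of_cyl fun n => ha n _ _ (e (n + 1))
  let E : Cantor ≃ Cantor := ⟨k, k',
    fun x => ua _ _ fun n => by rw [hk x n, hk' (k x) n],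
    fun y => ub _ _ fun n => by rw [hk' y n, hk (k' y) n]⟩
  have hE : Continuous E := by
    refine continuous_coord fun x i => ?_
    obtain ⟨m, hmm⟩ := lc_of_continuous (hm (i + 1 + 1)).ca x
    refine ⟨m, fun y hy => ?_⟩
    have e := hmm y hy
    rw [hk x, hk y] at e
    exact hb (i + 1) _ _ e i (Nat.lt_succ_self i)
  refine ⟨hE.homeoOfEquivCompactToT2, fun x hx => ?_, fun x => ?_⟩
  · change k x = φ x
    exact ub _ _ fun n => by rw [← hk x n, (hm n).ext x hx]
  · change k x ∈ cyl x N
    have := hk x 0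
    rw [a0, b0] at this
    exact bits_eq.1 this.symm

theorem kr {K : Set Cantor} (hK : IsClosed K) (hn : Nwd K) {φ : Cantor → Cantor}
    (hφ : ContinuousOn φ K) (hi : InjOn φ K) (hLn : Nwd (φ '' K)) {N : ℕ}
    (hN : ∀ x ∈ K, φ x ∈ cyl x N) :
    ∃ k : Cantor ≃ₜ Cantor, (∀ x ∈ K, k x = φ x) ∧ ∀ x, k x ∈ cyl x N := by
  have hL : IsClosed (φ '' K) := (hK.isCompact.image_of_continuousOn hφ).isClosed
  refine kr_pt (L := φ '' K) (φ' := Function.invFunOn φ K)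
    ⟨hK, hL, hn, hLn, hφ, ?_, mapsTo_image _ _, ?_, ?_, ?_⟩ hN
  · rw [continuousOn_iff_isClosed]
    intro t ht
    refine ⟨φ '' (K ∩ t), ?_, ?_⟩
    · exact ((hK.inter ht).isCompact.image_of_continuousOn
        (hφ.mono inter_subset_left)).isClosed
    · ext y
      constructor
      · rintro ⟨h1, x, hx, rfl⟩
        refine ⟨⟨x, ⟨hx, ?_⟩, rfl⟩, ⟨x, hx, rfl⟩⟩
        rw [mem_preimage, hi.leftInvOn_invFunOn hx] at h1
        exact h1
      · rintro ⟨⟨x, ⟨hx, hx2⟩, rfl⟩, _⟩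
        refine ⟨?_, ⟨x, hx, rfl⟩⟩
        rw [mem_preimage, hi.leftInvOn_invFunOn hx]
        exact hx2
  · rintro y ⟨x, hx, rfl⟩
    rw [hi.leftInvOn_invFunOn hx]
    exact hx
  · intro x hx; exact hi.leftInvOn_invFunOn hx
  · rintro y ⟨x, hx, rfl⟩
    rw [hi.leftInvOn_invFunOn hx]

end CH

open Set
namespace CH

lemma Nwd.isMeagre {K : Set Cantor} (hK : IsClosed K) (hn : Nwd K) : IsMeagre K := by
  refine IsNowhereDense.isMeagre ?_
  rw [IsNowhereDense, hK.closure_eq, eq_empty_iff_forall_notMem]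
  intro x hx
  obtain ⟨n, h⟩ := exists_cyl_subset isOpen_interior hx
  obtain ⟨y, hy, hyK⟩ := hn x n
  exact hyK (interior_subset (h hy))

lemma Nwd.of_isMeagre {K : Set Cantor} (hK : IsMeagre K) : Nwd K := by
  intro x n
  by_contra! h
  exact cyl_not_meagre x n (hK.mono h)

lemma Nwd.image {D : Set Cantor} (hn : Nwd D) {e : Cantor → Cantor}
    (he : Continuous e) (hi : Function.Injective e) : Nwd (e '' D) := by
  intro x n
  by_contra! h
  obtain ⟨d, hd, rfl⟩ := h x (self_mem_cyl x n)
  obtain ⟨m, hm⟩ := exists_cyl_subset ((isClopen_cyl (e d) n).2.preimage he)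
    (x := d) (self_mem_cyl (e d) n)
  obtain ⟨w, hw, hwD⟩ := hn d m
  obtain ⟨w', hw', hww⟩ := h _ (hm hw)
  exact hwD (hi hww ▸ hw')

lemma unif {h : Cantor → Cantor} (hc : Continuous h) (n : ℕ) :
    ∃ N, n ≤ N ∧ ∀ x y, y ∈ cyl x N → h y ∈ cyl (h x) n := by
  have h1 : ∀ x, ∃ m, cyl x m ⊆ h ⁻¹' cyl (h x) n := fun x =>
    exists_cyl_subset ((isClopen_cyl (h x) n).2.preimage hc) (self_mem_cyl (h x) n)
  choose m hm using h1
  obtain ⟨t, -, ht⟩ := (isCompact_univ (X := Cantor)).elim_nhds_subcover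
    (fun x => cyl x (m x)) (fun x _ => cyl_nhds x _)
  refine ⟨max n (t.sup m), le_max_left _ _, fun x y hy => ?_⟩
  obtain ⟨z, hz, hxz⟩ := mem_iUnion₂.1 (ht (mem_univ x))
  have h2 : y ∈ cyl z (m z) := by
    rw [← cyl_eq hxz]
    exact cyl_anti _ ((Finset.le_sup hz).trans (le_max_right _ _)) hy
  have h3 := hm z h2
  have h4 := hm z hxz
  rw [mem_preimage] at h3 h4
  rwa [cyl_eq h4]

/-- Level of the cell of a point. -/
noncomputable def lev (K : Set Cantor) (N : ℕ) (x : Cantor) : ℕ :=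
  sInf {l | N ≤ l ∧ Disjoint (cyl x l) K}

lemma lev_mem {K : Set Cantor} (hK : IsClosed K) (N : ℕ) {x : Cantor} (hx : x ∉ K) :
    N ≤ lev K N x ∧ Disjoint (cyl x (lev K N x)) K := by
  apply Nat.sInf_mem (s := {l | N ≤ l ∧ Disjoint (cyl x l) K})
  obtain ⟨n, hn⟩ := exists_cyl_subset hK.isOpen_compl hx
  exact ⟨max N n, le_max_left _ _, disjoint_left.2 fun y hy => hn (cyl_anti _ (le_max_right _ _) hy)⟩

lemma lev_eq {K : Set Cantor} (hK : IsClosed K) (N : ℕ) {x y : Cantor} (hx : x ∉ K)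
    (hy : y ∈ cyl x (lev K N x)) : y ∉ K ∧ lev K N y = lev K N x := by
  have h1 := lev_mem hK N hx
  have hyK : y ∉ K := disjoint_left.1 h1.2 hy
  refine ⟨hyK, ?_⟩
  have h2 := lev_mem hK N hyK
  have h3 : lev K N y ≤ lev K N x := Nat.sInf_le ⟨h1.1, by rw [cyl_eq hy]; exact h1.2⟩
  refine le_antisymm h3 (Nat.sInf_le ⟨h2.1, ?_⟩)
  rw [← cyl_eq (cyl_anti _ h3 hy)]; exact h2.2

/-- Index of the cylinder of a point. -/
noncomputable def idx (l : ℕ) (x : Cantor) : ℕ := sInf {i | x ∈ cyl (dseq i) l}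

lemma idx_mem (l : ℕ) (x : Cantor) : x ∈ cyl (dseq (idx l x)) l :=
  Nat.sInf_mem (s := {i | x ∈ cyl (dseq i) l}) (exists_dseq x l)

lemma idx_eq {l : ℕ} {x y : Cantor} (h : y ∈ cyl x l) : idx l y = idx l x := by
  have : {i | y ∈ cyl (dseq i) l} = {i | x ∈ cyl (dseq i) l} := by
    ext i
    constructor
    · intro hi; exact fun j hj => ((h j hj).symm.trans (hi j hj))
    · intro hi; exact fun j hj => ((h j hj).trans (hi j hj))
  rw [idx, idx, this]

open Classical in
lemma step_plus {Y : Set Cantor}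
    (hE : ∀ z n, ∃ e : Cantor → Cantor, Continuous e ∧ Function.Injective e ∧
      (∀ x, e x ∈ cyl z n) ∧ ∀ x, x ∈ Y ↔ e x ∈ Y)
    (h : Cantor ≃ₜ Cantor) {K D : Set Cantor} (hK : IsClosed K) (hKn : Nwd K)
    (hD : IsClosed D) (hDn : Nwd D) (hY : ∀ x ∈ K, x ∈ Y ↔ h x ∈ Y) (n : ℕ) :
    ∃ h' : Cantor ≃ₜ Cantor, (∀ x ∈ K, h' x = h x) ∧ (∀ x ∈ K ∪ D, x ∈ Y ↔ h' x ∈ Y) ∧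
      (∀ x, h' x ∈ cyl (h x) n) ∧ ∀ y, h'.symm y ∈ cyl (h.symm y) n := by
  obtain ⟨N, hnN, hN⟩ := unif h.continuous n
  have hf : ∀ i l : ℕ, ∃ f : Cantor → Cantor, Continuous f ∧ Function.Injective f ∧
      (∀ x, f x ∈ cyl (dseq i) l) ∧ ∀ x, x ∈ Y ↔ h (f x) ∈ Y := by
    intro i l
    obtain ⟨m, hm⟩ := exists_cyl_subset (h.isOpenMap _ (isClopen_cyl (dseq i) l).2)
      (mem_image_of_mem h (self_mem_cyl (dseq i) l))
    obtain ⟨e, he1, he2, he3, he4⟩ := hE (h (dseq i)) m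
    refine ⟨fun x => h.symm (e x), h.symm.continuous.comp he1, h.symm.injective.comp he2, ?_, ?_⟩
    · intro x
      obtain ⟨w, hw, hw2⟩ := hm (he3 x)
      simpa [← hw2] using hw
    · intro x
      simpa using he4 x
  choose f hf1 hf2 hf3 hf4 using hf
  let φ : Cantor → Cantor := fun x =>
    if x ∈ K then x else f (idx (lev K N x) x) (lev K N x) x
  have φK : ∀ x ∈ K, φ x = x := fun x hx => if_pos hx
  have φn : ∀ x, x ∉ K → φ x = f (idx (lev K N x) x) (lev K N x) x := fun x hx => if_neg hx
  have φc : ∀ x, x ∉ K → φ x ∈ cyl x (lev K N x) := by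
    intro x hx
    rw [φn x hx, cyl_eq (idx_mem (lev K N x) x)]
    exact hf3 _ _ _
  have φloc : ∀ x, x ∉ K → ∀ y ∈ cyl x (lev K N x),
      φ y = f (idx (lev K N x) x) (lev K N x) y := by
    intro x hx y hy
    obtain ⟨h1, h2⟩ := lev_eq hK N hx hy
    rw [φn y h1, h2, idx_eq hy]
  have φcont : Continuous φ := by
    refine continuous_coord fun x j => ?_
    by_cases hx : x ∈ K
    · refine ⟨j + 1, fun y hy => ?_⟩
      rw [φK x hx]
      by_cases hyK : y ∈ K
      · rw [φK y hyK]; exact hy j (Nat.lt_succ_self j)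
      · have h1 : j < lev K N y := by
          by_contra! h2
          have h3 := (lev_mem hK N hyK).2
          exact disjoint_left.1 h3 (cyl_anti _ (by omega) (mem_cyl_symm hy)) hx
        rw [φc y hyK j h1]; exact hy j (Nat.lt_succ_self j)
    · obtain ⟨m, hm⟩ := exists_cyl_subset
        ((isClopen_cyl (φ x) (j+1)).2.preimage (hf1 (idx (lev K N x) x) (lev K N x)))
        (x := x) (by rw [mem_preimage, ← φn x hx]; exact self_mem_cyl _ _)
      refine ⟨max m (lev K N x), fun y hy => ?_⟩
      rw [φloc x hx y (cyl_anti _ (le_max_right _ _) hy)]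
      exact hm (cyl_anti _ (le_max_left _ _) hy) j (Nat.lt_succ_self j)
  have φinj : Function.Injective φ := by
    intro x y hxy
    by_cases hx : x ∈ K <;> by_cases hy : y ∈ K
    · rwa [φK x hx, φK y hy] at hxy
    · rw [φK x hx] at hxy
      exact absurd (hxy ▸ hx) (lev_eq hK N hy (φc y hy)).1
    · rw [φK y hy] at hxy
      exact absurd (hxy ▸ hy) (lev_eq hK N hx (φc x hx)).1
    · have h1 := (lev_eq hK N hx (φc x hx)).2
      have h2 := (lev_eq hK N hy (φc y hy)).2
      have h3 : lev K N y = lev K N x := by rw [← h1, ← h2, hxy]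
      have h4 := idx_eq (φc x hx)
      have h5 := idx_eq (φc y hy)
      rw [h3, ← hxy, h4] at h5
      rw [φn x hx, φn y hy, h3, ← h5] at hxy
      exact hf2 _ _ hxy
  have hKD : Nwd (K ∪ D) := Nwd.of_isMeagre ((hKn.isMeagre hK).union (hDn.isMeagre hD))
  obtain ⟨k, hk1, hk2⟩ := kr (hK.union hD) hKD φcont.continuousOn φinj.injOn
    (hKD.image φcont φinj) (N := N) (by
      intro x _
      by_cases hx : x ∈ K
      · rw [φK x hx]; exact self_mem_cyl _ _
      · exact cyl_anti _ (lev_mem hK N hx).1 (φc x hx))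
  refine ⟨k.trans h, ?_, ?_, ?_, ?_⟩
  · intro x hx
    rw [Homeomorph.trans_apply, hk1 x (Or.inl hx), φK x hx]
  · intro x hx
    rw [Homeomorph.trans_apply, hk1 x hx]
    by_cases hxK : x ∈ K
    · rw [φK x hxK]; exact hY x hxK
    · rw [φn x hxK]; exact hf4 _ _ _
  · intro x
    exact hN _ _ (hk2 x)
  · intro y
    rw [Homeomorph.symm_trans_apply]
    have := hk2 (k.symm (h.symm y))
    rw [Homeomorph.apply_symm_apply] at this
    exact cyl_anti _ hnN (mem_cyl_symm this)

lemma step_both {Y : Set Cantor}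
    (hE : ∀ z n, ∃ e : Cantor → Cantor, Continuous e ∧ Function.Injective e ∧
      (∀ x, e x ∈ cyl z n) ∧ ∀ x, x ∈ Y ↔ e x ∈ Y)
    (h : Cantor ≃ₜ Cantor) {K D : Set Cantor} (hK : IsClosed K) (hKn : Nwd K)
    (hD : IsClosed D) (hDn : Nwd D) (hY : ∀ x ∈ K, x ∈ Y ↔ h x ∈ Y) (n : ℕ) :
    ∃ (h' : Cantor ≃ₜ Cantor) (K' : Set Cantor), (IsClosed K' ∧ Nwd K' ∧
      ∀ x ∈ K', x ∈ Y ↔ h' x ∈ Y) ∧ (∀ x ∈ K, h' x = h x) ∧ K ⊆ K' ∧ D ⊆ K' ∧ D ⊆ h' '' K' ∧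
      (∀ x, h' x ∈ cyl (h x) n) ∧ ∀ y, h'.symm y ∈ cyl (h.symm y) n := by
  obtain ⟨h1, a1, a2, a3, a4⟩ := step_plus hE h hK hKn hD hDn hY n
  have hKD : Nwd (K ∪ D) := Nwd.of_isMeagre ((hKn.isMeagre hK).union (hDn.isMeagre hD))
  have c1 : IsClosed (h1 '' (K ∪ D)) := h1.isClosedMap _ (hK.union hD)
  have n1 : Nwd (h1 '' (K ∪ D)) := hKD.image h1.continuous h1.injective
  obtain ⟨g, b1, b2, b3, b4⟩ := step_plus hE h1.symm c1 n1 hD hDn (by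
    rintro _ ⟨x, hx, rfl⟩
    rw [Homeomorph.symm_apply_apply]; exact (a2 x hx).symm) n
  have hg : ∀ x ∈ K ∪ D, g (h1 x) = x := fun x hx => by
    rw [b1 _ (mem_image_of_mem _ hx), Homeomorph.symm_apply_apply]
  have hsub : K ∪ D ⊆ g '' (h1 '' (K ∪ D) ∪ D) := fun x hx =>
    ⟨h1 x, Or.inl (mem_image_of_mem _ hx), hg x hx⟩
  refine ⟨g.symm, g '' (h1 '' (K ∪ D) ∪ D), ⟨g.isClosedMap _ (c1.union hD),
    (Nwd.of_isMeagre ((n1.isMeagre c1).union (hDn.isMeagre hD))).image g.continuous g.injective, ?_⟩,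
    ?_, subset_union_left.trans hsub, subset_union_right.trans hsub, ?_, ?_, ?_⟩
  · rintro _ ⟨y, hy, rfl⟩
    rw [Homeomorph.symm_apply_apply]; exact (b2 y hy).symm
  · intro x hx
    rw [← a1 x hx, Homeomorph.symm_apply_eq, hg x (Or.inl hx)]
  · intro y hy
    exact ⟨g y, mem_image_of_mem _ (Or.inr hy), Homeomorph.symm_apply_apply _ _⟩
  · intro x
    have := b4 x
    rw [Homeomorph.symm_symm] at this
    rwa [cyl_eq (a3 x)] at this
  · intro y
    have := b3 y
    rw [cyl_eq (a4 y)] at this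
    rwa [Homeomorph.symm_symm]

lemma lim_inv {a b : ℕ → Cantor → Cantor} (hb : ∀ n, Continuous (b n))
    (hba : ∀ n x, b n (a n x) = x)
    (ha' : ∀ n x, a (n + 1) x ∈ cyl (a n x) n) (hb' : ∀ n x, b (n + 1) x ∈ cyl (b n x) n) (x) :
    (fun i => b (i + 1) (fun j => a (j + 1) x j) i) = x := by
  have mono : ∀ {c : ℕ → Cantor → Cantor}, (∀ n x, c (n + 1) x ∈ cyl (c n x) n) →
      ∀ x n m, n ≤ m → c m x ∈ cyl (c n x) n := by
    intro c hc x n m hnm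
    induction m, hnm using Nat.le_induction with
    | base => exact self_mem_cyl _ _
    | succ m hm ih =>
      have := cyl_anti _ hm (hc m x)
      rwa [cyl_eq ih] at this
  funext i
  set w : Cantor := fun j => a (j + 1) x j with hw
  have hwm : ∀ m, a m x ∈ cyl w m := fun m j hj => mono ha' x (j+1) m hj j (Nat.lt_succ_self j)
  obtain ⟨N, hN⟩ := exists_cyl_subset ((isClopen_cyl (b (i+1) w) (i+1)).2.preimage (hb (i+1)))
    (self_mem_cyl (b (i+1) w) (i+1) : w ∈ _)
  have h1 : b (i+1) (a (max N (i+1)) x) i = b (i+1) w i :=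
    hN (cyl_anti _ (le_max_left _ _) (hwm _)) i (Nat.lt_succ_self i)
  have h2 := mono hb' (a (max N (i+1)) x) (i+1) (max N (i+1)) (le_max_right _ _) i
    (Nat.lt_succ_self i)
  rw [hba] at h2
  rw [← h1, ← h2]

lemma back_forth {Y : Set Cantor}
    (hE : ∀ z n, ∃ e : Cantor → Cantor, Continuous e ∧ Function.Injective e ∧
      (∀ x, e x ∈ cyl z n) ∧ ∀ x, x ∈ Y ↔ e x ∈ Y)
    (D : ℕ → Set Cantor) (hD : ∀ n, IsClosed (D n)) (hDn : ∀ n, Nwd (D n))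
    (hYD : Y ⊆ ⋃ n, D n)
    (h : Cantor ≃ₜ Cantor) (x₀ : Cantor) (hY : x₀ ∈ Y ↔ h x₀ ∈ Y) :
    ∃ k : Cantor ≃ₜ Cantor, k x₀ = h x₀ ∧ ∀ x, x ∈ Y ↔ k x ∈ Y := by
  let S := {p : (Cantor ≃ₜ Cantor) × Set Cantor //
    IsClosed p.2 ∧ Nwd p.2 ∧ ∀ x ∈ p.2, x ∈ Y ↔ p.1 x ∈ Y}
  have st : ∀ (n : ℕ) (s : S), ∃ s' : S, (∀ x ∈ s.1.2, s'.1.1 x = s.1.1 x) ∧ s.1.2 ⊆ s'.1.2 ∧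
      D n ⊆ s'.1.2 ∧ D n ⊆ s'.1.1 '' s'.1.2 ∧
      (∀ x, s'.1.1 x ∈ cyl (s.1.1 x) n) ∧ ∀ y, s'.1.1.symm y ∈ cyl (s.1.1.symm y) n := by
    rintro n ⟨⟨h, K⟩, hK, hKn, hKY⟩
    obtain ⟨h', K', h1, h2⟩ := step_both hE h hK hKn (hD n) (hDn n) hKY n
    exact ⟨⟨(h', K'), h1⟩, h2⟩
  choose stp st1 st2 st3 st4 st5 st6 using st
  have hx0 : Nwd {x₀} := by
    intro x n
    by_contra! hc
    have e1 := hc x (self_mem_cyl x n)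
    have e2 := hc (flipBit n x) (by intro i hi; simp [flipBit, hi.ne])
    rw [mem_singleton_iff] at e1 e2
    have := congrFun (e2.trans e1.symm) n
    simp [flipBit] at this
  let s0 : S := ⟨(h, {x₀}), isClosed_singleton, hx0, by
    rintro x rfl; exact hY⟩
  let s : ℕ → S := fun n => Nat.rec s0 (fun n t => stp n t) n
  have ss : ∀ n, s (n + 1) = stp n (s n) := fun n => rfl
  have hK : ∀ n m, n ≤ m → (s n).1.2 ⊆ (s m).1.2 ∧ ∀ x ∈ (s n).1.2, (s m).1.1 x = (s n).1.1 x := by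
    intro n m hnm
    induction m, hnm using Nat.le_induction with
    | base => exact ⟨Subset.rfl, fun _ _ => rfl⟩
    | succ m hm ih =>
      rw [ss]
      exact ⟨ih.1.trans (st2 m (s m)), fun x hx => (st1 m (s m) x (ih.1 hx)).trans (ih.2 x hx)⟩
  have ha' : ∀ n x, (s (n+1)).1.1 x ∈ cyl ((s n).1.1 x) n := fun n x => st5 n (s n) x
  have hb' : ∀ n x, (s (n+1)).1.1.symm x ∈ cyl ((s n).1.1.symm x) n := fun n x => st6 n (s n) x
  let k : Cantor ≃ₜ Cantor :=
    { toFun := fun x i => (s (i + 1)).1.1 x i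
      invFun := fun x i => (s (i + 1)).1.1.symm x i
      left_inv := fun x => lim_inv (a := fun n => (s n).1.1) (b := fun n => (s n).1.1.symm)
        (fun n => (s n).1.1.symm.continuous) (fun n x => (s n).1.1.symm_apply_apply x) ha' hb' x
      right_inv := fun x => lim_inv (a := fun n => (s n).1.1.symm) (b := fun n => (s n).1.1)
        (fun n => (s n).1.1.continuous) (fun n x => (s n).1.1.apply_symm_apply x) hb' ha' x
      continuous_toFun := continuous_pi fun i =>
        (continuous_apply i).comp (s (i+1)).1.1.continuous
      continuous_invFun := continuous_pi fun i =>
        (continuous_apply i).comp (s (i+1)).1.1.symm.continuous }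
  have mono : ∀ x n m, n ≤ m → (s m).1.1 x ∈ cyl ((s n).1.1 x) n := by
    intro x n m hnm
    induction m, hnm using Nat.le_induction with
    | base => exact self_mem_cyl _ _
    | succ m hm ih =>
      have := cyl_anti _ hm (ha' m x)
      rwa [cyl_eq ih] at this
  have kK : ∀ n, ∀ x ∈ (s n).1.2, k x = (s n).1.1 x := by
    intro n x hx
    funext i
    change (s (i+1)).1.1 x i = _
    rw [← (hK n (max n (i+1)) (le_max_left _ _)).2 x hx]
    exact (mono x (i+1) _ (le_max_right _ _) i (Nat.lt_succ_self i)).symm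
  refine ⟨k, kK 0 x₀ rfl, fun x => ?_⟩
  have key : ∀ n, ∀ x ∈ (s n).1.2, x ∈ Y ↔ k x ∈ Y := by
    intro n x hx
    rw [kK n x hx]
    exact (s n).2.2.2 x hx
  constructor
  · intro hx
    obtain ⟨n, hn⟩ := mem_iUnion.1 (hYD hx)
    exact (key (n+1) x (st3 n (s n) hn)).1 hx
  · intro hx
    obtain ⟨n, hn⟩ := mem_iUnion.1 (hYD hx)
    obtain ⟨x', hx', he⟩ := st4 n (s n) hn
    have h1 : k x' = k x := (kK (n+1) x' hx').trans he
    have h2 := k.injective h1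
    subst h2
    exact (key (n+1) x' hx').2 hx

/-- Translation taking one point to another. -/
lemma exists_translation (x y : Cantor) : ∃ h : Cantor ≃ₜ Cantor, h x = y := by
  have hinv : ∀ w : Cantor, (fun i => xor (xor (w i) (xor (x i) (y i))) (xor (x i) (y i))) = w := by
    intro w; funext i; simp
  have hc : Continuous fun (w : Cantor) (i : ℕ) => xor (w i) (xor (x i) (y i)) :=
    continuous_pi fun i => (continuous_of_discreteTopology
      (f := fun b : Bool => xor b (xor (x i) (y i)))).comp (continuous_apply i)
  refine ⟨⟨⟨fun w i => xor (w i) (xor (x i) (y i)), fun w i => xor (w i) (xor (x i) (y i)),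
    hinv, hinv⟩, hc, hc⟩, ?_⟩
  change (fun i => xor (x i) (xor (x i) (y i))) = y
  funext i
  simp

end CH

open Set
namespace CH

lemma meagre_trace {X M : Set Cantor} (hX : Dense X) (hM : IsMeagre M) :
    IsMeagre ((↑) ⁻¹' M : Set X) := by
  rw [IsMeagre, mem_residual_iff] at hM
  obtain ⟨S, h1, h2, h3, h4⟩ := hM
  rw [IsMeagre]
  refine Filter.mem_of_superset ((countable_bInter_mem h3).2 (fun t ht => ?_) :
    (⋂ t ∈ S, ((↑) ⁻¹' t : Set X)) ∈ residual X) ?_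
  · refine residual_of_dense_open ((h1 t ht).preimage continuous_subtype_val) ?_
    rw [Subtype.dense_iff, Subtype.image_preimage_coe]
    intro x _
    exact hX.inter_of_isOpen_right (h2 t ht) (h1 t ht) x
  · intro x hx
    rw [mem_iInter₂] at hx
    exact h4 (mem_sInter.2 fun t ht => hx t ht)

lemma dichotomy {X : Set Cantor} (hB : @MeasurableSet Cantor (borel Cantor) X) (hd : Dense X)
    (hhom : IsHomogeneous X) : IsMeagre X ∨ IsMeagre Xᶜ := by
  let W : Set Cantor := ⋃ p ∈ {p : ℕ × ℕ | IsMeagre (cyl (dseq p.1) p.2 \ X)}, cyl (dseq p.1) p.2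
  have hW : IsOpen W := isOpen_biUnion fun p _ => (isClopen_cyl _ _).2
  have hWX : IsMeagre (W \ X) := by
    have : W \ X ⊆ ⋃ p : {p : ℕ × ℕ | IsMeagre (cyl (dseq p.1) p.2 \ X)},
        (cyl (dseq p.1.1) p.1.2 \ X) := by
      rintro x ⟨hx, hxX⟩
      obtain ⟨p, hp, hxp⟩ := mem_iUnion₂.1 hx
      exact mem_iUnion.2 ⟨⟨p, hp⟩, hxp, hxX⟩
    exact (isMeagre_iUnion fun p => p.2).mono this
  have inW : ∀ v n, IsMeagre (cyl v n \ X) → cyl v n ⊆ W := by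
    intro v n h
    obtain ⟨i, hi⟩ := exists_dseq v n
    rw [cyl_eq hi] at h ⊢
    exact fun x hx => mem_iUnion₂.2 ⟨(i, n), h, hx⟩
  by_cases hWd : Dense W
  · right
    have h1 : IsMeagre Wᶜ := by
      rw [IsMeagre, compl_compl]; exact residual_of_dense_open hW hWd
    refine (h1.union hWX).mono fun x hx => ?_
    by_cases hxW : x ∈ W
    · exact Or.inr ⟨hxW, hx⟩
    · exact Or.inl hxW
  · left
    have : ∃ c n, Disjoint (cyl c n) W := by
      simp only [Dense, not_forall] at hWd
      obtain ⟨c, hc⟩ := hWd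
      obtain ⟨n, hn⟩ := exists_cyl_subset isClosed_closure.isOpen_compl hc
      exact ⟨c, n, disjoint_left.2 fun x hx hxW => hn hx (subset_closure hxW)⟩
    obtain ⟨c, n, hcn⟩ := this
    have hXC : IsMeagre (X ∩ cyl c n) := by
      have hm : @MeasurableSet Cantor (borel Cantor) (X ∩ cyl c n) := by
        letI : MeasurableSpace Cantor := borel Cantor
        haveI : BorelSpace Cantor := ⟨rfl⟩
        exact hB.inter (isClopen_cyl c n).2.measurableSet
      rcases baire_loc hm with h | ⟨v, m, h⟩
      · exact h
      · exfalso
        have s1 : cyl v m \ X ⊆ cyl v m \ (X ∩ cyl c n) :=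
          fun x hx => ⟨hx.1, fun hc => hx.2 hc.1⟩
        have h1 : cyl v m ⊆ W := inW v m (IsMeagre.mono s1 h)
        have s2 : cyl v m ⊆ cyl v m \ (X ∩ cyl c n) :=
          fun x hx => ⟨hx, fun hc => disjoint_left.1 hcn hc.2 (h1 hx)⟩
        exact cyl_not_meagre v m (IsMeagre.mono s2 h)
    rcases baire_loc hB with h | ⟨v, m, h⟩
    · exact h
    · exfalso
      obtain ⟨p, hpc, hpX⟩ := hd.inter_open_nonempty _ (isClopen_cyl c n).2 ⟨c, self_mem_cyl c n⟩
      obtain ⟨q, hqv, hqX⟩ := hd.inter_open_nonempty _ (isClopen_cyl v m).2 ⟨v, self_mem_cyl v m⟩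
      obtain ⟨g, hg⟩ := hhom ⟨q, hqX⟩ ⟨p, hpX⟩
      have h1 : IsMeagre (g ⁻¹' ((↑) ⁻¹' (X ∩ cyl c n) : Set X)) :=
        (meagre_trace hd hXC).preimage_of_isOpenMap g.continuous g.isOpenMap
      have h2 := h1.image_val
      have ho : IsOpen (g ⁻¹' ((↑) ⁻¹' (cyl c n) : Set X)) :=
        ((isClopen_cyl c n).2.preimage continuous_subtype_val).preimage g.continuous
      obtain ⟨U, hU, hUe⟩ := isOpen_induced_iff.1 ho
      have hqU : q ∈ U := by
        have : (⟨q, hqX⟩ : X) ∈ (↑) ⁻¹' U := by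
          rw [hUe]; simp only [mem_preimage, hg]; exact hpc
        exact this
      obtain ⟨r, hr⟩ := exists_cyl_subset (hU.inter (isClopen_cyl v m).2) ⟨hqU, hqv⟩
      refine cyl_not_meagre q r ((h2.union h).mono fun x hx => ?_)
      by_cases hxX : x ∈ X
      · left
        have : (⟨x, hxX⟩ : X) ∈ g ⁻¹' ((↑) ⁻¹' (cyl c n) : Set X) := by
          rw [← hUe]; exact (hr hx).1
        exact ⟨⟨x, hxX⟩, ⟨(g ⟨x, hxX⟩).2, this⟩, rfl⟩
      · exact Or.inr ⟨(hr hx).2, hxX⟩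

lemma meagre_cover {Y : Set Cantor} (hY : IsMeagre Y) :
    ∃ D : ℕ → Set Cantor, (∀ n, IsClosed (D n)) ∧ (∀ n, Nwd (D n)) ∧ Y ⊆ ⋃ n, D n := by
  obtain ⟨S, h1, h2, h3⟩ := isMeagre_iff_countable_union_isNowhereDense.1 hY
  obtain ⟨f, hf⟩ := (h2.insert ∅).exists_eq_range (insert_nonempty _ _)
  refine ⟨fun n => closure (f n), fun n => isClosed_closure, fun n => ?_, fun x hx => ?_⟩
  · have : f n ∈ insert ∅ S := hf ▸ mem_range_self n
    refine Nwd.of_isMeagre ?_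
    rcases this with h | h
    · simp only [h, closure_empty]; exact IsMeagre.empty
    · exact (h1 _ h).closure.isMeagre
  · obtain ⟨t, ht, hxt⟩ := h3 hx
    have : t ∈ range f := hf ▸ mem_insert_of_mem _ ht
    obtain ⟨n, rfl⟩ := this
    exact mem_iUnion.2 ⟨n, subset_closure hxt⟩

theorem final (X : Set Cantor)
    (hB : @MeasurableSet Cantor (borel Cantor) X) (hd : Dense X)
    (hhom : IsHomogeneous X) (hdel : ¬ InDelta X) :
    IsHomogeneous (Xᶜ : Set Cantor) := by
  rintro ⟨x, hx⟩ ⟨y, hy⟩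
  have hE := embeddings hB hd hhom hdel
  obtain ⟨h, hxy⟩ := exists_translation x y
  have main : ∃ k : Cantor ≃ₜ Cantor, k x = h x ∧ ∀ z, z ∈ Xᶜ ↔ k z ∈ Xᶜ := by
    rcases dichotomy hB hd hhom with hm | hm
    · obtain ⟨D, d1, d2, d3⟩ := meagre_cover hm
      obtain ⟨k, k1, k2⟩ := back_forth hE D d1 d2 d3 h x
        (by rw [hxy]; exact iff_of_false hx hy)
      exact ⟨k, k1, fun z => not_congr (k2 z)⟩
    · obtain ⟨D, d1, d2, d3⟩ := meagre_cover hm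
      refine back_forth (Y := Xᶜ) (fun z n => ?_) D d1 d2 d3 h x
        (by rw [hxy]; exact iff_of_true hx hy)
      obtain ⟨e, e1, e2, e3, e4⟩ := hE z n
      exact ⟨e, e1, e2, e3, fun x => not_congr (e4 x)⟩
  obtain ⟨k, k1, k2⟩ := main
  exact ⟨k.subtype k2, Subtype.ext (k1.trans hxy)⟩

end CH


/-- The complement of a dense homogeneous Borel subspace of Cantor space outside Δ
is homogeneous. -/
theorem complement_homogeneous (X : Set Cantor)
    (hB : @MeasurableSet Cantor (borel Cantor) X) (hd : Dense X)
    (hhom : IsHomogeneous X) (hdel : ¬ InDelta X) :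
    IsHomogeneous (Xᶜ : Set Cantor) := by
  exact CH.final X hB hd hhom hdel
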